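/- arXiv:2107.02158 — 2 statements merged into one kernel-verified Lean document; each statement's English description precedes it below -/
import Mathlib

section
/- For every integer k ≥ 2 there exist constants c₀, c, C > 0 (with c₀ an absolute constant and c, C depending only on k) such that the following holds for all sufficiently large N. Set Q := exp((log N)^{1/10}). Suppose χ is a primitive real (quadratic) Dirichlet character of conductor q < Q and β is a real number with 1 − c₀/log Q < β < 1 satisfying L(β, χ) = 0, where L(s, χ) is the Dirichlet L-function of χ. Then ‖n ↦ Λ_{Cramér,Q}(n)·n^{β−1}·χ(n)‖_{U^k([N])} ≤ C·q^{−c}; equivalently, ‖Λ_Siegel − Λ_{Cramér,Q}‖_{U^k([N])} ≤ C·q^{−c}, where Λ_Siegel(n) := Λ_{Cramér,Q}(n)·(1 − n^{β−1}·χ(n)). -/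
open scoped Classical

noncomputable section

/-- The product of conjugated shifts appearing in the Gowers norm over an additive group. -/
def gowersProd {G : Type*} [AddCommGroup G] (k : ℕ) (f : G → ℂ) (n : G) (h : Fin k → G) : ℂ :=
  ∏ ω : Fin k → Bool,
    (⇑(starRingEnd ℂ))^[(Finset.univ.filter fun i => ω i = true).card]
      (f (n + ∑ i, if ω i then h i else 0))

/-- The unnormalized Gowers norm `‖f‖_{Ũ^k(G)}`. -/
def gowersTildeU {G : Type*} [AddCommGroup G] (k : ℕ) (f : G → ℂ) : ℝ :=
  (∑' nh : G × (Fin k → G), gowersProd k f nh.1 nh.2).re ^ ((1 : ℝ) / 2 ^ k)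

/-- The restriction `f·1_{[N]}` of `f : ℤ → ℂ` to `[N] = {n ∈ ℕ : 1 ≤ n ≤ N}`. -/
def truncN (N : ℝ) (f : ℤ → ℂ) : ℤ → ℂ := fun n => if 1 ≤ n ∧ (n : ℝ) ≤ N then f n else 0

/-- The local (normalized) Gowers norm `‖f‖_{U^k([N])}`. -/
def gowersUN (k : ℕ) (N : ℝ) (f : ℤ → ℂ) : ℝ :=
  gowersTildeU k (truncN N f) / gowersTildeU k (truncN N fun _ => 1)

/-- The Cramér model `Λ_{Cramér,w}(n) = ∏_{p < w, p prime} (p/(p-1))·1_{p ∤ n}`. -/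
def cramer (w : ℝ) (n : ℤ) : ℝ :=
  ∏ p ∈ (Finset.range (⌈w⌉₊ + 1)).filter fun p => Nat.Prime p ∧ (p : ℝ) < w,
    if (p : ℤ) ∣ n then 0 else (p : ℝ) / ((p : ℝ) - 1)

/-- The quantity `Q = exp((log N)^{1/10})`. -/
def Qparam (N : ℝ) : ℝ := Real.exp (Real.log N ^ ((1 : ℝ) / 10))

end

/-!
Raised to the power `2 ^ k`, the Gowers norm is a sum over cubes. The product of the Cramér model
over the vertices of a cube is a sieve weight, so after Bonferroni truncation and equidistribution
of cubes in residue classes the sum is the volume of the cubes times a product of local averages.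
The factors at primes not dividing `q` are at most `1 + O(1 / p ^ 2)`. The remaining factor is the
average over cubes modulo `q` of the product of `χ` over the vertices, which is at most a negative
power of `q` by Weil's bound, proved here by Stepanov's method; this beats the sieve factor
`(p / (p - 1)) ^ 2 ^ k` at the primes `p` dividing `q`. Only quadratic character sums to prime
moduli occur, because the conductor of a real primitive character is squarefree up to a bounded
power of `2`. The weight `n ^ (β - 1)` is decreasing with values in `[0, 1]`, which does not affect
equidistribution.
-/

/-! ### Stepanov's method for quadratic character sums -/

section Stepanov

open Polynomial

/-- The cofactor of `f ^ (n - i)` in the `i`-th derivative of `f ^ n * s`, as a linear map in `s`.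
Dividing out the power of `f` keeps the degrees small enough for Stepanov's parameter count. -/
noncomputable def derivCofactor {R : Type*} [CommRing R] (f : R[X]) (n : ℕ) : ℕ → R[X] →ₗ[R] R[X]
  | 0 => LinearMap.id
  | i + 1 => (((n - i : ℕ) : R) • LinearMap.mulLeft R (derivative f) +
      LinearMap.mulLeft R f ∘ₗ derivative) ∘ₗ derivCofactor f n i

section CommRing

variable {R : Type*} [CommRing R]

lemma derivCofactor_succ_apply (f : R[X]) (n i : ℕ) (s : R[X]) :
    derivCofactor f n (i + 1) s =
      ((n - i : ℕ) : R[X]) * (derivative f * derivCofactor f n i s) +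
        f * derivative (derivCofactor f n i s) := by
  simp only [derivCofactor, LinearMap.comp_apply, LinearMap.add_apply, LinearMap.smul_apply,
    LinearMap.mulLeft_apply, smul_eq_C_mul, map_natCast]

lemma iterate_derivative_pow_mul (f s : R[X]) {n i : ℕ} (hi : i ≤ n) :
    derivative^[i] (f ^ n * s) = f ^ (n - i) * derivCofactor f n i s := by
  induction i with
  | zero => simp [derivCofactor]
  | succ i ih =>
    obtain ⟨c, rfl⟩ := Nat.exists_eq_add_of_lt hi
    rw [Function.iterate_succ_apply', ih (by omega), derivCofactor_succ_apply,
      show i + c + 1 - i = c + 1 by omega, show i + c + 1 - (i + 1) = c by omega,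
      derivative_mul, derivative_pow_succ]
    simp only [map_natCast, Nat.cast_add, Nat.cast_one, map_add, map_one]
    ring

lemma natDegree_derivCofactor_le (f : R[X]) (n i : ℕ) (s : R[X]) :
    (derivCofactor f n i s).natDegree ≤ s.natDegree + i * f.natDegree := by
  induction i with
  | zero => simp [derivCofactor]
  | succ i ih =>
    have hf := natDegree_derivative_le f
    have hD := natDegree_derivative_le (derivCofactor f n i s)
    rw [derivCofactor_succ_apply, add_mul, one_mul]
    refine (natDegree_add_le _ _).trans (max_le ?_ ?_)
    · have := natDegree_mul_le (p := derivative f) (q := derivCofactor f n i s)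
      refine natDegree_mul_le.trans ?_
      rw [natDegree_natCast]
      omega
    · refine natDegree_mul_le.trans ?_
      omega

lemma iterate_derivative_mul_X_pow_mul (p : ℕ) [CharP R p] (h : R[X]) (j i : ℕ) :
    derivative^[i] (h * X ^ (j * p)) = derivative^[i] h * X ^ (j * p) := by
  induction i with
  | zero => rfl
  | succ i ih =>
    rw [Function.iterate_succ_apply', ih, Function.iterate_succ_apply', derivative_mul,
      derivative_X_pow]
    simp

end CommRing

lemma card_mul_le_natDegree_of_le_rootMultiplicity {F : Type*} [Field F] {f : F[X]} {l : ℕ}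
    {Z : Finset F} (h : ∀ x ∈ Z, l ≤ f.rootMultiplicity x) : Z.card * l ≤ f.natDegree :=
  calc Z.card * l = ∑ _x ∈ Z, l := by rw [Finset.sum_const, smul_eq_mul]
    _ ≤ ∑ x ∈ Z, f.roots.count x := Finset.sum_le_sum fun x hx => by
        rw [count_roots]; exact h x hx
    _ ≤ ∑ x ∈ Z ∪ f.roots.toFinset, f.roots.count x :=
        Finset.sum_le_sum_of_subset Finset.subset_union_left
    _ = f.roots.card := Multiset.sum_count_eq_card fun _ hx =>
        Finset.mem_union_right _ (Multiset.mem_toFinset.mpr hx)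
    _ ≤ f.natDegree := card_roots' f

lemma eq_zero_of_sq_mul_eq_C_mul_sq {F : Type*} [Field F] {f r s : F[X]} {y c : F}
    (hodd : Odd (f.rootMultiplicity y)) (hc : c ≠ 0) (h : r ^ 2 * f = C c * s ^ 2) :
    r = 0 ∧ s = 0 := by
  have hf : f ≠ 0 := by rintro rfl; simp at hodd
  have hcC : C c ≠ 0 := C_ne_zero.mpr hc
  have hrs : r = 0 ↔ s = 0 := by
    constructor <;> rintro rfl
    · simpa [hc] using h.symm
    · simpa [hf] using h
  by_contra hne
  have hr : r ≠ 0 := fun hr => hne ⟨hr, hrs.mp hr⟩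
  have hs : s ≠ 0 := fun hs => hne ⟨hrs.mpr hs, hs⟩
  have hmult := congrArg (rootMultiplicity y) h
  rw [rootMultiplicity_mul (mul_ne_zero (pow_ne_zero _ hr) hf),
    rootMultiplicity_mul (mul_ne_zero hcC (pow_ne_zero _ hs)), rootMultiplicity_C, sq, sq,
    rootMultiplicity_mul (mul_ne_zero hr hr), rootMultiplicity_mul (mul_ne_zero hs hs)] at hmult
  obtain ⟨t, ht⟩ := hodd
  omega

variable {p : ℕ} [Fact p.Prime]

lemma X_pow_dvd_pow_sub_C_eval_zero (f : (ZMod p)[X]) : X ^ p ∣ f ^ p - C (f.eval 0) := by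
  have hX : X ∣ f - C (f.eval 0) := by
    rw [X_dvd_iff]; simp [coeff_zero_eq_eval_zero]
  have hexpand := map_dvd (expand (ZMod p) p) hX
  rwa [expand_X, map_sub, ZMod.expand_card, expand_C] at hexpand

/-- Stepanov's auxiliary polynomial `∑ j, (r j + s j * f ^ e) * X ^ (j * p)`. -/
noncomputable def stepanovPoly (f : (ZMod p)[X]) (e : ℕ) {J : ℕ} (r s : Fin J → (ZMod p)[X]) :
    (ZMod p)[X] :=
  ∑ j : Fin J, (r j + s j * f ^ e) * X ^ (j * p : ℕ)

lemma stepanovPoly_succ (f : (ZMod p)[X]) (e : ℕ) {J : ℕ} (r s : Fin (J + 1) → (ZMod p)[X]) :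
    stepanovPoly f e r s =
      r 0 + s 0 * f ^ e + X ^ p * stepanovPoly f e (Fin.tail r) (Fin.tail s) := by
  simp only [stepanovPoly, Fin.sum_univ_succ, Finset.mul_sum, Fin.tail, Fin.val_succ, Fin.val_zero]
  congr 1
  · ring
  · exact Finset.sum_congr rfl fun j _ => by ring

lemma natDegree_stepanovPoly_le (f : (ZMod p)[X]) (e : ℕ) {J m : ℕ} {r s : Fin J → (ZMod p)[X]}
    (hr : ∀ j, (r j).natDegree < m) (hs : ∀ j, (s j).natDegree < m) :
    (stepanovPoly f e r s).natDegree ≤ m + e * f.natDegree + J * p := by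
  refine natDegree_sum_le_of_forall_le _ _ fun j _ => ?_
  have hsf : (s j * f ^ e).natDegree ≤ (s j).natDegree + e * f.natDegree :=
    natDegree_mul_le.trans (by gcongr; exact natDegree_pow_le)
  have hadd : (r j + s j * f ^ e).natDegree ≤ m + e * f.natDegree :=
    (natDegree_add_le _ _).trans (max_le (by have := hr j; omega) (by have := hs j; omega))
  have hj : (j * p : ℕ) ≤ J * p := Nat.mul_le_mul_right p j.2.le
  refine natDegree_mul_le.trans ?_
  rw [natDegree_X_pow]
  omega

section OddMultiplicity

variable {f : (ZMod p)[X]} {y : ZMod p} {e m : ℕ}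

lemma eq_zero_of_X_pow_dvd_add_mul_pow (hodd : Odd (f.rootMultiplicity y)) (hf0 : f.eval 0 ≠ 0)
    (he : 2 * e + 1 = p) (hm : 2 * m + f.natDegree ≤ p) {r s : (ZMod p)[X]}
    (hr : r.natDegree < m) (hs : s.natDegree < m) (h : X ^ p ∣ r + s * f ^ e) :
    r = 0 ∧ s = 0 := by
  refine eq_zero_of_sq_mul_eq_C_mul_sq hodd hf0 (sub_eq_zero.mp ?_)
  refine eq_zero_of_dvd_of_natDegree_lt (p := X ^ p) ?_ ?_
  · have hfp : f ^ p = f ^ e * f ^ e * f := by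
      rw [← pow_add, ← pow_succ, ← two_mul, he]
    have hid : r ^ 2 * f - C (f.eval 0) * s ^ 2 =
        (r + s * f ^ e) * ((r - s * f ^ e) * f) + (f ^ p - C (f.eval 0)) * s ^ 2 := by
      rw [hfp]; ring
    rw [hid]
    exact dvd_add (h.mul_right _) ((X_pow_dvd_pow_sub_C_eval_zero f).mul_right _)
  · have h₁ : (r ^ 2 * f).natDegree ≤ 2 * r.natDegree + f.natDegree :=
      natDegree_mul_le.trans (by gcongr; exact natDegree_pow_le)
    have h₂ : (C (f.eval 0) * s ^ 2).natDegree ≤ 2 * s.natDegree :=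
      (natDegree_C_mul_le _ _).trans natDegree_pow_le
    have h₃ := natDegree_sub_le (r ^ 2 * f) (C (f.eval 0) * s ^ 2)
    rw [natDegree_X_pow]
    omega

lemma eq_zero_of_stepanovPoly_eq_zero (hodd : Odd (f.rootMultiplicity y)) (hf0 : f.eval 0 ≠ 0)
    (he : 2 * e + 1 = p) (hm : 2 * m + f.natDegree ≤ p) {J : ℕ} {r s : Fin J → (ZMod p)[X]}
    (hr : ∀ j, (r j).natDegree < m) (hs : ∀ j, (s j).natDegree < m)
    (h : stepanovPoly f e r s = 0) (j : Fin J) : r j = 0 ∧ s j = 0 := by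
  induction J with
  | zero => exact j.elim0
  | succ J ih =>
    rw [stepanovPoly_succ] at h
    have hdvd : X ^ p ∣ r 0 + s 0 * f ^ e :=
      ⟨-stepanovPoly f e (Fin.tail r) (Fin.tail s), by linear_combination h⟩
    have hzero := eq_zero_of_X_pow_dvd_add_mul_pow hodd hf0 he hm (hr 0) (hs 0) hdvd
    have htail : stepanovPoly f e (Fin.tail r) (Fin.tail s) = 0 := by
      simpa [hzero.1, hzero.2] using h
    exact Fin.cases hzero (ih (fun j => hr j.succ) (fun j => hs j.succ) htail) j

end OddMultiplicity

/-- The polynomial which, at points where `f ^ e = a`, computes the `i`-th derivative of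
`f ^ l * stepanovPoly f e r s` up to a power of `f`. Its small degree is due to `x ^ p = x`. -/
noncomputable def stepanovCondition (f : (ZMod p)[X]) (e l i : ℕ) (a : ZMod p) {J : ℕ}
    (r s : Fin J → (ZMod p)[X]) : (ZMod p)[X] :=
  ∑ j : Fin J, (derivCofactor f l i (r j) + C a * derivCofactor f (l + e) i (s j)) * X ^ (j : ℕ)

lemma eval_iterate_derivative_pow_mul_stepanovPoly (f : (ZMod p)[X]) {e l i : ℕ} (hi : i ≤ l)
    {x a : ZMod p} (hx : f.eval x ^ e = a) {J : ℕ} (r s : Fin J → (ZMod p)[X]) :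
    (derivative^[i] (f ^ l * stepanovPoly f e r s)).eval x =
      f.eval x ^ (l - i) * (stepanovCondition f e l i a r s).eval x := by
  have hexpand : f ^ l * stepanovPoly f e r s =
      ∑ j : Fin J, (f ^ l * r j + f ^ (l + e) * s j) * X ^ (j * p : ℕ) := by
    rw [stepanovPoly, Finset.mul_sum]
    exact Finset.sum_congr rfl fun j _ => by ring
  rw [hexpand, iterate_derivative_sum, eval_finsetSum, stepanovCondition, eval_finsetSum,
    Finset.mul_sum]
  refine Finset.sum_congr rfl fun j _ => ?_
  rw [iterate_derivative_mul_X_pow_mul, iterate_map_add, iterate_derivative_pow_mul f _ hi,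
    iterate_derivative_pow_mul f _ (hi.trans (Nat.le_add_right l e)), Nat.sub_add_comm hi, pow_add]
  simp only [eval_mul, eval_add, eval_pow, eval_X, eval_C, hx, mul_comm (j : ℕ) p, pow_mul,
    ZMod.pow_card]
  ring

lemma natDegree_stepanovCondition_lt (f : (ZMod p)[X]) (e : ℕ) {l i m : ℕ} (a : ZMod p)
    (hi : i ≤ l) (hm : 0 < m) {J : ℕ} {r s : Fin J → (ZMod p)[X]}
    (hr : ∀ j, (r j).natDegree < m) (hs : ∀ j, (s j).natDegree < m) :
    (stepanovCondition f e l i a r s).natDegree < m + l * f.natDegree + J := by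
  refine Nat.lt_of_le_sub_one (by omega) (natDegree_sum_le_of_forall_le _ _ fun j _ => ?_)
  have hil : i * f.natDegree ≤ l * f.natDegree := Nat.mul_le_mul_right _ hi
  have h₁ := natDegree_derivCofactor_le f l i (r j)
  have h₂ := natDegree_derivCofactor_le f (l + e) i (s j)
  have h₃ := natDegree_C_mul_le a (derivCofactor f (l + e) i (s j))
  have h₄ := natDegree_add_le (derivCofactor f l i (r j))
    (C a * derivCofactor f (l + e) i (s j))
  have := hr j
  have := hs j
  have := j.2
  refine natDegree_mul_le.trans ?_
  rw [natDegree_X_pow]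
  omega

/-- Pairs of families of polynomials of degree less than `m`: the unknowns of Stepanov's
linear system. -/
abbrev StepanovUnknowns (p J m : ℕ) [Fact p.Prime] : Type :=
  Fin J → degreeLT (ZMod p) m × degreeLT (ZMod p) m

lemma natDegree_lt_of_mem_degreeLT {F : Type*} [Field F] {m : ℕ} (hm : 0 < m)
    (w : degreeLT F m) : (w : F[X]).natDegree < m := by
  by_cases hw : (w : F[X]) = 0
  · simpa [hw] using hm
  · exact (natDegree_lt_iff_degree_lt hw).mpr (mem_degreeLT.mp w.2)

lemma finrank_stepanovUnknowns (J m : ℕ) :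
    Module.finrank (ZMod p) (StepanovUnknowns p J m) = 2 * J * m := by
  have hW : Module.finrank (ZMod p) (degreeLT (ZMod p) m) = m := by
    rw [(degreeLTEquiv (ZMod p) m).finrank_eq, Module.finrank_fin_fun]
  simp only [Module.finrank_pi_fintype, Module.finrank_prod, hW, Finset.sum_const,
    Finset.card_univ, Fintype.card_fin, smul_eq_mul]
  ring

lemma exists_ne_zero_stepanovCondition_eq_zero (f : (ZMod p)[X]) (e : ℕ) {l m J : ℕ} (a : ZMod p)
    (hm : 0 < m) (hparam : l * (m + l * f.natDegree + J) < 2 * J * m) :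
    ∃ u : StepanovUnknowns p J m, u ≠ 0 ∧
      ∀ i < l, stepanovCondition f e l i a (fun j => (u j).1) (fun j => (u j).2) = 0 := by
  set B := m + l * f.natDegree + J
  let W := degreeLT (ZMod p) m
  let E : ℕ → StepanovUnknowns p J m →ₗ[ZMod p] (ZMod p)[X] := fun i =>
    ∑ j : Fin J, LinearMap.mulRight (ZMod p) (X ^ (j : ℕ)) ∘ₗ
      (derivCofactor f l i ∘ₗ W.subtype ∘ₗ LinearMap.fst _ _ _ +
        a • derivCofactor f (l + e) i ∘ₗ W.subtype ∘ₗ LinearMap.snd _ _ _) ∘ₗ LinearMap.proj j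
  have hE (i : ℕ) (u : StepanovUnknowns p J m) :
      E i u = stepanovCondition f e l i a (fun j => (u j).1) (fun j => (u j).2) := by
    simp [E, W, stepanovCondition, LinearMap.sum_apply, smul_eq_C_mul]
  let Ψ : StepanovUnknowns p J m →ₗ[ZMod p] (Fin l → Fin B → ZMod p) :=
    LinearMap.pi fun i => LinearMap.pi fun b => lcoeff (ZMod p) b ∘ₗ E i
  have hrank : Module.finrank (ZMod p) (Fin l → Fin B → ZMod p) <
      Module.finrank (ZMod p) (StepanovUnknowns p J m) := by
    rw [finrank_stepanovUnknowns]
    simpa [Module.finrank_pi_fintype] using hparam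
  obtain ⟨u, hu, hu0⟩ :=
    (Submodule.ne_bot_iff _).mp (LinearMap.ker_ne_bot_of_finrank_lt (f := Ψ) hrank)
  refine ⟨u, hu0, fun i hi => ?_⟩
  have hdeg := natDegree_stepanovCondition_lt f e a hi.le hm
    (fun j => natDegree_lt_of_mem_degreeLT hm (u j).1)
    (fun j => natDegree_lt_of_mem_degreeLT hm (u j).2)
  ext b
  rw [coeff_zero]
  by_cases hb : b < B
  · rw [← hE]
    exact congrFun (congrFun (LinearMap.mem_ker.mp hu) ⟨i, hi⟩) ⟨b, hb⟩
  · exact coeff_eq_zero_of_natDegree_lt (hdeg.trans_le (not_lt.mp hb))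

lemma le_rootMultiplicity_of_eval_iterate_derivative {g : (ZMod p)[X]} (hg : g ≠ 0) {l : ℕ}
    (hl : l ≤ p) {x : ZMod p} (h : ∀ i < l, (derivative^[i] g).eval x = 0) :
    l ≤ g.rootMultiplicity x := by
  rcases l with - | l
  · exact Nat.zero_le _
  refine lt_rootMultiplicity_of_isRoot_iterate_derivative_of_mem_nonZeroDivisors hg
    (fun i hi => h i (Nat.lt_succ_of_le hi)) ?_
  rw [mem_nonZeroDivisors_iff_ne_zero, Ne, CharP.cast_eq_zero_iff (ZMod p) p,
    (Fact.out : p.Prime).dvd_factorial]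
  omega

section OddMultiplicity

variable {f : (ZMod p)[X]} {y : ZMod p}

theorem card_mul_le_of_eval_pow_eq (hodd : Odd (f.rootMultiplicity y)) (hf0 : f.eval 0 ≠ 0)
    {e l m J : ℕ} (he : 2 * e + 1 = p) (hm : 2 * m + f.natDegree ≤ p) (hm0 : 0 < m) (hl : l ≤ p)
    (hparam : l * (m + l * f.natDegree + J) < 2 * J * m)
    {a : ZMod p} {Z : Finset (ZMod p)} (hZ : ∀ x ∈ Z, f.eval x ^ e = a) :
    Z.card * l ≤ l * f.natDegree + (m + e * f.natDegree + J * p) := by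
  have hf : f ≠ 0 := by rintro rfl; simp at hf0
  obtain ⟨u, hu, hcond⟩ := exists_ne_zero_stepanovCondition_eq_zero f e a hm0 hparam
  set r := fun j => ((u j).1 : (ZMod p)[X])
  set s := fun j => ((u j).2 : (ZMod p)[X])
  have hr (j) : (r j).natDegree < m := natDegree_lt_of_mem_degreeLT hm0 _
  have hs (j) : (s j).natDegree < m := natDegree_lt_of_mem_degreeLT hm0 _
  have hne : f ^ l * stepanovPoly f e r s ≠ 0 := by
    refine mul_ne_zero (pow_ne_zero _ hf) fun h => hu (funext fun j => ?_)
    have hj := eq_zero_of_stepanovPoly_eq_zero hodd hf0 he hm hr hs h j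
    exact Prod.ext (Subtype.ext hj.1) (Subtype.ext hj.2)
  have hmult (x) (hx : x ∈ Z) : l ≤ (f ^ l * stepanovPoly f e r s).rootMultiplicity x :=
    le_rootMultiplicity_of_eval_iterate_derivative hne hl fun i hi => by
      rw [eval_iterate_derivative_pow_mul_stepanovPoly f hi.le (hZ x hx), hcond i hi, eval_zero,
        mul_zero]
  exact (card_mul_le_natDegree_of_le_rootMultiplicity hmult).trans <|
    natDegree_mul_le.trans (add_le_add natDegree_pow_le (natDegree_stepanovPoly_le f e hr hs))

end OddMultiplicity

end Stepanov

section QuadraticCharacterSum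

open Polynomial

variable {p : ℕ} [Fact p.Prime]

/-- Stepanov's parameters: `l = 2√p`, `m ≈ p / 2` and `J = √p + O(d)` give more unknowns than
equations. -/
lemma stepanov_parameters {p d : ℕ} (hp : 256 * (d + 1) ^ 2 ≤ p) :
    2 * p.sqrt * ((p - d) / 2 + 2 * p.sqrt * d + (p.sqrt + 8 * (d + 1))) <
      2 * (p.sqrt + 8 * (d + 1)) * ((p - d) / 2) := by
  have hdp : d ≤ p := by nlinarith
  obtain ⟨t, ht⟩ : ∃ t, t = p.sqrt := ⟨_, rfl⟩
  obtain ⟨m, hm⟩ : ∃ m, m = (p - d) / 2 := ⟨_, rfl⟩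
  rw [← ht, ← hm]
  have hm' : p ≤ 2 * m + d + 1 := by omega
  have ht_sq : t * t ≤ p := ht ▸ Nat.sqrt_le p
  have hdt : 16 * (d + 1) ≤ t := ht ▸ Nat.le_sqrt.mpr (by nlinarith)
  have h₁ : 16 * (d + 1) * t ≤ t * t := Nat.mul_le_mul_right t hdt
  have h₂ : 4 * (d + 1) * p ≤ 4 * (d + 1) * (2 * m + d + 1) := Nat.mul_le_mul_left _ hm'
  have h₃ : t * t * d ≤ p * d := Nat.mul_le_mul_right d ht_sq
  have key : t * (2 * t * d + t + 8 * (d + 1)) < 8 * (d + 1) * m := by nlinarith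
  nlinarith

lemma stepanov_bound_le {p d z : ℕ} (hp : 256 * (d + 1) ^ 2 ≤ p)
    (hz : z * (2 * p.sqrt) ≤ 2 * p.sqrt * d +
      ((p - d) / 2 + p / 2 * d + (p.sqrt + 8 * (d + 1)) * p)) :
    (z : ℝ) ≤ p / 2 + 10 * (d + 1) * √p := by
  obtain ⟨t, ht⟩ : ∃ t, t = p.sqrt := ⟨_, rfl⟩
  obtain ⟨m, hm⟩ : ∃ m, m = (p - d) / 2 := ⟨_, rfl⟩
  rw [← ht, ← hm] at hz
  have hp1 : 1 ≤ p := by nlinarith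
  have ht1 : 1 ≤ t := ht ▸ Nat.le_sqrt.mpr (by omega)
  have hlt : p < (t + 1) * (t + 1) := ht ▸ Nat.lt_succ_sqrt p
  have hzR : (z : ℝ) * (2 * t) ≤
      2 * t * d + (m + (p / 2 : ℕ) * d + (t + 8 * (d + 1)) * p) := by exact_mod_cast hz
  have hmp : (m : ℝ) ≤ p := by exact_mod_cast (by omega : m ≤ p)
  have hhalf : ((p / 2 : ℕ) : ℝ) * d ≤ p * d := by gcongr; omega
  have hsq : √p * √p = p := Real.mul_self_sqrt p.cast_nonneg
  have hs1 : 1 ≤ √(p : ℝ) := Real.one_le_sqrt.mpr (by exact_mod_cast hp1)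
  have hst : √(p : ℝ) ≤ 2 * t := by
    rw [Real.sqrt_le_left (by positivity)]
    exact_mod_cast (by nlinarith : p ≤ (2 * t) ^ 2)
  have hpos : (0 : ℝ) < 2 * t := by positivity
  rw [← mul_le_mul_iff_left₀ hpos]
  have h₁ : (p : ℝ) ≤ √p * (2 * t) := by nlinarith
  have h₂ : (9 * (d + 1) : ℝ) * p ≤ 9 * (d + 1) * (√p * (2 * t)) := by gcongr
  have h₃ : (d : ℝ) * (2 * t) ≤ (d + 1) * √p * (2 * t) := by
    gcongr
    nlinarith
  nlinarith

lemma card_le_of_eval_pow_half_eq {f : (ZMod p)[X]} {y : ZMod p}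
    (hodd : Odd (f.rootMultiplicity y)) (hf0 : f.eval 0 ≠ 0)
    (hp : 256 * (f.natDegree + 1) ^ 2 ≤ p) {a : ZMod p} {Z : Finset (ZMod p)}
    (hZ : ∀ x ∈ Z, f.eval x ^ (p / 2) = a) :
    (Z.card : ℝ) ≤ p / 2 + 10 * (f.natDegree + 1) * √p := by
  have hdp : 256 * (f.natDegree + 1) ≤ p := by nlinarith
  have hp_odd : 2 * (p / 2) + 1 = p := by
    rcases (Fact.out : p.Prime).eq_two_or_odd with h | h <;> omega
  have hsqrt : 2 * p.sqrt ≤ p := by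
    have := Nat.sqrt_le p
    have : 2 ≤ p.sqrt := Nat.le_sqrt.mpr (by nlinarith)
    nlinarith
  exact stepanov_bound_le hp <| card_mul_le_of_eval_pow_eq hodd hf0 hp_odd (by omega) (by omega)
    hsqrt (stepanov_parameters hp) hZ

lemma sum_quadraticChar_comp {F ι : Type*} [Field F] [Fintype F] [DecidableEq F]
    [Fintype ι] (g : ι → F) :
    ∑ x, quadraticChar F (g x) =
      ({x | quadraticChar F (g x) = 1} : Finset ι).card -
        ({x | quadraticChar F (g x) = -1} : Finset ι).card := by
  simp only [Finset.card_filter, Nat.cast_sum, ← Finset.sum_sub_distrib]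
  refine Finset.sum_congr rfl fun x _ => ?_
  by_cases hx : g x = 0
  · simp [hx]
  · rcases quadraticChar_dichotomy hx with h | h <;> simp [h]

lemma card_eq_card_quadraticChar {F ι : Type*} [Field F] [Fintype F] [DecidableEq F]
    [Fintype ι] (g : ι → F) :
    Fintype.card ι = ({x | quadraticChar F (g x) = 1} : Finset ι).card +
      ({x | quadraticChar F (g x) = -1} : Finset ι).card +
      ({x | g x = 0} : Finset ι).card := by
  rw [← Finset.card_univ, Finset.card_eq_sum_ones]
  simp only [Finset.card_filter, ← Finset.sum_add_distrib]
  refine Finset.sum_congr rfl fun x _ => ?_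
  by_cases hx : g x = 0
  · simp [hx]
  · rcases quadraticChar_dichotomy hx with h | h <;> simp [h, hx]

lemma abs_quadraticChar_le_one {F : Type*} [Field F] [Fintype F] [DecidableEq F] (x : F) :
    |(quadraticChar F x : ℝ)| ≤ 1 := by
  by_cases hx : x = 0
  · simp [hx]
  · rcases quadraticChar_dichotomy hx with h | h <;> simp [h]

lemma card_filter_eval_eq_zero_le {F : Type*} [Field F] [Fintype F] {f : F[X]} (hf : f ≠ 0) :
    ({x | f.eval x = 0} : Finset F).card ≤ f.natDegree := by
  refine (Finset.card_le_card fun x hx => ?_).trans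
    ((Multiset.toFinset_card_le f.roots).trans (card_roots' f))
  simpa [hf] using hx

lemma abs_sum_quadraticChar_eval_le_of_large {f : (ZMod p)[X]} {y : ZMod p}
    (hodd : Odd (f.rootMultiplicity y)) (hf0 : f.eval 0 ≠ 0)
    (hp : 256 * (f.natDegree + 1) ^ 2 ≤ p) :
    |∑ x, (quadraticChar (ZMod p) (f.eval x) : ℝ)| ≤ 21 * (f.natDegree + 1) * √p := by
  have hchar : ringChar (ZMod p) ≠ 2 := by
    have : 256 ≤ p := le_trans (Nat.le_mul_of_pos_right _ (by positivity)) hp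
    rw [ZMod.ringChar_zmod_n]; omega
  have hpow (x) : ((quadraticChar (ZMod p) (f.eval x) : ℤ) : ZMod p) = f.eval x ^ (p / 2) := by
    rw [quadraticChar_eq_pow_of_char_ne_two' hchar, ZMod.card]
  have hone := card_le_of_eval_pow_half_eq hodd hf0 hp (a := 1)
    (Z := {x | quadraticChar (ZMod p) (f.eval x) = 1}) fun x hx => by
      rw [← hpow, (Finset.mem_filter.mp hx).2, Int.cast_one]
  have hneg := card_le_of_eval_pow_half_eq hodd hf0 hp (a := -1)
    (Z := {x | quadraticChar (ZMod p) (f.eval x) = -1}) fun x hx => by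
      rw [← hpow, (Finset.mem_filter.mp hx).2, Int.cast_neg, Int.cast_one]
  have hzero : (({x | f.eval x = 0} : Finset (ZMod p)).card : ℝ) ≤ f.natDegree := by
    exact_mod_cast card_filter_eval_eq_zero_le (f := f) (by rintro rfl; simp at hf0)
  have hcount := congrArg (Nat.cast : ℕ → ℝ) (card_eq_card_quadraticChar fun x => f.eval x)
  have hsum := congrArg (Int.cast : ℤ → ℝ) (sum_quadraticChar_comp fun x => f.eval x)
  rw [ZMod.card] at hcount
  push_cast at hcount hsum
  have hs1 : 1 ≤ √(p : ℝ) := Real.one_le_sqrt.mpr (by exact_mod_cast (Fact.out : p.Prime).one_le)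
  have hd : (f.natDegree : ℝ) ≤ (f.natDegree + 1) * √p := by nlinarith
  rw [hsum, abs_le]
  constructor <;> nlinarith

lemma rootMultiplicity_comp_X_add_C {R : Type*} [CommRing R] (f : R[X]) (y c : R) :
    (f.comp (X + C c)).rootMultiplicity (y - c) = f.rootMultiplicity y := by
  rw [rootMultiplicity_eq_rootMultiplicity, comp_assoc,
    rootMultiplicity_eq_rootMultiplicity (t := y)]
  simp only [add_comp, X_comp, C_comp, add_assoc, ← C_add, sub_add_cancel]

lemma natCast_le_mul_sqrt {p d : ℕ} (h : p < 256 * (d + 1) ^ 2) :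
    (p : ℝ) ≤ 21 * (d + 1) * √p := by
  have hs : √(p : ℝ) ≤ 16 * (d + 1) := by
    rw [Real.sqrt_le_left (by positivity)]
    exact_mod_cast h.le.trans_eq (by ring : _ = (16 * (d + 1)) ^ 2)
  calc (p : ℝ) = √p * √p := (Real.mul_self_sqrt p.cast_nonneg).symm
    _ ≤ 16 * (d + 1) * √p := by gcongr
    _ ≤ 21 * (d + 1) * √p := by gcongr; norm_num

/-- A weak form of Weil's bound, whose constant `d - 1` is here replaced by a cruder one. -/
theorem abs_sum_quadraticChar_eval_le {f : (ZMod p)[X]} {y : ZMod p}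
    (hodd : Odd (f.rootMultiplicity y)) :
    |∑ x, (quadraticChar (ZMod p) (f.eval x) : ℝ)| ≤ 21 * (f.natDegree + 1) * √p := by
  have hf : f ≠ 0 := by rintro rfl; simp at hodd
  by_cases hp : 256 * (f.natDegree + 1) ^ 2 ≤ p
  · obtain ⟨c, hc⟩ : ∃ c, f.eval c ≠ 0 := by
      by_contra! h
      have hcard := card_filter_eval_eq_zero_le hf
      simp only [h, Finset.filter_true, Finset.card_univ, ZMod.card] at hcard
      nlinarith
    have hshift := abs_sum_quadraticChar_eval_le_of_large (f := f.comp (X + C c)) (y := y - c)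
      (by rwa [rootMultiplicity_comp_X_add_C]) (by simpa using hc)
      (by rwa [natDegree_comp, natDegree_X_add_C, mul_one])
    rw [← Equiv.sum_comp (Equiv.addRight c)]
    simpa [natDegree_comp] using hshift
  · have htriv : |∑ x, (quadraticChar (ZMod p) (f.eval x) : ℝ)| ≤ p := by
      refine (Finset.abs_sum_le_sum_abs _ _).trans
        ((Finset.sum_le_card_nsmul _ _ 1 fun x _ => abs_quadraticChar_le_one _).trans ?_)
      simp
    exact htriv.trans (natCast_le_mul_sqrt (not_le.mp hp))

end QuadraticCharacterSum

/-! ### Cubes and averages of periodic functions -/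

section Averages

open scoped BigOperators

lemma expect_comp_of_surjective {A B : Type*} [AddCommGroup A] [AddCommGroup B] [Fintype A]
    [Fintype B] (φ : A →+ B) (hφ : Function.Surjective φ) (g : B → ℝ) :
    𝔼 a, g (φ a) = 𝔼 b, g b := by
  have hshift (b : B) : 𝔼 a, g (φ a + b) = 𝔼 a, g (φ a) := by
    obtain ⟨a₀, rfl⟩ := hφ b
    exact Fintype.expect_equiv (Equiv.addRight a₀) _ _ fun a => by simp
  calc 𝔼 a, g (φ a) = 𝔼 b, 𝔼 a, g (φ a + b) := by simp only [hshift, Fintype.expect_const]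
    _ = 𝔼 a, 𝔼 b, g (φ a + b) := Finset.expect_comm _ _ _
    _ = 𝔼 _a : A, 𝔼 b, g b := Finset.expect_congr rfl fun a _ =>
        Fintype.expect_equiv (Equiv.addLeft (φ a)) _ _ fun b => by simp
    _ = 𝔼 b, g b := Fintype.expect_const _

lemma expect_ite_apply_eq_zero {A B : Type*} [AddCommGroup A] [AddCommGroup B] [Fintype A]
    [Fintype B] [DecidableEq B] (φ : A →+ B) (hφ : Function.Surjective φ) :
    𝔼 a, (if φ a = 0 then (1 : ℝ) else 0) = 1 / Fintype.card B := by
  rw [expect_comp_of_surjective φ hφ fun b => if b = 0 then (1 : ℝ) else 0]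
  simp

lemma abs_expect_le_one {ι : Type*} {s : Finset ι} {f : ι → ℝ} (h : ∀ i ∈ s, |f i| ≤ 1) :
    |𝔼 i ∈ s, f i| ≤ 1 := by
  rcases s.eq_empty_or_nonempty with rfl | hs
  · simp
  · exact (Finset.abs_expect_le _ _).trans (Finset.expect_le hs h)

end Averages

/-- The parameters `(n, h₁, …, h_k)` of the cube whose vertices are `n + ω · h`. -/
abbrev Cube (k : ℕ) (R : Type*) : Type _ := R × (Fin k → R)

namespace Cube

section AddCommMonoid

variable {k : ℕ} {R S : Type*} [AddCommMonoid R] [AddCommMonoid S]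

/-- The vertex `n + ω · h` of the cube `(n, h)`. -/
def vertex (ω : Fin k → Bool) : Cube k R →+ R where
  toFun v := v.1 + ∑ i, if ω i then v.2 i else 0
  map_zero' := by simp
  map_add' v w := by
    simp only [Prod.fst_add, Prod.snd_add, Pi.add_apply, Finset.sum_add_distrib,
      ← Finset.sum_filter]
    exact add_add_add_comm _ _ _ _

lemma vertex_apply (ω : Fin k → Bool) (v : Cube k R) :
    vertex ω v = v.1 + ∑ i, if ω i then v.2 i else 0 := rfl

lemma vertex_mk_zero (ω : Fin k → Bool) (x : R) : vertex ω (x, (0 : Fin k → R)) = x := by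
  simp [vertex_apply]

lemma vertex_single (ω : Fin k → Bool) (i : Fin k) (x : R) :
    vertex ω ((0 : R), Pi.single i x) = if ω i then x else 0 := by
  rw [vertex_apply, Finset.sum_eq_single i]
  · simp
  · intro j _ hj; simp [Pi.single_eq_of_ne hj]
  · simp

/-- The additive map between cubes applying `f` to every parameter. -/
def map (k : ℕ) (f : R →+ S) : Cube k R →+ Cube k S := f.prodMap (f.compLeft (Fin k))

lemma vertex_map (ω : Fin k → Bool) (f : R →+ S) (v : Cube k R) :
    vertex ω (map k f v) = f (vertex ω v) := by
  simp [vertex_apply, map, apply_ite f]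

end AddCommMonoid

variable {k m : ℕ}

/-- Reduction of an integer cube modulo `m`. A function of integer cubes is `m`-periodic when it
factors through this map. -/
def reduce (k m : ℕ) : Cube k ℤ →+ Cube k (ZMod m) := map k (Int.castAddHom (ZMod m))

lemma vertex_reduce (ω : Fin k → Bool) (v : Cube k ℤ) :
    vertex ω (reduce k m v) = ((vertex ω v : ℤ) : ZMod m) :=
  vertex_map ω _ v

lemma factorsThrough_reduce_of_dvd {n : ℕ} {G : Cube k ℤ → ℝ} (hmn : m ∣ n)
    (hG : G.FactorsThrough (reduce k m)) : G.FactorsThrough (reduce k n) := fun v w h => by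
  have hcast (u : Cube k ℤ) : map k (ZMod.castHom hmn (ZMod m) : ZMod n →+ ZMod m)
      (reduce k n u) = reduce k m u := by
    ext <;> simp [reduce, map]
  exact hG (by rw [← hcast, ← hcast, h])

/-- The box `[0, m) ^ (k + 1)`, a fundamental domain for reduction modulo `m`. -/
noncomputable def periodBox (k m : ℕ) : Finset (Cube k ℤ) := Finset.Icc 0 ((m : Cube k ℤ) - 1)

lemma mem_periodBox {v : Cube k ℤ} :
    v ∈ periodBox k m ↔ (0 ≤ v.1 ∧ v.1 < m) ∧ ∀ i, 0 ≤ v.2 i ∧ v.2 i < m := by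
  simp only [periodBox, Finset.mem_Icc, Prod.le_def, Pi.le_def, Prod.fst_zero, Prod.snd_zero,
    Prod.fst_sub, Prod.snd_sub, Prod.fst_natCast, Prod.snd_natCast, Prod.fst_one, Prod.snd_one,
    Pi.zero_apply, Pi.sub_apply, Pi.natCast_apply, Pi.one_apply, Int.le_sub_one_iff]
  grind

section Mean

open scoped BigOperators

/-- The mean over one period of an `m`-periodic function of integer cubes. -/
noncomputable def periodMean (m : ℕ) (G : Cube k ℤ → ℝ) : ℝ := 𝔼 v ∈ periodBox k m, G v

lemma zero_mem_periodBox (k : ℕ) [NeZero m] : 0 ∈ periodBox k m :=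
  mem_periodBox.mpr (by simp [NeZero.pos m])

lemma periodMean_nonneg {G : Cube k ℤ → ℝ} (h : ∀ v, 0 ≤ G v) : 0 ≤ periodMean m G :=
  Finset.expect_nonneg fun v _ => h v

lemma abs_periodMean_le_one {G : Cube k ℤ → ℝ} (h : ∀ v, |G v| ≤ 1) : |periodMean m G| ≤ 1 :=
  abs_expect_le_one fun v _ => h v

lemma periodMean_comp_reduce (m : ℕ) [NeZero m] (g : Cube k (ZMod m) → ℝ) :
    periodMean m (g ∘ reduce k m) = 𝔼 s, g s := by
  refine Finset.expect_nbij' (reduce k m) (fun s => (s.1.val, fun i => (s.2 i).val))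
    (fun _ _ => Finset.mem_univ _) (fun s _ => ?_) (fun v hv => ?_) (fun s _ => ?_)
    fun _ _ => rfl
  · rw [mem_periodBox]
    exact ⟨⟨Int.natCast_nonneg _, Int.ofNat_lt.mpr (ZMod.val_lt _)⟩,
      fun i => ⟨Int.natCast_nonneg _, Int.ofNat_lt.mpr (ZMod.val_lt _)⟩⟩
  · rw [mem_periodBox] at hv
    exact Prod.ext ((ZMod.val_intCast _).trans (Int.emod_eq_of_lt hv.1.1 hv.1.2))
      (funext fun i => (ZMod.val_intCast _).trans (Int.emod_eq_of_lt (hv.2 i).1 (hv.2 i).2))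
  · ext <;> simp [reduce, map]

lemma exists_eq_comp_reduce {G : Cube k ℤ → ℝ} (hG : G.FactorsThrough (reduce k m)) :
    ∃ g, G = g ∘ reduce k m := (Function.factorsThrough_iff G).mp hG

lemma expect_periodBox_add [NeZero m] {G : Cube k ℤ → ℝ} (hG : G.FactorsThrough (reduce k m))
    (v : Cube k ℤ) : 𝔼 s ∈ periodBox k m, G (v + s) = periodMean m G := by
  obtain ⟨g, rfl⟩ := exists_eq_comp_reduce hG
  rw [periodMean_comp_reduce,
    ← Fintype.expect_equiv (Equiv.addLeft (reduce k m v)) (fun s => g (reduce k m v + s)) g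
      fun _ => rfl,
    ← periodMean_comp_reduce m fun s => g (reduce k m v + s)]
  simp [periodMean]

lemma exists_intCast_eq_and_eq {a b : ℕ} (hab : a.Coprime b) (x : ZMod a) (y : ZMod b) :
    ∃ n : ℤ, (n : ZMod a) = x ∧ (n : ZMod b) = y := by
  obtain ⟨z, hz⟩ := (ZMod.chineseRemainder hab).surjective (x, y)
  obtain ⟨n, rfl⟩ := ZMod.intCast_surjective z
  rw [map_intCast] at hz
  exact ⟨n, congrArg Prod.fst hz, congrArg Prod.snd hz⟩

lemma exists_reduce_eq_and_eq {a b : ℕ} (hab : a.Coprime b) (s : Cube k (ZMod a))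
    (t : Cube k (ZMod b)) : ∃ v, reduce k a v = s ∧ reduce k b v = t := by
  obtain ⟨n, hna, hnb⟩ := exists_intCast_eq_and_eq hab s.1 t.1
  choose h hha hhb using fun i => exists_intCast_eq_and_eq hab (s.2 i) (t.2 i)
  exact ⟨(n, h), Prod.ext hna (funext hha), Prod.ext hnb (funext hhb)⟩

lemma periodMean_mul {a b : ℕ} (ha : a ≠ 0) (hb : b ≠ 0) (hab : a.Coprime b) {G H : Cube k ℤ → ℝ}
    (hG : G.FactorsThrough (reduce k a)) (hH : H.FactorsThrough (reduce k b)) :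
    periodMean (a * b) (G * H) = periodMean a G * periodMean b H := by
  have : NeZero a := ⟨ha⟩
  have : NeZero b := ⟨hb⟩
  obtain ⟨g, rfl⟩ := exists_eq_comp_reduce hG
  obtain ⟨h, rfl⟩ := exists_eq_comp_reduce hH
  let φ : Cube k (ZMod (a * b)) →+ Cube k (ZMod a) × Cube k (ZMod b) :=
    (map k (ZMod.castHom (dvd_mul_right a b) (ZMod a) : ZMod (a * b) →+ ZMod a)).prod
      (map k (ZMod.castHom (dvd_mul_left b a) (ZMod b) : ZMod (a * b) →+ ZMod b))
  have hφ_reduce (v : Cube k ℤ) : φ (reduce k (a * b) v) = (reduce k a v, reduce k b v) := by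
    ext <;> simp [φ, reduce, map]
  have hφ : Function.Surjective φ := fun ⟨s, t⟩ => by
    obtain ⟨v, rfl, rfl⟩ := exists_reduce_eq_and_eq hab s t
    exact ⟨reduce k (a * b) v, hφ_reduce v⟩
  have hGH : (g ∘ reduce k a) * (h ∘ reduce k b) =
      (fun s => g (φ s).1 * h (φ s).2) ∘ reduce k (a * b) := by
    funext v; simp [hφ_reduce]
  rw [hGH, periodMean_comp_reduce, periodMean_comp_reduce, periodMean_comp_reduce,
    expect_comp_of_surjective φ hφ fun st => g st.1 * h st.2, Fintype.expect_mul_expect,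
    ← Finset.univ_product_univ, Finset.expect_product]

lemma factorsThrough_reduce_mul {n : ℕ} {G H : Cube k ℤ → ℝ} (hG : G.FactorsThrough (reduce k m))
    (hH : H.FactorsThrough (reduce k n)) : (G * H).FactorsThrough (reduce k (m * n)) :=
  fun _ _ h => congrArg₂ (· * ·) (factorsThrough_reduce_of_dvd (dvd_mul_right m n) hG h)
    (factorsThrough_reduce_of_dvd (dvd_mul_left n m) hH h)

lemma factorsThrough_reduce_prod {S : Finset ℕ} {G : ℕ → Cube k ℤ → ℝ}
    (hG : ∀ p ∈ S, (G p).FactorsThrough (reduce k p)) :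
    (∏ p ∈ S, G p).FactorsThrough (reduce k (∏ p ∈ S, p)) := fun v w h => by
  simp only [Finset.prod_apply]
  exact Finset.prod_congr rfl fun p hp =>
    factorsThrough_reduce_of_dvd (Finset.dvd_prod_of_mem _ hp) (hG p hp) h

lemma periodMean_one (m : ℕ) [NeZero m] : periodMean m (1 : Cube k ℤ → ℝ) = 1 :=
  Finset.expect_const ⟨0, zero_mem_periodBox k⟩ 1

lemma periodMean_prod {S : Finset ℕ} (hS : ∀ p ∈ S, p.Prime) {G : ℕ → Cube k ℤ → ℝ}
    (hG : ∀ p ∈ S, (G p).FactorsThrough (reduce k p)) :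
    periodMean (∏ p ∈ S, p) (∏ p ∈ S, G p) = ∏ p ∈ S, periodMean p (G p) := by
  induction S using Finset.induction_on with
  | empty => exact periodMean_one 1
  | insert a S ha ih =>
    rw [Finset.forall_mem_insert] at hS hG
    have hcop : a.Coprime (∏ p ∈ S, p) := Nat.Coprime.prod_right fun p hp =>
      (Nat.coprime_primes hS.1 (hS.2 p hp)).mpr fun h => ha (h ▸ hp)
    rw [Finset.prod_insert ha, Finset.prod_insert ha, Finset.prod_insert ha,
      periodMean_mul hS.1.ne_zero (Finset.prod_ne_zero_iff.mpr fun p hp => (hS.2 p hp).ne_zero)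
        hcop hG.1 (factorsThrough_reduce_prod hG.2), ih hS.2 hG.2]

end Mean

end Cube

/-! ### Local averages at a prime -/

namespace Cube

open scoped BigOperators

variable {k p : ℕ}

section ZeroVertices

variable {R : Type*}

lemma vertex_surjective [AddCommMonoid R] (ω : Fin k → Bool) :
    Function.Surjective (vertex ω : Cube k R →+ R) := fun x => ⟨(x, 0), vertex_mk_zero ω x⟩

lemma vertex_prod_surjective [AddCommGroup R] {ω ω' : Fin k → Bool} (h : ω ≠ ω') :
    Function.Surjective ((vertex ω).prod (vertex ω') : Cube k R →+ R × R) := fun ⟨a, b⟩ => by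
  have vertex_mk_single (η : Fin k → Bool) (x : R) (i : Fin k) (y : R) :
      vertex η (x, Pi.single i y) = x + if η i then y else 0 := by
    have : ((x, Pi.single i y) : Cube k R) = (x, 0) + (0, Pi.single i y) := by simp
    rw [this, map_add, vertex_mk_zero, vertex_single]
  obtain ⟨i, hi⟩ := Function.ne_iff.mp h
  rcases hω : ω i with _ | _
  · have hω' : ω' i = true := by grind
    exact ⟨(a, Pi.single i (b - a)), by simp [vertex_mk_single, hω, hω']⟩
  · have hω' : ω' i = false := by grind
    exact ⟨(b, Pi.single i (a - b)), by simp [vertex_mk_single, hω, hω']⟩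

variable [DecidableEq R]

/-- The number of vertices of a cube that vanish. -/
def zeroVertexCount [AddCommMonoid R] (v : Cube k R) : ℝ :=
  ∑ ω, if vertex ω v = 0 then 1 else 0

lemma expect_zeroVertexCount [AddCommGroup R] [Fintype R] :
    𝔼 v : Cube k R, zeroVertexCount v = 2 ^ k / Fintype.card R := by
  simp only [zeroVertexCount]
  rw [Finset.expect_sum_comm,
    Finset.sum_congr rfl fun ω _ => expect_ite_apply_eq_zero _ (vertex_surjective ω)]
  simp [div_eq_mul_inv]

lemma expect_zeroVertexCount_sq_le [AddCommGroup R] [Fintype R] :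
    𝔼 v : Cube k R, zeroVertexCount v ^ 2 ≤
      2 ^ k / Fintype.card R + (2 ^ k) ^ 2 / (Fintype.card R : ℝ) ^ 2 := by
  have hpair (ω ω' : Fin k → Bool) :
      𝔼 v : Cube k R, (if vertex ω v = 0 then (1 : ℝ) else 0) * (if vertex ω' v = 0 then 1 else 0)
        ≤ (if ω = ω' then 1 / (Fintype.card R : ℝ) else 0) + 1 / (Fintype.card R : ℝ) ^ 2 := by
    rcases eq_or_ne ω ω' with rfl | h
    · simp only [ite_mul_ite, mul_one, mul_zero, if_true]
      rw [expect_ite_apply_eq_zero _ (vertex_surjective ω)]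
      exact le_add_of_nonneg_right (by positivity)
    · have := expect_ite_apply_eq_zero _ (vertex_prod_surjective (R := R) h)
      simp only [AddMonoidHom.prod_apply, Prod.mk_eq_zero, Fintype.card_prod] at this
      simp only [ite_zero_mul_ite_zero, mul_one, if_neg h, zero_add, this]
      push_cast
      rw [sq]
  calc 𝔼 v : Cube k R, zeroVertexCount v ^ 2
      = ∑ ω, ∑ ω', 𝔼 v : Cube k R,
          (if vertex ω v = 0 then (1 : ℝ) else 0) * (if vertex ω' v = 0 then 1 else 0) := by
        simp only [zeroVertexCount, sq, Finset.sum_mul_sum, Finset.expect_sum_comm]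
    _ ≤ ∑ ω : Fin k → Bool, ∑ ω', ((if ω = ω' then 1 / (Fintype.card R : ℝ) else 0) +
          1 / (Fintype.card R : ℝ) ^ 2) :=
        Finset.sum_le_sum fun ω _ => Finset.sum_le_sum fun ω' _ => hpair ω ω'
    _ = 2 ^ k / Fintype.card R + (2 ^ k) ^ 2 / (Fintype.card R : ℝ) ^ 2 := by
        simp [Finset.sum_add_distrib]
        ring

lemma ite_prod_vertex_le_zeroVertexCount [CommRing R] [IsDomain R] (v : Cube k R) :
    (if ∏ ω, vertex ω v = 0 then 1 else 0) ≤ zeroVertexCount v := by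
  have hterm (ω : Fin k → Bool) : (0 : ℝ) ≤ if vertex ω v = 0 then 1 else 0 := by positivity
  split_ifs with h
  · obtain ⟨ω, hω, hzero⟩ := Finset.prod_eq_zero_iff.mp h
    simpa only [zeroVertexCount, hzero, if_true] using
      Finset.single_le_sum (f := fun ω => if vertex ω v = 0 then (1 : ℝ) else 0)
        (fun ω _ => hterm ω) hω
  · exact Finset.sum_nonneg fun ω _ => hterm ω

lemma two_mul_sub_sq_le_ite_prod_vertex [CommRing R] [IsDomain R] (v : Cube k R) :
    2 * zeroVertexCount v - zeroVertexCount v ^ 2 ≤ if ∏ ω, vertex ω v = 0 then 1 else 0 := by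
  split_ifs with h
  · linarith [sq_nonneg (zeroVertexCount v - 1)]
  · have hzero : zeroVertexCount v = 0 := Finset.sum_eq_zero fun ω hω =>
      if_neg (Finset.prod_ne_zero_iff.mp h ω hω)
    simp [hzero]

end ZeroVertices

/-- The indicator of the event that `p` divides some vertex of the cube, for `p` prime. -/
noncomputable def dvdIndicator (p : ℕ) (v : Cube k ℤ) : ℝ :=
  if (p : ℤ) ∣ ∏ ω, vertex ω v then 1 else 0

lemma dvdIndicator_eq_comp_reduce (k p : ℕ) : dvdIndicator (k := k) p =
    (fun s => if ∏ ω, vertex ω s = 0 then 1 else 0) ∘ reduce k p := by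
  funext v
  simp only [dvdIndicator, Function.comp_apply, vertex_reduce, ← Int.cast_prod,
    ZMod.intCast_zmod_eq_zero_iff_dvd]

lemma factorsThrough_dvdIndicator (k p : ℕ) :
    (dvdIndicator (k := k) p).FactorsThrough (reduce k p) := by
  rw [dvdIndicator_eq_comp_reduce]
  exact fun _ _ h => congrArg (fun s => if ∏ ω, vertex ω s = 0 then (1 : ℝ) else 0) h

lemma dvdIndicator_nonneg (p : ℕ) (v : Cube k ℤ) : 0 ≤ dvdIndicator p v := by
  unfold dvdIndicator; positivity

lemma dvdIndicator_le_one (p : ℕ) (v : Cube k ℤ) : dvdIndicator p v ≤ 1 := by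
  unfold dvdIndicator; split_ifs <;> norm_num

lemma abs_dvdIndicator_le_one (p : ℕ) (v : Cube k ℤ) : |dvdIndicator p v| ≤ 1 := by
  rw [abs_of_nonneg (dvdIndicator_nonneg p v)]
  exact dvdIndicator_le_one p v

/-- The density of the cubes with a vertex divisible by `p`, for `p` prime. -/
noncomputable def dvdDensity (k p : ℕ) : ℝ := periodMean p (dvdIndicator (k := k) p)

lemma dvdDensity_mem_Icc (k p : ℕ) : dvdDensity k p ∈ Set.Icc 0 1 :=
  ⟨periodMean_nonneg (dvdIndicator_nonneg p),
    (le_abs_self _).trans (abs_periodMean_le_one (abs_dvdIndicator_le_one p))⟩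

lemma dvdDensity_le (hp : p.Prime) : dvdDensity k p ≤ 2 ^ k / p := by
  have : Fact p.Prime := ⟨hp⟩
  rw [dvdDensity, dvdIndicator_eq_comp_reduce, periodMean_comp_reduce]
  calc 𝔼 s : Cube k (ZMod p), (if ∏ ω, vertex ω s = 0 then (1 : ℝ) else 0)
      ≤ 𝔼 s : Cube k (ZMod p), zeroVertexCount s :=
        Finset.expect_le_expect fun s _ => ite_prod_vertex_le_zeroVertexCount s
    _ = 2 ^ k / p := by rw [expect_zeroVertexCount, ZMod.card]

lemma sub_le_dvdDensity (hp : p.Prime) :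
    2 ^ k / p - (2 ^ k) ^ 2 / p ^ 2 ≤ dvdDensity k p := by
  have : Fact p.Prime := ⟨hp⟩
  have hfirst := expect_zeroVertexCount (k := k) (R := ZMod p)
  have hsecond := expect_zeroVertexCount_sq_le (k := k) (R := ZMod p)
  rw [ZMod.card] at hfirst hsecond
  rw [dvdDensity, dvdIndicator_eq_comp_reduce, periodMean_comp_reduce]
  calc 2 ^ k / p - (2 ^ k) ^ 2 / p ^ 2
      ≤ 2 * (𝔼 s : Cube k (ZMod p), zeroVertexCount s) -
          𝔼 s : Cube k (ZMod p), zeroVertexCount s ^ 2 := by linarith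
    _ = 𝔼 s : Cube k (ZMod p), (2 * zeroVertexCount s - zeroVertexCount s ^ 2) := by
        rw [Finset.expect_sub_distrib, Finset.mul_expect]
    _ ≤ 𝔼 s : Cube k (ZMod p), (if ∏ ω, vertex ω s = 0 then (1 : ℝ) else 0) :=
        Finset.expect_le_expect fun s _ => two_mul_sub_sq_le_ite_prod_vertex s

lemma div_sub_one_pow_mul_one_sub_le {p m : ℝ} (hp : 2 ≤ p) (n : ℕ)
    (hm : n / p - n ^ 2 / p ^ 2 ≤ m) :
    (p / (p - 1)) ^ n * (1 - m) ≤ 1 + 2 ^ n * n ^ 2 / p ^ 2 := by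
  have hbernoulli : 1 - n / p ≤ (1 - 1 / p) ^ n := by
    have hp1 : 1 / p ≤ 1 := by rw [div_le_one (by linarith)]; linarith
    calc 1 - n / p = 1 + n * -(1 / p) := by ring
      _ ≤ (1 + -(1 / p)) ^ n := one_add_mul_le_pow (by linarith) n
      _ = (1 - 1 / p) ^ n := by rw [← sub_eq_add_neg]
  have hinv : p / (p - 1) * (1 - 1 / p) = 1 := by
    have : p - 1 ≠ 0 := by linarith
    field_simp
  have hle : p / (p - 1) ≤ 2 := by rw [div_le_iff₀ (by linarith)]; linarith
  have hnonneg : 0 ≤ p / (p - 1) := div_nonneg (by linarith) (by linarith)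
  calc (p / (p - 1)) ^ n * (1 - m)
      ≤ (p / (p - 1)) ^ n * ((1 - 1 / p) ^ n + n ^ 2 / p ^ 2) := by gcongr; linarith
    _ = 1 + (p / (p - 1)) ^ n * (n ^ 2 / p ^ 2) := by rw [mul_add, ← mul_pow, hinv, one_pow]
    _ ≤ 1 + 2 ^ n * (n ^ 2 / p ^ 2) := by gcongr
    _ = 1 + 2 ^ n * n ^ 2 / p ^ 2 := by ring

lemma pow_mul_one_sub_dvdDensity_le (hp : p.Prime) :
    ((p : ℝ) / (p - 1)) ^ 2 ^ k * (1 - dvdDensity k p) ≤ 1 + 2 ^ 2 ^ k * (2 ^ k) ^ 2 / p ^ 2 := by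
  simpa using div_sub_one_pow_mul_one_sub_le (p := p) (m := dvdDensity k p)
    (by exact_mod_cast hp.two_le) (2 ^ k) (by simpa using sub_le_dvdDensity hp)

section QuadraticChar

variable [Fact p.Prime]

lemma expect_vertex_sub_eq_zero {ω ω' : Fin k → Bool} (hne : ω ≠ ω') :
    𝔼 h : Fin k → ZMod p, (if vertex ω (0, h) - vertex ω' (0, h) = 0 then (1 : ℝ) else 0) =
      1 / p := by
  let φ : (Fin k → ZMod p) →+ ZMod p :=
    (vertex ω - vertex ω' : Cube k (ZMod p) →+ ZMod p).comp (AddMonoidHom.inr _ _)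
  have hφ : Function.Surjective φ := fun y => by
    obtain ⟨v, hv⟩ := vertex_prod_surjective hne (y, 0)
    simp only [AddMonoidHom.prod_apply, Prod.mk.injEq] at hv
    refine ⟨v.2, ?_⟩
    rw [← sub_zero y, ← hv.1, ← hv.2]
    simp [φ, vertex_apply]
  exact (expect_ite_apply_eq_zero φ hφ).trans (by rw [ZMod.card])

lemma expect_not_injective_vertex_le :
    𝔼 h : Fin k → ZMod p,
      (if Function.Injective fun ω => vertex ω (0, h) then (0 : ℝ) else 1) ≤ (2 ^ k) ^ 2 / p := by
  calc 𝔼 h : Fin k → ZMod p,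
        (if Function.Injective fun ω => vertex ω (0, h) then (0 : ℝ) else 1)
      ≤ 𝔼 h : Fin k → ZMod p, ∑ ω : Fin k → Bool, ∑ ω' : Fin k → Bool,
          if ω ≠ ω' ∧ vertex ω (0, h) - vertex ω' (0, h) = 0 then (1 : ℝ) else 0 := by
        refine Finset.expect_le_expect fun h _ => ?_
        split_ifs with hinj
        · positivity
        · obtain ⟨ω, ω', heq, hne⟩ := Function.not_injective_iff.mp hinj
          calc (1 : ℝ) = if ω ≠ ω' ∧ vertex ω (0, h) - vertex ω' (0, h) = 0 then 1 else 0 := by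
                rw [if_pos ⟨hne, sub_eq_zero.mpr heq⟩]
            _ ≤ ∑ η, if ω ≠ η ∧ vertex ω (0, h) - vertex η (0, h) = 0 then 1 else 0 :=
                Finset.single_le_sum
                  (f := fun η =>
                    if ω ≠ η ∧ vertex ω (0, h) - vertex η (0, h) = 0 then (1 : ℝ) else 0)
                  (fun _ _ => by positivity) (Finset.mem_univ ω')
            _ ≤ _ := Finset.single_le_sum (f := fun ω => ∑ η : Fin k → Bool,
                  if ω ≠ η ∧ vertex ω (0, h) - vertex η (0, h) = 0 then (1 : ℝ) else 0)
                (fun _ _ => by positivity) (Finset.mem_univ ω)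
    _ = ∑ ω : Fin k → Bool, ∑ ω' : Fin k → Bool, 𝔼 h : Fin k → ZMod p,
          if ω ≠ ω' ∧ vertex ω (0, h) - vertex ω' (0, h) = 0 then (1 : ℝ) else 0 := by
        simp only [Finset.expect_sum_comm]
    _ ≤ ∑ ω : Fin k → Bool, ∑ ω' : Fin k → Bool, (1 / p : ℝ) := by
        refine Finset.sum_le_sum fun ω _ => Finset.sum_le_sum fun ω' _ => ?_
        rcases eq_or_ne ω ω' with rfl | hne
        · simp
        · simp only [hne, ne_eq, not_false_eq_true, true_and]
          exact (expect_vertex_sub_eq_zero hne).le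
    _ = (2 ^ k) ^ 2 / p := by simp; ring

lemma abs_sum_prod_quadraticChar_add_le {ι : Type*} [Fintype ι] [Nonempty ι] {b : ι → ZMod p}
    (hb : Function.Injective b) :
    |∑ x, ∏ i, (quadraticChar (ZMod p) (x + b i) : ℝ)| ≤ 21 * (Fintype.card ι + 1) * √p := by
  let f : Polynomial (ZMod p) := ∏ i, (Polynomial.X - Polynomial.C (-b i))
  have hroots : f.roots = Finset.univ.val.map fun i => -b i := by
    rw [← Polynomial.roots_multiset_prod_X_sub_C (Finset.univ.val.map _), Multiset.map_map]
    rfl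
  obtain ⟨i⟩ := ‹Nonempty ι›
  have hroot : f.rootMultiplicity (-b i) = 1 := by
    rw [← Polynomial.count_roots, hroots]
    exact Multiset.count_eq_one_of_mem (Multiset.Nodup.map (neg_injective.comp hb)
      Finset.univ.nodup) (Multiset.mem_map_of_mem _ (Finset.mem_univ i))
  have hdeg : f.natDegree = Fintype.card ι :=
    (Polynomial.natDegree_finsetProd_X_sub_C_eq_card Finset.univ _).trans Finset.card_univ
  have hbound := abs_sum_quadraticChar_eval_le (f := f) (hroot ▸ odd_one)
  simpa only [hdeg, f, Polynomial.eval_prod, Polynomial.eval_sub, Polynomial.eval_X,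
    Polynomial.eval_C, sub_neg_eq_add, map_prod, Int.cast_prod] using hbound

lemma abs_expect_prod_quadraticChar_vertex_le (h : Fin k → ZMod p) :
    |𝔼 x : ZMod p, ∏ ω : Fin k → Bool, (quadraticChar (ZMod p) (vertex ω (x, h)) : ℝ)| ≤
      21 * (2 ^ k + 1) / √p + if Function.Injective fun ω => vertex ω (0, h) then 0 else 1 := by
  split_ifs with hinj
  · have hbound := abs_sum_prod_quadraticChar_add_le hinj
    have hp : (0 : ℝ) < p := by exact_mod_cast (Fact.out : p.Prime).pos
    rw [Fintype.expect_eq_sum_div_card, ZMod.card, abs_div, abs_of_pos hp, add_zero,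
      div_le_div_iff₀ hp (Real.sqrt_pos.mpr hp)]
    calc _ ≤ 21 * (2 ^ k + 1) * √p * √p := by
          gcongr
          simpa [vertex_apply] using hbound
      _ = 21 * (2 ^ k + 1) * p := by rw [mul_assoc, Real.mul_self_sqrt hp.le]
  · refine (abs_expect_le_one fun x _ => ?_).trans (le_add_of_nonneg_left (by positivity))
    rw [Finset.abs_prod]
    exact Finset.prod_le_one (fun _ _ => abs_nonneg _) fun _ _ => abs_quadraticChar_le_one _

lemma abs_periodMean_prod_quadraticChar_le :
    |periodMean p fun v : Cube k ℤ => ∏ ω, (quadraticChar (ZMod p) (vertex ω v : ℤ) : ℝ)| ≤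
      (21 * (2 ^ k + 1) + (2 ^ k) ^ 2) / √p := by
  have hcomp : (fun v : Cube k ℤ => ∏ ω, (quadraticChar (ZMod p) (vertex ω v : ℤ) : ℝ)) =
      (fun s => ∏ ω, (quadraticChar (ZMod p) (vertex ω s) : ℝ)) ∘ reduce k p := by
    funext v; simp only [Function.comp_apply, vertex_reduce]
  have hp : (1 : ℝ) ≤ p := by exact_mod_cast (Fact.out : p.Prime).one_le
  have hsqrt : √p ≤ p := Real.sqrt_le_self_iff.mpr (Or.inr hp)
  rw [hcomp, periodMean_comp_reduce, ← Finset.univ_product_univ, Finset.expect_product,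
    Finset.expect_comm]
  calc _ ≤ 𝔼 h : Fin k → ZMod p, |𝔼 x, ∏ ω, (quadraticChar (ZMod p) (vertex ω (x, h)) : ℝ)| :=
        Finset.abs_expect_le _ _
    _ ≤ 𝔼 h : Fin k → ZMod p, (21 * (2 ^ k + 1) / √p +
          if Function.Injective fun ω => vertex ω (0, h) then (0 : ℝ) else 1) :=
        Finset.expect_le_expect fun h _ => abs_expect_prod_quadraticChar_vertex_le h
    _ ≤ 21 * (2 ^ k + 1) / √p + (2 ^ k) ^ 2 / p := by
        rw [Finset.expect_add_distrib, Fintype.expect_const]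
        gcongr
        exact expect_not_injective_vertex_le
    _ ≤ 21 * (2 ^ k + 1) / √p + (2 ^ k) ^ 2 / √p := by gcongr
    _ = (21 * (2 ^ k + 1) + (2 ^ k) ^ 2) / √p := by rw [add_div]

end QuadraticChar

end Cube

/-! ### Real primitive characters -/

section RealCharacters

variable {q p a b : ℕ}

lemma abs_real_dirichletCharacter_le_one (χ : DirichletCharacter ℝ q) (x : ZMod q) : |χ x| ≤ 1 :=
  χ.norm_le_one x

lemma real_dirichletCharacter_mul_self [NeZero q] (χ : DirichletCharacter ℝ q) {x : ZMod q}
    (hx : IsUnit x) : χ x * χ x = 1 := by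
  obtain ⟨u, rfl⟩ := hx
  rw [← abs_mul_abs_self, ← Real.norm_eq_abs, χ.unit_norm_eq_one, mul_one]

/-- Since `q ∣ e ^ 2`, every unit `1 + 2 e s = (1 + e s) ^ 2` modulo `q` is a square. -/
lemma dvd_two_mul_of_dvd_sq [NeZero q] {χ : DirichletCharacter ℝ q} (hχ : χ.IsPrimitive) {e : ℕ}
    (he : q ∣ e ^ 2) : q ∣ 2 * e := by
  let d := Nat.gcd (2 * e) q
  have hd : d ∣ q := Nat.gcd_dvd_right _ _
  have hfactors : χ.FactorsThrough d := by
    rw [DirichletCharacter.factorsThrough_iff_ker_unitsMap hd]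
    intro u hu
    obtain ⟨x, hx⟩ := ZMod.intCast_surjective (u : ZMod q)
    have hxd : (d : ℤ) ∣ x - 1 := by
      have hval := congrArg Units.val (MonoidHom.mem_ker.mp hu)
      rw [ZMod.unitsMap_val, ← hx, ZMod.cast_intCast hd] at hval
      rw [← ZMod.intCast_zmod_eq_zero_iff_dvd, Int.cast_sub, hval]
      simp
    obtain ⟨t, ht⟩ := hxd
    let w : ZMod q := 1 + e * (Nat.gcdA (2 * e) q * t : ℤ)
    have hw : w * w = u := by
      have hbezout : (d : ℤ) = (2 * e : ℕ) * Nat.gcdA (2 * e) q + q * Nat.gcdB (2 * e) q :=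
        Nat.gcd_eq_gcd_ab _ _
      have he' : (e : ZMod q) ^ 2 = 0 := by
        exact_mod_cast (ZMod.natCast_eq_zero_iff _ _).mpr he
      have hxt := congrArg (Int.cast : ℤ → ZMod q) (sub_eq_iff_eq_add.mp ht)
      rw [hbezout] at hxt
      push_cast [ZMod.natCast_self] at hxt
      rw [← hx, hxt]
      simp only [w]
      push_cast
      linear_combination (Nat.gcdA (2 * e) q * t : ZMod q) ^ 2 * he'
    have hwu : IsUnit w := isUnit_of_mul_isUnit_left (hw ▸ u.isUnit)
    rw [MonoidHom.mem_ker, Units.ext_iff, MulChar.coe_toUnitHom, ← hw, map_mul,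
      real_dirichletCharacter_mul_self χ hwu, Units.val_one]
  calc q = χ.conductor := hχ.symm
    _ ∣ d := χ.conductor_dvd_of_mem_conductorSet hfactors
    _ ∣ 2 * e := Nat.gcd_dvd_left _ _

lemma exponent_eq_one_of_isPrimitive (hp : p.Prime) (hp2 : p ≠ 2) (ha : 0 < a)
    {χ : DirichletCharacter ℝ (p ^ a)} (hχ : χ.IsPrimitive) : a = 1 := by
  have : NeZero (p ^ a) := ⟨pow_ne_zero _ hp.ne_zero⟩
  by_contra hne
  have hdvd : p ^ a ∣ 2 * p ^ (a - 1) :=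
    dvd_two_mul_of_dvd_sq hχ (by rw [← pow_mul]; exact pow_dvd_pow _ (by lia))
  have : p * p ^ (a - 1) ∣ 2 * p ^ (a - 1) := by rwa [mul_pow_sub_one ha.ne']
  have hp_dvd : p ∣ 2 := Nat.dvd_of_mul_dvd_mul_right (pow_pos hp.pos _) this
  exact hp2 ((Nat.prime_dvd_prime_iff_eq hp Nat.prime_two).mp hp_dvd)

lemma exponent_le_three_of_isPrimitive {χ : DirichletCharacter ℝ (2 ^ a)} (hχ : χ.IsPrimitive) :
    a ≤ 3 := by
  by_contra! hlt
  have hdvd : 2 ^ a ∣ 2 * 2 ^ (a - 2) :=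
    dvd_two_mul_of_dvd_sq hχ (by rw [← pow_mul]; exact pow_dvd_pow _ (by lia))
  rw [← pow_succ', Nat.pow_dvd_pow_iff_le_right'] at hdvd
  lia

lemma eq_quadraticChar_of_isPrimitive [Fact p.Prime] {χ : DirichletCharacter ℝ p}
    (hχ : χ.IsPrimitive) (x : ZMod p) : χ x = quadraticChar (ZMod p) x := by
  have hone {y : ZMod p} (hy : y ≠ 0) (hquad : quadraticChar (ZMod p) y = 1) : χ y = 1 := by
    obtain ⟨r, rfl⟩ := (quadraticChar_one_iff_isSquare hy).mp hquad
    rw [map_mul, real_dirichletCharacter_mul_self χ (left_ne_zero_of_mul hy).isUnit]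
  obtain ⟨u, hu⟩ : ∃ u : (ZMod p)ˣ, χ u ≠ 1 := by
    by_contra! hcon
    have hχ_one : χ = 1 := MulChar.ext fun u => by rw [hcon, MulChar.one_apply_coe]
    have hp_one : p = 1 := by rw [← hχ, hχ_one, DirichletCharacter.conductor_one]
    exact (Fact.out : p.Prime).ne_one hp_one
  have hquad_u : quadraticChar (ZMod p) u = -1 :=
    (quadraticChar_dichotomy u.ne_zero).resolve_left fun h => hu (hone u.ne_zero h)
  have hχ_u : χ u = -1 :=
    (mul_self_eq_one_iff.mp (real_dirichletCharacter_mul_self χ u.isUnit)).resolve_left hu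
  rcases eq_or_ne x 0 with rfl | hx
  · rw [MulChar.map_zero, quadraticChar_zero, Int.cast_zero]
  rcases quadraticChar_dichotomy hx with h | h
  · rw [h, hone hx h, Int.cast_one]
  · have hxu : χ (x * u) = 1 := hone (mul_ne_zero hx u.ne_zero) (by
      rw [map_mul, h, hquad_u]; norm_num)
    rw [map_mul, hχ_u] at hxu
    rw [h, Int.cast_neg, Int.cast_one]
    linarith

lemma exists_changeLevel_mul_changeLevel {R : Type*} [CommMonoidWithZero R] (hab : a.Coprime b)
    (χ : DirichletCharacter R (a * b)) :
    ∃ (χ₁ : DirichletCharacter R a) (χ₂ : DirichletCharacter R b),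
      χ = DirichletCharacter.changeLevel (dvd_mul_right a b) χ₁ *
        DirichletCharacter.changeLevel (dvd_mul_left b a) χ₂ := by
  let e : (ZMod (a * b))ˣ ≃* (ZMod a)ˣ × (ZMod b)ˣ :=
    (Units.mapEquiv (ZMod.chineseRemainder hab).toMulEquiv).trans MulEquiv.prodUnits
  have he (u : (ZMod (a * b))ˣ) :
      e u = (ZMod.unitsMap (dvd_mul_right a b) u, ZMod.unitsMap (dvd_mul_left b a) u) := by
    ext
    · rw [ZMod.unitsMap_val]
      exact Prod.fst_zmod_cast _
    · rw [ZMod.unitsMap_val]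
      exact Prod.snd_zmod_cast _
  let f : (ZMod a)ˣ × (ZMod b)ˣ →* Rˣ := χ.toUnitHom.comp e.symm
  refine ⟨MulChar.ofUnitHom (f.comp (MonoidHom.inl _ _)),
    MulChar.ofUnitHom (f.comp (MonoidHom.inr _ _)), MulChar.ext fun u => ?_⟩
  calc χ u = χ.toUnitHom u := (MulChar.coe_toUnitHom χ u).symm
    _ = f (ZMod.unitsMap (dvd_mul_right a b) u, 1) * f (1, ZMod.unitsMap (dvd_mul_left b a) u) := by
      rw [← Units.val_mul, ← map_mul, Prod.mk_mul_mk, mul_one, one_mul, ← he]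
      simp [f]
    _ = _ := by
      rw [MulChar.mul_apply]
      simp [DirichletCharacter.changeLevel_def]

lemma changeLevel_mul_changeLevel_apply {R : Type*} [CommMonoidWithZero R] [Nontrivial R]
    (χ₁ : DirichletCharacter R a) (χ₂ : DirichletCharacter R b) (x : ℤ) :
    (DirichletCharacter.changeLevel (dvd_mul_right a b) χ₁ *
      DirichletCharacter.changeLevel (dvd_mul_left b a) χ₂) x = χ₁ x * χ₂ x := by
  by_cases hx : IsCoprime x (a * b : ℕ)
  · rw [MulChar.mul_apply, DirichletCharacter.changeLevel_eq_cast_of_dvd' _ _ hx,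
      DirichletCharacter.changeLevel_eq_cast_of_dvd' _ _ hx]
  · rw [(DirichletCharacter.apply_eq_zero_iff _ x).mpr hx]
    rw [Nat.cast_mul, IsCoprime.mul_right_iff, not_and_or] at hx
    rcases hx with hx | hx
    · rw [(DirichletCharacter.apply_eq_zero_iff _ x).mpr hx, zero_mul]
    · rw [(DirichletCharacter.apply_eq_zero_iff _ x).mpr hx, mul_zero]

lemma isPrimitive_of_changeLevel_mul_changeLevel {R : Type*} [CommMonoidWithZero R]
    [NeZero (a * b)] {χ₁ : DirichletCharacter R a} {χ₂ : DirichletCharacter R b}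
    (h : (DirichletCharacter.changeLevel (dvd_mul_right a b) χ₁ *
      DirichletCharacter.changeLevel (dvd_mul_left b a) χ₂).IsPrimitive) :
    χ₁.IsPrimitive ∧ χ₂.IsPrimitive := by
  have hab : a * b ∣ χ₁.conductor * χ₂.conductor := by
    have hlcm := DirichletCharacter.conductor_mul_dvd_lcm_conductor
      (DirichletCharacter.changeLevel (dvd_mul_right a b) χ₁)
      (DirichletCharacter.changeLevel (dvd_mul_left b a) χ₂)
    rw [h, DirichletCharacter.conductor_changeLevel, DirichletCharacter.conductor_changeLevel]
      at hlcm
    exact hlcm.trans (Nat.lcm_dvd_mul _ _)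
  have ha : 0 < a := Nat.pos_of_ne_zero (left_ne_zero_of_mul (NeZero.ne (a * b)))
  have hb : 0 < b := Nat.pos_of_ne_zero (right_ne_zero_of_mul (NeZero.ne (a * b)))
  have h₁ := χ₁.conductor_dvd_level
  have h₂ := χ₂.conductor_dvd_level
  refine ⟨h₁.antisymm (Nat.dvd_of_mul_dvd_mul_right hb (hab.trans (mul_dvd_mul_left _ h₂))),
    h₂.antisymm (Nat.dvd_of_mul_dvd_mul_left ha (hab.trans (mul_dvd_mul_right h₁ _)))⟩

lemma exists_isPrimitive_mul_isPrimitive [NeZero (a * b)] (hab : a.Coprime b)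
    {χ : DirichletCharacter ℝ (a * b)} (hχ : χ.IsPrimitive) :
    ∃ (χ₁ : DirichletCharacter ℝ a) (χ₂ : DirichletCharacter ℝ b),
      χ₁.IsPrimitive ∧ χ₂.IsPrimitive ∧ ∀ x : ℤ, χ x = χ₁ x * χ₂ x := by
  obtain ⟨χ₁, χ₂, rfl⟩ := exists_changeLevel_mul_changeLevel hab χ
  obtain ⟨h₁, h₂⟩ := isPrimitive_of_changeLevel_mul_changeLevel hχ
  exact ⟨χ₁, χ₂, h₁, h₂, changeLevel_mul_changeLevel_apply χ₁ χ₂⟩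

lemma exists_real_dirichletCharacter [NeZero q] {χ : DirichletCharacter ℂ q} (hχ : χ.IsPrimitive)
    (hreal : ∀ n : ZMod q, (starRingEnd ℂ) (χ n) = χ n) :
    ∃ ψ : DirichletCharacter ℝ q, ψ.IsPrimitive ∧ ∀ n, χ n = ψ n := by
  have hre (n : ZMod q) : ((χ n).re : ℂ) = χ n := Complex.conj_eq_iff_re.mp (hreal n)
  let ψ : DirichletCharacter ℝ q :=
    { toFun n := (χ n).re
      map_one' := by simp
      map_mul' m n := by
        rw [map_mul, ← hre m, ← hre n, ← Complex.ofReal_mul]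
        simp only [Complex.ofReal_re]
      map_nonunit' n hn := by rw [χ.map_nonunit hn, Complex.zero_re] }
  have hψ (n : ZMod q) : χ n = ψ n := (hre n).symm
  refine ⟨ψ, ?_, hψ⟩
  have hfactors : χ.FactorsThrough ψ.conductor := by
    have hψ_ker := ψ.factorsThrough_conductor
    rw [DirichletCharacter.factorsThrough_iff_ker_unitsMap ψ.conductor_dvd_level] at hψ_ker ⊢
    intro u hu
    have hu_one := hψ_ker hu
    rw [MonoidHom.mem_ker, Units.ext_iff, MulChar.coe_toUnitHom] at hu_one ⊢
    rw [hψ, hu_one, Units.val_one, Complex.ofReal_one, Units.val_one]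
  exact ψ.conductor_dvd_level.antisymm
    (hχ.symm.dvd.trans (χ.conductor_dvd_of_mem_conductorSet hfactors))

end RealCharacters

/-! ### Character averages over cubes -/

namespace Cube

variable {k : ℕ}

/-- The product of the values of `g` at the vertices of a cube. -/
def vertexProd (g : ℤ → ℝ) (v : Cube k ℤ) : ℝ := ∏ ω, g (vertex ω v)

lemma vertexProd_mul (f g : ℤ → ℝ) :
    (vertexProd (k := k) fun x => f x * g x) = vertexProd f * vertexProd g :=
  funext fun _ => Finset.prod_mul_distrib

lemma abs_vertexProd_le_one {g : ℤ → ℝ} (hg : ∀ x, |g x| ≤ 1) (v : Cube k ℤ) :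
    |vertexProd g v| ≤ 1 := by
  rw [vertexProd, Finset.abs_prod]
  exact Finset.prod_le_one (fun _ _ => abs_nonneg _) fun ω _ => hg _

lemma factorsThrough_vertexProd {q : ℕ} (f : ZMod q → ℝ) :
    (vertexProd fun x => f x).FactorsThrough (reduce k q) := by
  intro v w hvw
  refine Finset.prod_congr rfl fun ω _ => ?_
  dsimp only
  rw [← vertex_reduce, hvw, vertex_reduce]

/-- The numerator in the bound for the average of a real primitive character over the cubes modulo
a prime power; the factor `2 ^ 2 ^ k` compensates for removing one Euler factor of the sieve. -/
def charConst (k : ℕ) : ℝ := 2 ^ 2 ^ k * (21 * (2 ^ k + 1) + (2 ^ k) ^ 2)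

lemma two_pow_mul_two_le_charConst (k : ℕ) : 2 ^ 2 ^ k * 2 ≤ charConst k := by
  have hk : (0 : ℝ) ≤ 2 ^ k := by positivity
  unfold charConst
  gcongr
  nlinarith

lemma one_le_charConst (k : ℕ) : 1 ≤ charConst k := by
  have h : (1 : ℝ) ≤ 2 ^ 2 ^ k := one_le_pow₀ one_le_two
  linarith [two_pow_mul_two_le_charConst k]

lemma abs_periodMean_character_two_pow_le {a : ℕ} {χ : DirichletCharacter ℝ (2 ^ a)}
    (hχ : χ.IsPrimitive) :
    |periodMean (2 ^ a) (vertexProd (k := k) fun x => χ x)| * 2 ^ 2 ^ k *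
      ((2 ^ a : ℕ) : ℝ) ^ (1 / 4 : ℝ) ≤ charConst k / (2 : ℝ) ^ (1 / 4 : ℝ) := by
  have hmean : |periodMean (2 ^ a) (vertexProd (k := k) fun x => χ x)| ≤ 1 :=
    abs_periodMean_le_one fun v => abs_vertexProd_le_one
      (fun x => abs_real_dirichletCharacter_le_one χ x) v
  have hroot : ((2 ^ a : ℕ) : ℝ) ^ (1 / 4 : ℝ) * 2 ^ (1 / 4 : ℝ) ≤ 2 := by
    have ha : a + 1 ≤ 4 := Nat.succ_le_succ (exponent_le_three_of_isPrimitive hχ)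
    calc ((2 ^ a : ℕ) : ℝ) ^ (1 / 4 : ℝ) * 2 ^ (1 / 4 : ℝ) = (2 ^ (a + 1)) ^ (1 / 4 : ℝ) := by
          rw [← Real.mul_rpow (by positivity) zero_le_two, pow_succ, Nat.cast_pow, Nat.cast_ofNat]
      _ ≤ (2 ^ 4) ^ (1 / 4 : ℝ) := by gcongr; exact one_le_two
      _ = 2 := by rw [← Real.rpow_natCast_mul zero_le_two]; norm_num
  rw [le_div_iff₀ (by positivity), mul_assoc]
  calc _ ≤ 1 * 2 ^ 2 ^ k * 2 := by gcongr
    _ ≤ charConst k := by rw [one_mul]; exact two_pow_mul_two_le_charConst k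

lemma abs_periodMean_character_prime_le {p : ℕ} [Fact p.Prime] {χ : DirichletCharacter ℝ p}
    (hχ : χ.IsPrimitive) :
    |periodMean p (vertexProd (k := k) fun x => χ x)| * 2 ^ 2 ^ k * (p : ℝ) ^ (1 / 4 : ℝ) ≤
      charConst k / (p : ℝ) ^ (1 / 4 : ℝ) := by
  have hp : (0 : ℝ) < p := mod_cast (Fact.out : p.Prime).pos
  have hsqrt : √p = (p : ℝ) ^ (1 / 4 : ℝ) * (p : ℝ) ^ (1 / 4 : ℝ) := by
    rw [← Real.rpow_add hp, Real.sqrt_eq_rpow]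
    norm_num
  have hmean := abs_periodMean_prod_quadraticChar_le (k := k) (p := p)
  simp only [← eq_quadraticChar_of_isPrimitive hχ] at hmean
  rw [hsqrt, le_div_iff₀ (by positivity)] at hmean
  rw [le_div_iff₀ (by positivity)]
  calc _ = 2 ^ 2 ^ k * (|periodMean p (vertexProd (k := k) fun x => χ x)| *
        ((p : ℝ) ^ (1 / 4 : ℝ) * (p : ℝ) ^ (1 / 4 : ℝ))) := by ring
    _ ≤ charConst k := by unfold charConst vertexProd; gcongr

lemma abs_periodMean_character_prime_pow_le {p a : ℕ} (hp : p.Prime) (ha : 0 < a)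
    {χ : DirichletCharacter ℝ (p ^ a)} (hχ : χ.IsPrimitive) :
    |periodMean (p ^ a) (vertexProd (k := k) fun x => χ x)| * 2 ^ 2 ^ k *
      ((p ^ a : ℕ) : ℝ) ^ (1 / 4 : ℝ) ≤ charConst k / (p : ℝ) ^ (1 / 4 : ℝ) := by
  rcases eq_or_ne p 2 with rfl | hp2
  · exact abs_periodMean_character_two_pow_le hχ
  · obtain rfl := exponent_eq_one_of_isPrimitive hp hp2 ha hχ
    have : Fact (p ^ 1).Prime := ⟨by rwa [pow_one]⟩
    simpa only [pow_one] using abs_periodMean_character_prime_le (k := k) hχ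

lemma abs_periodMean_character_le_prod {q : ℕ} (hq : q ≠ 0) {χ : DirichletCharacter ℝ q}
    (hχ : χ.IsPrimitive) :
    |periodMean q (vertexProd (k := k) fun x => χ x)| * (2 ^ 2 ^ k) ^ q.primeFactors.card *
      (q : ℝ) ^ (1 / 4 : ℝ) ≤ ∏ p ∈ q.primeFactors, charConst k / (p : ℝ) ^ (1 / 4 : ℝ) := by
  induction q using Nat.recOnPosPrimePosCoprime with
  | zero => exact absurd rfl hq
  | one =>
    simpa using abs_periodMean_le_one fun v => abs_vertexProd_le_one
      (fun x => abs_real_dirichletCharacter_le_one χ x) v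
  | prime_pow p a hp ha =>
    rw [Nat.primeFactors_prime_pow ha.ne' hp]
    simpa using abs_periodMean_character_prime_pow_le (k := k) hp ha hχ
  | coprime a b ha hb hab iha ihb =>
    have : NeZero (a * b) := ⟨hq⟩
    obtain ⟨χ₁, χ₂, hχ₁, hχ₂, hmul⟩ := exists_isPrimitive_mul_isPrimitive hab hχ
    have hmean : periodMean (a * b) (vertexProd (k := k) fun x => χ x) =
        periodMean a (vertexProd (k := k) fun x => χ₁ x) *
          periodMean b (vertexProd (k := k) fun x => χ₂ x) := by
      simp only [hmul]
      rw [vertexProd_mul, periodMean_mul (by lia) (by lia) hab (factorsThrough_vertexProd _)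
        (factorsThrough_vertexProd _)]
    rw [hab.primeFactors_mul, Finset.prod_union hab.disjoint_primeFactors,
      Finset.card_union_of_disjoint hab.disjoint_primeFactors, hmean, abs_mul, pow_add,
      Nat.cast_mul, Real.mul_rpow a.cast_nonneg b.cast_nonneg]
    have h₁ := iha (by lia) hχ₁
    calc _ = |periodMean a (vertexProd (k := k) fun x => χ₁ x)| *
            (2 ^ 2 ^ k) ^ a.primeFactors.card * (a : ℝ) ^ (1 / 4 : ℝ) *
          (|periodMean b (vertexProd (k := k) fun x => χ₂ x)| *
            (2 ^ 2 ^ k) ^ b.primeFactors.card * (b : ℝ) ^ (1 / 4 : ℝ)) := by ring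
      _ ≤ _ := mul_le_mul h₁ (ihb (by lia) hχ₂) (by positivity) (le_trans (by positivity) h₁)

lemma prod_div_rpow_le {E e : ℝ} (hE : 1 ≤ E) (he : 0 < e) (S : Finset ℕ) :
    ∏ n ∈ S, E / (n : ℝ) ^ e ≤ E ^ ⌈E ^ e⁻¹⌉₊ := by
  have hfactor (n : ℕ) : E / (n : ℝ) ^ e ≤ if n < ⌈E ^ e⁻¹⌉₊ then E else 1 := by
    split_ifs with hn
    · rcases n.eq_zero_or_pos with rfl | hpos
      · rw [Nat.cast_zero, Real.zero_rpow he.ne', div_zero]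
        positivity
      · exact div_le_self (by positivity) (Real.one_le_rpow (mod_cast hpos) he.le)
    · have hroot : E ^ e⁻¹ ≤ n := Nat.ceil_le.mp (not_lt.mp hn)
      exact div_le_one_of_le₀ ((Real.rpow_inv_le_iff_of_pos (by positivity) (by positivity) he).mp
        hroot) (by positivity)
  calc ∏ n ∈ S, E / (n : ℝ) ^ e ≤ ∏ n ∈ S, if n < ⌈E ^ e⁻¹⌉₊ then E else 1 :=
        Finset.prod_le_prod (fun n _ => by positivity) fun n _ => hfactor n
    _ = E ^ (S.filter (· < ⌈E ^ e⁻¹⌉₊)).card := by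
        rw [Finset.prod_ite, Finset.prod_const, Finset.prod_const_one, mul_one]
    _ ≤ E ^ ⌈E ^ e⁻¹⌉₊ := by
        refine pow_le_pow_right₀ hE ((Finset.card_le_card fun n hn => ?_).trans_eq
          (Finset.card_range _))
        exact Finset.mem_range.mpr (Finset.mem_filter.mp hn).2

/-- The constant does not depend on `q` because the local factors `charConst k / p ^ (1 / 4)` are at
most `1` for all but boundedly many `p`. -/
theorem exists_abs_periodMean_character_le (k : ℕ) :
    ∃ C : ℝ, 0 < C ∧ ∀ q : ℕ, q ≠ 0 → ∀ χ : DirichletCharacter ℝ q, χ.IsPrimitive →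
      |periodMean q (vertexProd (k := k) fun x => χ x)| * (2 ^ 2 ^ k) ^ q.primeFactors.card *
        (q : ℝ) ^ (1 / 4 : ℝ) ≤ C := by
  have hE := one_le_charConst k
  exact ⟨_, by positivity, fun q hq χ hχ => (abs_periodMean_character_le_prod hq hχ).trans
    (prod_div_rpow_le hE (by norm_num) _)⟩

end Cube

/-! ### Decreasing weights and equidistribution -/

lemma abs_prod_sub_prod_le {ι : Type*} (s : Finset ι) {a b : ι → ℝ} (ha : ∀ i ∈ s, |a i| ≤ 1)
    (hb : ∀ i ∈ s, |b i| ≤ 1) : |∏ i ∈ s, a i - ∏ i ∈ s, b i| ≤ ∑ i ∈ s, |a i - b i| := by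
  induction s using Finset.induction_on with
  | empty => simp
  | insert i s hi ih =>
    rw [Finset.forall_mem_insert] at ha hb
    have hprod : |∏ j ∈ s, a j| ≤ 1 := by
      rw [Finset.abs_prod]
      exact Finset.prod_le_one (fun _ _ => abs_nonneg _) ha.2
    rw [Finset.prod_insert hi, Finset.prod_insert hi, Finset.sum_insert hi]
    calc |a i * ∏ j ∈ s, a j - b i * ∏ j ∈ s, b j|
        = |(a i - b i) * ∏ j ∈ s, a j + b i * (∏ j ∈ s, a j - ∏ j ∈ s, b j)| := by ring_nf
      _ ≤ |a i - b i| * |∏ j ∈ s, a j| + |b i| * |∏ j ∈ s, a j - ∏ j ∈ s, b j| := by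
        rw [← abs_mul, ← abs_mul]
        exact abs_add_le _ _
      _ ≤ |a i - b i| + ∑ j ∈ s, |a j - b j| := add_le_add
        (mul_le_of_le_one_right (abs_nonneg _) hprod)
        ((mul_le_of_le_one_left (abs_nonneg _) hb.1).trans (ih ha.2 hb.2))

/-- A decreasing weight on `{1, …, M}` with values in `[0, 1]`, extended by `0` to `ℤ`. -/
structure IsDecreasingWeight (M : ℕ) (F : ℤ → ℝ) : Prop where
  nonneg (x : ℤ) : 0 ≤ F x
  le_one (x : ℤ) : F x ≤ 1
  mem_Icc {x : ℤ} : F x ≠ 0 → x ∈ Finset.Icc (1 : ℤ) M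
  antitoneOn : AntitoneOn F (Set.Ici 1)

namespace IsDecreasingWeight

variable {M : ℕ} {F : ℤ → ℝ}

lemma abs_le_one (hF : IsDecreasingWeight M F) (x : ℤ) : |F x| ≤ 1 := by
  rw [abs_of_nonneg (hF.nonneg x)]
  exact hF.le_one x

lemma summable (hF : IsDecreasingWeight M F) : Summable F :=
  summable_of_ne_finset_zero fun _ hx => by_contra fun hne => hx (hF.mem_Icc hne)

lemma abs_add_sub_le (hF : IsDecreasingWeight M F) (x : ℤ) (σ : ℕ) :
    |F (x + σ) - F x| ≤
      F x - F (x + σ) + 2 * (Set.Icc (1 : ℤ) σ).indicator (1 : ℤ → ℝ) (x + σ) := by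
  have hle := hF.le_one (x + σ)
  simp only [Set.indicator_apply, Pi.one_apply]
  by_cases hx : 1 ≤ x
  · have hanti : F (x + σ) ≤ F x := hF.antitoneOn hx (show (1 : ℤ) ≤ x + σ by lia) (by lia)
    rw [abs_of_nonpos (by linarith)]
    split_ifs <;> linarith
  · have hx_zero : F x = 0 := by
      by_contra hne
      exact hx (Finset.mem_Icc.mp (hF.mem_Icc hne)).1
    rw [hx_zero, sub_zero, abs_of_nonneg (hF.nonneg _)]
    split_ifs with hmem
    · linarith
    · have hxσ_zero : F (x + σ) = 0 := by
        by_contra hne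
        have := Finset.mem_Icc.mp (hF.mem_Icc hne)
        exact hmem (Set.mem_Icc.mpr (by lia))
      linarith

lemma sum_abs_add_sub_le (hF : IsDecreasingWeight M F) (σ : ℕ) (s : Finset ℤ) :
    ∑ x ∈ s, |F (x + σ) - F x| ≤ 2 * σ := by
  have hshift {f : ℤ → ℝ} {a : ℝ} (hf : HasSum f a) : HasSum (fun x => f (x + σ)) a :=
    (Equiv.addRight (σ : ℤ)).hasSum_iff.mpr hf
  have hindicator : HasSum ((Set.Icc (1 : ℤ) σ).indicator (1 : ℤ → ℝ)) σ := by
    simpa using hasSum_subtype_iff_indicator.mp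
      (Finset.hasSum (Finset.Icc (1 : ℤ) σ) (1 : ℤ → ℝ))
  have hmajorant := (hF.summable.hasSum.sub (hshift hF.summable.hasSum)).add
    ((hshift hindicator).mul_left 2)
  have hbound := sum_le_hasSum s
    (fun x _ => (abs_nonneg _).trans (hF.abs_add_sub_le x σ)) hmajorant
  have hsum := Finset.sum_le_sum fun x (_ : x ∈ s) => hF.abs_add_sub_le x σ
  linarith

end IsDecreasingWeight

namespace Cube

open scoped BigOperators

variable {k M m : ℕ} {F : ℤ → ℝ}

/-- The integer cubes all of whose parameters lie in `{-R, …, R}`. -/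
noncomputable def symmBox (k R : ℕ) : Finset (Cube k ℤ) := Finset.Icc (-(R : Cube k ℤ)) R

lemma mem_symmBox {R : ℕ} {v : Cube k ℤ} :
    v ∈ symmBox k R ↔ (-(R : ℤ) ≤ v.1 ∧ v.1 ≤ R) ∧ ∀ i, -(R : ℤ) ≤ v.2 i ∧ v.2 i ≤ R := by
  simp only [symmBox, Finset.mem_Icc, Prod.le_def, Pi.le_def, Prod.fst_neg, Prod.snd_neg,
    Prod.fst_natCast, Prod.snd_natCast, Pi.neg_apply, Pi.natCast_apply]
  grind

lemma symmBox_eq_product (k R : ℕ) :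
    symmBox k R = Finset.Icc (-(R : ℤ)) R ×ˢ Finset.Icc (-(R : Fin k → ℤ)) R :=
  (Finset.Icc_product_Icc _ _ _ _).symm

lemma card_pi_Icc_neg (k R : ℕ) : (Finset.Icc (-(R : Fin k → ℤ)) R).card = (2 * R + 1) ^ k := by
  simp only [Pi.card_Icc, Pi.neg_apply, Pi.natCast_apply, Int.card_Icc, Finset.prod_const,
    Finset.card_univ, Fintype.card_fin]
  congr 1
  lia

lemma mem_symmBox_of_vertexProd_ne_zero (hF : IsDecreasingWeight M F) {v : Cube k ℤ}
    (hv : vertexProd F v ≠ 0) : v ∈ symmBox k M := by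
  rw [vertexProd, Finset.prod_ne_zero_iff] at hv
  have hbase := hF.mem_Icc (hv (fun _ => false) (Finset.mem_univ _))
  simp only [vertex_apply, Bool.false_eq_true, if_false, Finset.sum_const_zero, add_zero,
    Finset.mem_Icc] at hbase
  refine mem_symmBox.mpr ⟨by lia, fun i => ?_⟩
  have hside := hF.mem_Icc (hv (fun j => decide (j = i)) (Finset.mem_univ _))
  simp only [vertex_apply, decide_eq_true_eq, Finset.sum_ite_eq', Finset.mem_univ, if_true,
    Finset.mem_Icc] at hside
  lia

lemma summable_vertexProd_mul (hF : IsDecreasingWeight M F) (G : Cube k ℤ → ℝ) :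
    Summable fun v => vertexProd F v * G v :=
  summable_of_ne_finset_zero fun _ hv => by_contra fun hne =>
    hv (mem_symmBox_of_vertexProd_ne_zero hF (left_ne_zero_of_mul hne))

/-- The sum of `G` over all integer cubes, weighted by `F` at every vertex. -/
noncomputable def weightedSum (F : ℤ → ℝ) (G : Cube k ℤ → ℝ) : ℝ := ∑' v, vertexProd F v * G v

lemma weightedSum_const_mul (c : ℝ) (G : Cube k ℤ → ℝ) :
    weightedSum F (fun v => c * G v) = c * weightedSum F G := by
  rw [weightedSum, weightedSum, ← tsum_mul_left]
  exact tsum_congr fun v => mul_left_comm _ _ _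

lemma weightedSum_sub (hF : IsDecreasingWeight M F) (G H : Cube k ℤ → ℝ) :
    weightedSum F (G - H) = weightedSum F G - weightedSum F H := by
  rw [weightedSum, weightedSum, weightedSum,
    ← (summable_vertexProd_mul hF G).tsum_sub (summable_vertexProd_mul hF H)]
  exact tsum_congr fun v => mul_sub _ _ _

lemma weightedSum_sum (hF : IsDecreasingWeight M F) {ι : Type*} (s : Finset ι)
    (G : ι → Cube k ℤ → ℝ) : weightedSum F (∑ i ∈ s, G i) = ∑ i ∈ s, weightedSum F (G i) := by
  simp only [weightedSum]
  rw [← Summable.tsum_finsetSum fun i _ => summable_vertexProd_mul hF (G i)]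
  exact tsum_congr fun v => by rw [Finset.sum_apply, Finset.mul_sum]

lemma abs_weightedSum_le (hF : IsDecreasingWeight M F) {G H : Cube k ℤ → ℝ}
    (hGH : ∀ v, |G v| ≤ H v) : |weightedSum F G| ≤ weightedSum F H := by
  refine tsum_of_norm_bounded (f := fun v => vertexProd F v * G v)
    (summable_vertexProd_mul hF H).hasSum fun v => ?_
  have hnonneg : 0 ≤ vertexProd F v := Finset.prod_nonneg fun _ _ => hF.nonneg _
  rw [Real.norm_eq_abs, abs_mul, abs_of_nonneg hnonneg]
  exact mul_le_mul_of_nonneg_left (hGH v) hnonneg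

lemma weightedSum_one_nonneg (hF : IsDecreasingWeight M F) :
    0 ≤ weightedSum F (1 : Cube k ℤ → ℝ) :=
  (abs_nonneg _).trans (abs_weightedSum_le hF fun _ => abs_one.le)

lemma weightedSum_add_right (s : Cube k ℤ) (G : Cube k ℤ → ℝ) :
    ∑' v, vertexProd F (v + s) * G (v + s) = weightedSum F G :=
  (Equiv.addRight s).tsum_eq fun v => vertexProd F v * G v

lemma exists_vertex_eq_natCast {s : Cube k ℤ} (hs : s ∈ periodBox k m) (ω : Fin k → Bool) :
    ∃ σ : ℕ, vertex ω s = σ ∧ σ ≤ (k + 1) * m := by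
  rw [mem_periodBox] at hs
  have hterm (i : Fin k) : 0 ≤ (if ω i then s.2 i else 0) ∧ (if ω i then s.2 i else 0) ≤ m := by
    have := hs.2 i
    split_ifs <;> lia
  have hnonneg := Finset.sum_nonneg fun i (_ : i ∈ Finset.univ) => (hterm i).1
  have hle := Finset.sum_le_sum fun i (_ : i ∈ Finset.univ) => (hterm i).2
  rw [Finset.sum_const, Finset.card_univ, Fintype.card_fin, nsmul_eq_mul] at hle
  refine ⟨(vertex ω s).toNat, ?_, ?_⟩ <;> rw [vertex_apply] <;> grind

lemma sum_symmBox_abs_vertex_add_sub_le (hF : IsDecreasingWeight M F) (R σ : ℕ)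
    (ω : Fin k → Bool) :
    ∑ v ∈ symmBox k R, |F (vertex ω v + σ) - F (vertex ω v)| ≤ (2 * R + 1) ^ k * (2 * σ) := by
  have hfiber (h : Fin k → ℤ) : ∑ x ∈ Finset.Icc (-(R : ℤ)) R,
      |F (vertex ω (x, h) + σ) - F (vertex ω (x, h))| ≤ 2 * σ := by
    calc _ = ∑ y ∈ (Finset.Icc (-(R : ℤ)) R).map
          (addRightEmbedding (∑ i, if ω i then h i else 0)), |F (y + σ) - F y| :=
        (Finset.sum_map _ _ _).symm
      _ ≤ 2 * σ := hF.sum_abs_add_sub_le σ _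
  rw [symmBox_eq_product, Finset.sum_product_right]
  refine (Finset.sum_le_card_nsmul _ _ _ fun h _ => hfiber h).trans_eq ?_
  rw [card_pi_Icc_neg, nsmul_eq_mul]
  push_cast
  rfl

/-- The error in the equidistribution of integer cubes with vertices in `{1, …, M}` among the
residue classes modulo `m`. -/
def equidistributionError (k M m : ℕ) : ℝ := 2 ^ k * ((4 * M + 1) ^ k * (2 * ((k + 1) * m)))

lemma equidistributionError_nonneg (k M m : ℕ) : 0 ≤ equidistributionError k M m := by
  unfold equidistributionError
  positivity

lemma equidistributionError_le_of_le {m' : ℕ} (h : m ≤ m') :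
    equidistributionError k M m ≤ equidistributionError k M m' := by
  unfold equidistributionError
  gcongr

lemma sum_symmBox_abs_vertexProd_add_sub_le (hF : IsDecreasingWeight M F) (R : ℕ) {s : Cube k ℤ}
    (hs : s ∈ periodBox k m) :
    ∑ v ∈ symmBox k R, |vertexProd F (v + s) - vertexProd F v| ≤
      2 ^ k * ((2 * R + 1) ^ k * (2 * ((k + 1) * m))) := by
  have hvertex (ω : Fin k → Bool) :
      ∑ v ∈ symmBox k R, |F (vertex ω (v + s)) - F (vertex ω v)| ≤
        (2 * R + 1) ^ k * (2 * ((k + 1) * m)) := by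
    obtain ⟨σ, hσ, hle⟩ := exists_vertex_eq_natCast hs ω
    simp only [map_add, hσ]
    refine (sum_symmBox_abs_vertex_add_sub_le hF R σ ω).trans ?_
    gcongr
    exact_mod_cast hle
  calc _ ≤ ∑ v ∈ symmBox k R, ∑ ω : Fin k → Bool, |F (vertex ω (v + s)) - F (vertex ω v)| :=
        Finset.sum_le_sum fun v _ => abs_prod_sub_prod_le _ (fun _ _ => hF.abs_le_one _)
          fun _ _ => hF.abs_le_one _
    _ = ∑ ω : Fin k → Bool, ∑ v ∈ symmBox k R, |F (vertex ω (v + s)) - F (vertex ω v)| :=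
        Finset.sum_comm
    _ ≤ _ := (Finset.sum_le_card_nsmul _ _ _ fun ω _ => hvertex ω).trans_eq (by simp)

lemma abs_weightedSum_sub_weightedSum_add_le (hF : IsDecreasingWeight M F) (hmM : m ≤ M)
    {G : Cube k ℤ → ℝ} (hG : ∀ v, |G v| ≤ 1) {s : Cube k ℤ} (hs : s ∈ periodBox k m) :
    |weightedSum F G - weightedSum F fun v => G (v + s)| ≤ equidistributionError k M m := by
  have hsummable : Summable fun v => vertexProd F (v + s) * G (v + s) :=
    (Equiv.addRight s).summable_iff.mpr (summable_vertexProd_mul hF G)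
  have hsupp (v : Cube k ℤ) (hv : v ∉ symmBox k (2 * M)) :
      vertexProd F (v + s) * G (v + s) - vertexProd F v * G (v + s) = 0 := by
    rw [mem_symmBox] at hv
    rw [mem_periodBox] at hs
    have hv_zero : vertexProd F v = 0 := by
      by_contra hne
      have hmem := mem_symmBox.mp (mem_symmBox_of_vertexProd_ne_zero hF hne)
      exact hv ⟨by lia, fun i => by have := hmem.2 i; lia⟩
    have hvs_zero : vertexProd F (v + s) = 0 := by
      by_contra hne
      have hmem := mem_symmBox.mp (mem_symmBox_of_vertexProd_ne_zero hF hne)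
      simp only [Prod.fst_add, Prod.snd_add, Pi.add_apply] at hmem
      exact hv ⟨by lia, fun i => by have := hmem.2 i; have := hs.2 i; lia⟩
    rw [hv_zero, hvs_zero, zero_mul, sub_zero]
  calc _ = |∑ v ∈ symmBox k (2 * M),
          (vertexProd F (v + s) * G (v + s) - vertexProd F v * G (v + s))| := by
        rw [← tsum_eq_sum (L := .unconditional _) hsupp,
          hsummable.tsum_sub (summable_vertexProd_mul hF _), weightedSum_add_right]
        rfl
    _ ≤ ∑ v ∈ symmBox k (2 * M), |vertexProd F (v + s) - vertexProd F v| := by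
        refine (Finset.abs_sum_le_sum_abs _ _).trans (Finset.sum_le_sum fun v _ => ?_)
        rw [← sub_mul, abs_mul]
        exact mul_le_of_le_one_right (abs_nonneg _) (hG _)
    _ ≤ equidistributionError k M m := by
        refine (sum_symmBox_abs_vertexProd_add_sub_le hF (2 * M) hs).trans_eq ?_
        rw [equidistributionError]
        push_cast
        ring

/-- Equidistribution of cubes: translating the summation variable by the whole period box replaces
`G` by its mean, and the weight hardly notices the translation. -/
theorem abs_weightedSum_sub_mul_periodMean_le [NeZero m] (hF : IsDecreasingWeight M F)
    (hmM : m ≤ M) {G : Cube k ℤ → ℝ} (hG : G.FactorsThrough (reduce k m)) (hG1 : ∀ v, |G v| ≤ 1) :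
    |weightedSum F G - weightedSum F (1 : Cube k ℤ → ℝ) * periodMean m G| ≤
      equidistributionError k M m := by
  have hmean : weightedSum F (1 : Cube k ℤ → ℝ) * periodMean m G =
      𝔼 s ∈ periodBox k m, weightedSum F fun v => G (v + s) := by
    rw [weightedSum, ← tsum_mul_right, Finset.expect, ← weightedSum_sum hF, weightedSum,
      ← tsum_const_smul'']
    refine tsum_congr fun v => ?_
    rw [← expect_periodBox_add hG v, Finset.expect, Finset.sum_apply, Pi.one_apply, mul_one,
      mul_smul_comm]
  rw [hmean, ← Finset.expect_const (s := periodBox k m) ⟨0, zero_mem_periodBox k⟩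
    (weightedSum F G), ← Finset.expect_sub_distrib]
  exact (Finset.abs_expect_le _ _).trans (Finset.expect_le ⟨0, zero_mem_periodBox k⟩
    fun s hs => abs_weightedSum_sub_weightedSum_add_le hF hmM hG1 hs)

end Cube

/-! ### Bonferroni inequalities -/

section Bonferroni

variable {ι R : Type*}

/-- The `j`-th elementary symmetric sum of the family `(f i)` for `i ∈ s`: the value of
`Multiset.esymm` on a family indexed by a finset. -/
def elemSymm [CommSemiring R] (s : Finset ι) (f : ι → R) (j : ℕ) : R :=
  ∑ S ∈ s.powersetCard j, ∏ i ∈ S, f i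

/-- The inclusion-exclusion expansion of `∏ i ∈ s, (1 - f i)`, truncated to its first `r` terms. -/
def bonferroniSum [CommRing R] (s : Finset ι) (f : ι → R) (r : ℕ) : R :=
  ∑ j ∈ Finset.range r, (-1) ^ j * elemSymm s f j

lemma elemSymm_zero [CommSemiring R] (s : Finset ι) (f : ι → R) : elemSymm s f 0 = 1 := by
  simp [elemSymm]

lemma elemSymm_empty_succ [CommSemiring R] (f : ι → R) (j : ℕ) : elemSymm ∅ f (j + 1) = 0 := by
  rw [elemSymm, Finset.powersetCard_eq_empty.mpr (by simp), Finset.sum_empty]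

lemma elemSymm_insert [CommSemiring R] [DecidableEq ι] {s : Finset ι} {a : ι} (ha : a ∉ s)
    (f : ι → R) (j : ℕ) :
    elemSymm (insert a s) f (j + 1) = elemSymm s f (j + 1) + f a * elemSymm s f j := by
  simp only [elemSymm, ← Finset.esymm_map_val, Multiset.esymm, Finset.insert_val_of_notMem ha,
    Multiset.map_cons, Multiset.powersetCard_cons, Multiset.map_add, Multiset.sum_add,
    Multiset.map_map, Function.comp_def, Multiset.prod_cons, Multiset.sum_map_mul_left]

lemma bonferroniSum_insert [CommRing R] [DecidableEq ι] {s : Finset ι} {a : ι} (ha : a ∉ s)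
    (f : ι → R) (r : ℕ) :
    bonferroniSum (insert a s) f (r + 1) =
      bonferroniSum s f (r + 1) - f a * bonferroniSum s f r := by
  simp only [bonferroniSum, Finset.sum_range_succ' _ r, elemSymm_insert ha, elemSymm_zero, mul_add,
    Finset.sum_add_distrib]
  have hshift : ∑ j ∈ Finset.range r, (-1) ^ (j + 1) * (f a * elemSymm s f j) =
      -(f a * ∑ j ∈ Finset.range r, (-1) ^ j * elemSymm s f j) := by
    rw [Finset.mul_sum, ← Finset.sum_neg_distrib]
    exact Finset.sum_congr rfl fun j _ => by ring
  rw [hshift]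
  ring

variable [CommRing R] [LinearOrder R] [IsStrictOrderedRing R]

lemma neg_one_pow_mul_prod_sub_bonferroniSum_mem_Icc (s : Finset ι) {f : ι → R}
    (hf : ∀ i ∈ s, f i ∈ Set.Icc 0 1) (r : ℕ) :
    (-1) ^ r * (∏ i ∈ s, (1 - f i) - bonferroniSum s f r) ∈ Set.Icc 0 (elemSymm s f r) := by
  classical
  induction s using Finset.induction_on generalizing r with
  | empty =>
    cases r with
    | zero => simp [bonferroniSum, elemSymm]
    | succ r => simp [bonferroniSum, elemSymm_zero, elemSymm_empty_succ, Finset.sum_range_succ']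
  | insert a s ha ih =>
    have hprod : ∏ i ∈ insert a s, (1 - f i) ∈ Set.Icc 0 1 :=
      ⟨Finset.prod_nonneg fun i hi => sub_nonneg.mpr (hf i hi).2,
        Finset.prod_le_one (fun i hi => sub_nonneg.mpr (hf i hi).2)
          fun i hi => sub_le_self 1 (hf i hi).1⟩
    rw [Finset.forall_mem_insert] at hf
    cases r with
    | zero => simpa [bonferroniSum, elemSymm_zero] using hprod
    | succ r =>
      obtain ⟨hnonneg, hle⟩ := ih hf.2 r
      obtain ⟨hnonneg', hle'⟩ := ih hf.2 (r + 1)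
      have hrec : (-1) ^ (r + 1) *
          (∏ i ∈ insert a s, (1 - f i) - bonferroniSum (insert a s) f (r + 1)) =
          (-1) ^ (r + 1) * (∏ i ∈ s, (1 - f i) - bonferroniSum s f (r + 1)) +
            f a * ((-1) ^ r * (∏ i ∈ s, (1 - f i) - bonferroniSum s f r)) := by
        rw [Finset.prod_insert ha, bonferroniSum_insert ha]
        ring
      rw [hrec, elemSymm_insert ha]
      exact ⟨add_nonneg hnonneg' (mul_nonneg hf.1.1 hnonneg),
        add_le_add hle' (mul_le_mul_of_nonneg_left hle hf.1.1)⟩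

theorem abs_prod_one_sub_sub_bonferroniSum_le (s : Finset ι) {f : ι → R}
    (hf : ∀ i ∈ s, f i ∈ Set.Icc 0 1) (r : ℕ) :
    |∏ i ∈ s, (1 - f i) - bonferroniSum s f r| ≤ elemSymm s f r := by
  obtain ⟨hnonneg, hle⟩ := neg_one_pow_mul_prod_sub_bonferroniSum_mem_Icc s hf r
  rwa [← abs_of_nonneg hnonneg, abs_mul, abs_neg_one_pow, one_mul] at hle

lemma abs_bonferroniSum_le (s : Finset ι) {f : ι → R} (hf : ∀ i ∈ s, f i ∈ Set.Icc 0 1) (r : ℕ) :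
    |bonferroniSum s f r| ≤ ∏ i ∈ s, (1 - f i) + elemSymm s f r := by
  have hprod : 0 ≤ ∏ i ∈ s, (1 - f i) := Finset.prod_nonneg fun i hi => sub_nonneg.mpr (hf i hi).2
  have := abs_sub_abs_le_abs_sub (bonferroniSum s f r) (∏ i ∈ s, (1 - f i))
  rw [abs_sub_comm, abs_of_nonneg hprod] at this
  linarith [abs_prod_one_sub_sub_bonferroniSum_le s hf r]

end Bonferroni

lemma elemSymm_mul_pow_le_exp {ι : Type*} (s : Finset ι) {f : ι → ℝ} (hf : ∀ i ∈ s, 0 ≤ f i)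
    {y : ℝ} (hy : 0 ≤ y) (r : ℕ) : elemSymm s f r * y ^ r ≤ Real.exp (y * ∑ i ∈ s, f i) := by
  calc elemSymm s f r * y ^ r = ∑ S ∈ s.powersetCard r, ∏ i ∈ S, y * f i := by
        rw [elemSymm, Finset.sum_mul]
        refine Finset.sum_congr rfl fun S hS => ?_
        rw [Finset.prod_mul_distrib, Finset.prod_const, (Finset.mem_powersetCard.mp hS).2, mul_comm]
    _ ≤ ∑ S ∈ s.powerset, ∏ i ∈ S, y * f i :=
        Finset.sum_le_sum_of_subset_of_nonneg
          (fun S hS => Finset.mem_powerset.mpr (Finset.mem_powersetCard.mp hS).1)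
          fun S hS _ => Finset.prod_nonneg fun i hi =>
            mul_nonneg hy (hf i (Finset.mem_powerset.mp hS hi))
    _ = ∏ i ∈ s, (1 + y * f i) := (Finset.prod_one_add s).symm
    _ ≤ ∏ i ∈ s, Real.exp (y * f i) :=
        Finset.prod_le_prod (fun i hi => add_nonneg zero_le_one (mul_nonneg hy (hf i hi)))
          fun i _ => by linarith [Real.add_one_le_exp (y * f i)]
    _ = Real.exp (y * ∑ i ∈ s, f i) := by rw [← Real.exp_sum, Finset.mul_sum]

lemma sum_inv_le_one_add_log {P : Finset ℕ} {Q : ℕ} (hP : P ⊆ Finset.Icc 1 Q) :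
    ∑ p ∈ P, (p : ℝ)⁻¹ ≤ 1 + Real.log Q := by
  have hharmonic := harmonic_le_one_add_log Q
  rw [harmonic_eq_sum_Icc, Rat.cast_sum] at hharmonic
  simp only [Rat.cast_inv, Rat.cast_natCast] at hharmonic
  exact (Finset.sum_le_sum_of_subset_of_nonneg hP fun _ _ _ => by positivity).trans hharmonic

lemma elemSymm_le_exp {P : Finset ℕ} {Q : ℕ} (hP : P ⊆ Finset.Icc 1 Q) {f : ℕ → ℝ} {B : ℝ}
    (hf : ∀ p ∈ P, f p ∈ Set.Icc 0 (B / p)) (hB : 0 ≤ B) (r : ℕ) :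
    elemSymm P f r ≤ Real.exp (-r + 3 * B * (1 + Real.log Q)) := by
  have hsum_nonneg : 0 ≤ ∑ p ∈ P, f p := Finset.sum_nonneg fun p hp => (hf p hp).1
  have hsum : ∑ p ∈ P, f p ≤ B * (1 + Real.log Q) := by
    refine (Finset.sum_le_sum fun p hp => (hf p hp).2).trans ?_
    simp only [div_eq_mul_inv, ← Finset.mul_sum]
    exact mul_le_mul_of_nonneg_left (sum_inv_le_one_add_log hP) hB
  have hexp : Real.exp 1 * ∑ p ∈ P, f p ≤ 3 * B * (1 + Real.log Q) := by
    rw [mul_assoc]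
    exact mul_le_mul (by linarith [Real.exp_one_lt_d9]) hsum hsum_nonneg (by norm_num)
  have hrankin := elemSymm_mul_pow_le_exp P (fun p hp => (hf p hp).1) (Real.exp_pos 1).le r
  rw [← Real.exp_nat_mul, mul_one] at hrankin
  rw [Real.exp_add, Real.exp_neg, inv_mul_eq_div, le_div_iff₀ (Real.exp_pos _)]
  exact hrankin.trans (Real.exp_le_exp.mpr hexp)

/-! ### The sieve -/

namespace Cube

variable {k M q Q r : ℕ} {F : ℤ → ℝ} {G : Cube k ℤ → ℝ} {P : Finset ℕ}

lemma mul_prod_le_pow (hqQ : q ≤ Q) {S : Finset ℕ} (hSQ : ∀ p ∈ S, p ≤ Q) (hS : S.card ≤ r)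
    (hq : q ≠ 0) : q * ∏ p ∈ S, p ≤ Q ^ (r + 1) := by
  rw [pow_succ']
  exact Nat.mul_le_mul hqQ ((Finset.prod_le_pow_card S _ Q hSQ).trans
    (Nat.pow_le_pow_right (hq.bot_lt.trans_le hqQ) hS))

lemma abs_mul_prod_dvdIndicator_le_one (hG : ∀ v, |G v| ≤ 1) (S : Finset ℕ) (v : Cube k ℤ) :
    |(G * ∏ p ∈ S, dvdIndicator (k := k) p) v| ≤ 1 := by
  rw [Pi.mul_apply, abs_mul, Finset.prod_apply, Finset.abs_prod]
  exact mul_le_one₀ (hG v) (Finset.prod_nonneg fun _ _ => abs_nonneg _)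
    (Finset.prod_le_one (fun _ _ => abs_nonneg _) fun p _ => abs_dvdIndicator_le_one p v)

lemma abs_weightedSum_mul_prod_dvdIndicator_sub_le (hF : IsDecreasingWeight M F) (hq : q ≠ 0)
    (hqQ : q ≤ Q) (hP : ∀ p ∈ P, p.Prime ∧ p ≤ Q ∧ ¬ p ∣ q) (hPr : P.card ≤ r)
    (hM : Q ^ (r + 1) ≤ M) (hG : G.FactorsThrough (reduce k q)) (hG1 : ∀ v, |G v| ≤ 1) :
    |weightedSum F (G * ∏ p ∈ P, dvdIndicator p) - weightedSum F (1 : Cube k ℤ → ℝ) *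
      (periodMean q G * ∏ p ∈ P, dvdDensity k p)| ≤ equidistributionError k M (Q ^ (r + 1)) := by
  have hprod : ∏ p ∈ P, p ≠ 0 := Finset.prod_ne_zero_iff.mpr fun p hp => (hP p hp).1.ne_zero
  have hcop : q.Coprime (∏ p ∈ P, p) := Nat.Coprime.prod_right fun p hp =>
    ((hP p hp).1.coprime_iff_not_dvd.mpr (hP p hp).2.2).symm
  have hle : q * ∏ p ∈ P, p ≤ Q ^ (r + 1) :=
    mul_prod_le_pow hqQ (fun p hp => (hP p hp).2.1) hPr hq
  have hperiodic : (∏ p ∈ P, dvdIndicator (k := k) p).FactorsThrough (reduce k (∏ p ∈ P, p)) :=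
    factorsThrough_reduce_prod fun p _ => factorsThrough_dvdIndicator k p
  have : NeZero (q * ∏ p ∈ P, p) := ⟨mul_ne_zero hq hprod⟩
  have hequi := abs_weightedSum_sub_mul_periodMean_le hF (hle.trans hM)
    (factorsThrough_reduce_mul hG hperiodic) (abs_mul_prod_dvdIndicator_le_one hG1 P)
  rw [periodMean_mul hq hprod hcop hG hperiodic,
    periodMean_prod (fun p hp => (hP p hp).1) fun p _ => factorsThrough_dvdIndicator k p] at hequi
  exact hequi.trans (equidistributionError_le_of_le hle)

lemma card_powersetCard_le_pow (hP : P ⊆ Finset.Icc 1 Q) (hQ : 1 ≤ Q) {j : ℕ} (hj : j ≤ r) :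
    (P.powersetCard j).card ≤ Q ^ r := by
  have hcard : P.card ≤ Q := (Finset.card_le_card hP).trans_eq (Nat.card_Icc 1 Q)
  rw [Finset.card_powersetCard]
  exact (Nat.choose_le_pow _ _).trans
    ((Nat.pow_le_pow_left hcard j).trans (Nat.pow_le_pow_right hQ hj))

lemma subset_Icc_of_prime_le (hP : ∀ p ∈ P, p.Prime ∧ p ≤ Q ∧ ¬ p ∣ q) : P ⊆ Finset.Icc 1 Q :=
  fun p hp => Finset.mem_Icc.mpr ⟨(hP p hp).1.one_le, (hP p hp).2.1⟩

lemma abs_weightedSum_mul_elemSymm_sub_le (hF : IsDecreasingWeight M F) (hq : q ≠ 0)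
    (hqQ : q ≤ Q) (hP : ∀ p ∈ P, p.Prime ∧ p ≤ Q ∧ ¬ p ∣ q) (hM : Q ^ (r + 1) ≤ M)
    (hG : G.FactorsThrough (reduce k q)) (hG1 : ∀ v, |G v| ≤ 1) {j : ℕ} (hj : j ≤ r) :
    |weightedSum F (G * elemSymm P dvdIndicator j) - weightedSum F (1 : Cube k ℤ → ℝ) *
      (periodMean q G * elemSymm P (dvdDensity k) j)| ≤
        Q ^ r * equidistributionError k M (Q ^ (r + 1)) := by
  rw [elemSymm, elemSymm, Finset.mul_sum, Finset.mul_sum, Finset.mul_sum, weightedSum_sum hF,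
    ← Finset.sum_sub_distrib]
  calc _ ≤ ∑ _ ∈ P.powersetCard j, equidistributionError k M (Q ^ (r + 1)) := by
        refine (Finset.abs_sum_le_sum_abs _ _).trans (Finset.sum_le_sum fun S hS => ?_)
        obtain ⟨hSP, hSj⟩ := Finset.mem_powersetCard.mp hS
        exact abs_weightedSum_mul_prod_dvdIndicator_sub_le hF hq hqQ (fun p hp => hP p (hSP hp))
          (hSj.le.trans hj) hM hG hG1
    _ ≤ Q ^ r * equidistributionError k M (Q ^ (r + 1)) := by
        rw [Finset.sum_const, nsmul_eq_mul]
        refine mul_le_mul_of_nonneg_right ?_ (equidistributionError_nonneg _ _ _)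
        exact_mod_cast card_powersetCard_le_pow (subset_Icc_of_prime_le hP)
          (hq.bot_lt.trans_le hqQ) hj

lemma weightedSum_mul_bonferroniSum (hF : IsDecreasingWeight M F) (f : ℕ → Cube k ℤ → ℝ) :
    weightedSum F (G * bonferroniSum P f r) =
      ∑ j ∈ Finset.range r, (-1) ^ j * weightedSum F (G * elemSymm P f j) := by
  rw [bonferroniSum, Finset.mul_sum, weightedSum_sum hF]
  refine Finset.sum_congr rfl fun j _ => ?_
  rw [← weightedSum_const_mul]
  refine congrArg _ (funext fun v => ?_)
  simp only [Pi.mul_apply, Pi.pow_apply, Pi.neg_apply, Pi.one_apply]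
  ring

lemma abs_weightedSum_mul_bonferroniSum_sub_le (hF : IsDecreasingWeight M F) (hq : q ≠ 0)
    (hqQ : q ≤ Q) (hP : ∀ p ∈ P, p.Prime ∧ p ≤ Q ∧ ¬ p ∣ q) (hM : Q ^ (r + 1) ≤ M)
    (hG : G.FactorsThrough (reduce k q)) (hG1 : ∀ v, |G v| ≤ 1) :
    |weightedSum F (G * bonferroniSum P dvdIndicator r) - weightedSum F (1 : Cube k ℤ → ℝ) *
      (periodMean q G * bonferroniSum P (dvdDensity k) r)| ≤
        r * (Q ^ r * equidistributionError k M (Q ^ (r + 1))) := by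
  rw [weightedSum_mul_bonferroniSum hF, bonferroniSum, Finset.mul_sum, Finset.mul_sum,
    ← Finset.sum_sub_distrib]
  refine (Finset.abs_sum_le_sum_abs _ _).trans
    ((Finset.sum_le_card_nsmul _ _ _ fun j hj => ?_).trans_eq
      (by rw [Finset.card_range, nsmul_eq_mul]))
  refine le_trans (le_of_eq ?_) (abs_weightedSum_mul_elemSymm_sub_le hF hq hqQ hP hM hG hG1
    (Finset.mem_range.mp hj).le)
  rw [mul_left_comm _ ((-1) ^ j), mul_left_comm _ ((-1) ^ j), ← mul_sub, abs_mul, abs_neg_one_pow,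
    one_mul]

lemma abs_weightedSum_mul_prod_sub_bonferroniSum_le (hF : IsDecreasingWeight M F)
    (hG1 : ∀ v, |G v| ≤ 1) (P : Finset ℕ) (r : ℕ) :
    |weightedSum F (G * ∏ p ∈ P, (1 - dvdIndicator p)) -
      weightedSum F (G * bonferroniSum P dvdIndicator r)| ≤
        weightedSum F (elemSymm P (dvdIndicator (k := k)) r) := by
  rw [← weightedSum_sub hF]
  refine abs_weightedSum_le hF fun v => ?_
  have hbonferroni := abs_prod_one_sub_sub_bonferroniSum_le P
    (f := fun p => dvdIndicator p v)
    (fun p _ => ⟨dvdIndicator_nonneg p v, dvdIndicator_le_one p v⟩) r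
  simp only [bonferroniSum, elemSymm] at hbonferroni
  simp only [← mul_sub, Pi.mul_apply, Pi.sub_apply, bonferroniSum, elemSymm, Finset.prod_apply,
    Finset.sum_apply, Pi.pow_apply, Pi.neg_apply, Pi.one_apply, abs_mul]
  exact (mul_le_of_le_one_left (abs_nonneg _) (hG1 v)).trans hbonferroni

/-- The number `r` of Bonferroni terms is a free parameter: the truncation error decays like
`exp (-r)`, while the modulus needed for equidistribution grows like `Q ^ (r + 1)`. -/
theorem abs_weightedSum_mul_prod_one_sub_dvdIndicator_le (hF : IsDecreasingWeight M F)
    (hq : q ≠ 0) (hqQ : q ≤ Q) (hP : ∀ p ∈ P, p.Prime ∧ p ≤ Q ∧ ¬ p ∣ q) (hM : Q ^ (r + 1) ≤ M)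
    (hG : G.FactorsThrough (reduce k q)) (hG1 : ∀ v, |G v| ≤ 1) :
    |weightedSum F (G * ∏ p ∈ P, (1 - dvdIndicator p))| ≤
      weightedSum F (1 : Cube k ℤ → ℝ) * (|periodMean q G| * ∏ p ∈ P, (1 - dvdDensity k p) +
        2 * Real.exp (-r + 3 * 2 ^ k * (1 + Real.log Q))) +
      (r + 1) * (Q ^ r * equidistributionError k M (Q ^ (r + 1))) := by
  have : NeZero q := ⟨hq⟩
  set A := weightedSum F (1 : Cube k ℤ → ℝ)
  set E := (Q : ℝ) ^ r * equidistributionError k M (Q ^ (r + 1))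
  set T := elemSymm P (dvdDensity k) r
  have hA : 0 ≤ A := weightedSum_one_nonneg hF
  have hT : T ≤ Real.exp (-r + 3 * 2 ^ k * (1 + Real.log Q)) :=
    elemSymm_le_exp (subset_Icc_of_prime_le hP)
      (fun p hp => ⟨(dvdDensity_mem_Icc k p).1, dvdDensity_le (hP p hp).1⟩) (by positivity) r
  have htail : weightedSum F (elemSymm P (dvdIndicator (k := k)) r) ≤ A * T + E := by
    have := abs_weightedSum_mul_elemSymm_sub_le (k := k) (G := 1) hF hq hqQ hP hM
      (fun _ _ _ => rfl) (fun _ => abs_one.le) le_rfl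
    rw [periodMean_one, one_mul, one_mul] at this
    linarith [(abs_le.mp this).2]
  have hmain : |A * (periodMean q G * bonferroniSum P (dvdDensity k) r)| ≤
      A * (|periodMean q G| * ∏ p ∈ P, (1 - dvdDensity k p) + T) := by
    have hT0 : 0 ≤ T := Finset.sum_nonneg fun S _ =>
      Finset.prod_nonneg fun p _ => (dvdDensity_mem_Icc k p).1
    rw [abs_mul, abs_of_nonneg hA, abs_mul]
    refine mul_le_mul_of_nonneg_left ((mul_le_mul_of_nonneg_left
      (abs_bonferroniSum_le P (fun p _ => dvdDensity_mem_Icc k p) r) (abs_nonneg _)).trans ?_) hA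
    rw [mul_add]
    gcongr
    exact mul_le_of_le_one_left hT0 (abs_periodMean_le_one hG1)
  have hbonferroniSum := abs_weightedSum_mul_bonferroniSum_sub_le hF hq hqQ hP hM hG hG1
  have htruncation := abs_weightedSum_mul_prod_sub_bonferroniSum_le hF hG1 P r
  have hAT := mul_le_mul_of_nonneg_left hT hA
  grind

end Cube

/-! ### The Cramér model -/

section CramerModel

/-- The primes below `w`, over which the Cramér model at level `w` is a product. -/
noncomputable def cramerPrimes (w : ℝ) : Finset ℕ :=
  (Finset.range (⌈w⌉₊ + 1)).filter fun p => Nat.Prime p ∧ (p : ℝ) < w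

/-- The value of the Cramér model at level `w` on the integers without prime factors below `w`. -/
noncomputable def cramerFactor (w : ℝ) : ℝ := ∏ p ∈ cramerPrimes w, (p : ℝ) / (p - 1)

variable {w : ℝ} {p : ℕ}

lemma prime_of_mem_cramerPrimes (hp : p ∈ cramerPrimes w) : p.Prime := (Finset.mem_filter.mp hp).2.1

lemma le_ceil_of_mem_cramerPrimes (hp : p ∈ cramerPrimes w) : p ≤ ⌈w⌉₊ :=
  Nat.lt_succ_iff.mp (Finset.mem_range.mp (Finset.mem_filter.mp hp).1)

lemma div_sub_one_nonneg (p : ℕ) : 0 ≤ (p : ℝ) / (p - 1) := by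
  rcases Nat.eq_zero_or_pos p with rfl | hp
  · simp
  · have : (1 : ℝ) ≤ p := by exact_mod_cast hp
    exact div_nonneg (by linarith) (by linarith)

lemma div_sub_one_le_two (hp : p.Prime) : (p : ℝ) / (p - 1) ≤ 2 := by
  have : (2 : ℝ) ≤ p := by exact_mod_cast hp.two_le
  rw [div_le_iff₀ (by linarith)]
  linarith

lemma div_sub_one_le_exp (hp : p.Prime) : (p : ℝ) / (p - 1) ≤ Real.exp (2 * (p : ℝ)⁻¹) := by
  have hp_two : (2 : ℝ) ≤ p := by exact_mod_cast hp.two_le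
  calc (p : ℝ) / (p - 1) = 1 + (p : ℝ) / (p - 1) * (p : ℝ)⁻¹ := by
        have : (p : ℝ) - 1 ≠ 0 := by linarith
        field_simp
        ring
    _ ≤ 2 * (p : ℝ)⁻¹ + 1 := by
        rw [add_comm]
        gcongr
        exact div_sub_one_le_two hp
    _ ≤ Real.exp (2 * (p : ℝ)⁻¹) := Real.add_one_le_exp _

lemma cramerFactor_nonneg (w : ℝ) : 0 ≤ cramerFactor w :=
  Finset.prod_nonneg fun p _ => div_sub_one_nonneg p

lemma cramerFactor_le_exp (w : ℝ) : cramerFactor w ≤ Real.exp (2 * (1 + Real.log ⌈w⌉₊)) := by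
  calc cramerFactor w ≤ ∏ p ∈ cramerPrimes w, Real.exp (2 * (p : ℝ)⁻¹) :=
        Finset.prod_le_prod (fun p _ => div_sub_one_nonneg p)
          fun p hp => div_sub_one_le_exp (prime_of_mem_cramerPrimes hp)
    _ = Real.exp (2 * ∑ p ∈ cramerPrimes w, (p : ℝ)⁻¹) := by rw [← Real.exp_sum, Finset.mul_sum]
    _ ≤ Real.exp (2 * (1 + Real.log ⌈w⌉₊)) := by
        gcongr
        exact sum_inv_le_one_add_log fun p hp => Finset.mem_Icc.mpr
          ⟨(prime_of_mem_cramerPrimes hp).one_le, le_ceil_of_mem_cramerPrimes hp⟩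

end CramerModel

namespace Cube

variable {k q p : ℕ}

lemma prime_dvd_prod_vertex_iff (hp : p.Prime) {v : Cube k ℤ} :
    (p : ℤ) ∣ ∏ ω, vertex ω v ↔ ∃ ω, (p : ℤ) ∣ vertex ω v := by
  simp [Prime.dvd_finsetProd_iff (Nat.prime_iff_prime_int.mp hp)]

lemma prod_vertex_ite_dvd (hp : p.Prime) (c : ℝ) (v : Cube k ℤ) :
    ∏ ω, (if (p : ℤ) ∣ vertex ω v then 0 else c) = c ^ 2 ^ k * (1 - dvdIndicator p v) := by
  rw [dvdIndicator]
  split_ifs with hdvd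
  · obtain ⟨ω, hω⟩ := (prime_dvd_prod_vertex_iff hp).mp hdvd
    rw [sub_self, mul_zero]
    exact Finset.prod_eq_zero (Finset.mem_univ ω) (if_pos hω)
  · rw [prime_dvd_prod_vertex_iff hp, not_exists] at hdvd
    simp [hdvd]

lemma vertexProd_cramer (w : ℝ) (v : Cube k ℤ) :
    vertexProd (cramer w) v =
      cramerFactor w ^ 2 ^ k * ∏ p ∈ cramerPrimes w, (1 - dvdIndicator p v) := by
  rw [cramerFactor, ← Finset.prod_pow, ← Finset.prod_mul_distrib]
  exact Finset.prod_comm.trans (Finset.prod_congr rfl fun p hp =>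
    prod_vertex_ite_dvd (prime_of_mem_cramerPrimes hp) _ v)

lemma dvdIndicator_eq_zero_of_vertexProd_ne_zero {χ : DirichletCharacter ℝ q} {v : Cube k ℤ}
    (hχ : vertexProd (fun x => χ x) v ≠ 0) (hp : p.Prime) (hpq : p ∣ q) :
    dvdIndicator p v = 0 := by
  refine if_neg fun hdvd => ?_
  obtain ⟨ω, hω⟩ := (prime_dvd_prod_vertex_iff hp).mp hdvd
  refine Finset.prod_ne_zero_iff.mp hχ ω (Finset.mem_univ ω) (χ.map_nonunit fun hunit => ?_)
  have hcop : IsCoprime (vertex ω v) (q : ℤ) :=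
    ((ZMod.coe_int_isUnit_iff_isCoprime _ _).mp hunit).symm
  exact (Nat.prime_iff_prime_int.mp hp).not_isUnit
    (hcop.isUnit_of_dvd' hω (Int.natCast_dvd_natCast.mpr hpq))

lemma vertexProd_cramer_mul_character (w : ℝ) (χ : DirichletCharacter ℝ q) (v : Cube k ℤ) :
    (vertexProd (cramer w) * vertexProd fun x => χ x : Cube k ℤ → ℝ) v =
      cramerFactor w ^ 2 ^ k * ((vertexProd fun x => χ x) *
        ∏ p ∈ cramerPrimes w with ¬ p ∣ q, (1 - dvdIndicator p) : Cube k ℤ → ℝ) v := by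
  rw [Pi.mul_apply, Pi.mul_apply, vertexProd_cramer, Finset.prod_apply]
  rcases eq_or_ne (vertexProd (fun x => χ x) v) 0 with hzero | hne
  · simp only [hzero, mul_zero, zero_mul]
  · have hprod : ∏ p ∈ cramerPrimes w with ¬ p ∣ q, (1 - dvdIndicator (k := k) p) v =
        ∏ p ∈ cramerPrimes w, (1 - dvdIndicator p v) :=
      Finset.prod_filter_of_ne fun p hp hfactor hpq => hfactor (by
        rw [Pi.sub_apply, Pi.one_apply, dvdIndicator_eq_zero_of_vertexProd_ne_zero hne
          (prime_of_mem_cramerPrimes hp) hpq, sub_zero])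
    rw [hprod]
    ring

lemma prod_pow_mul_one_sub_dvdDensity_le (k : ℕ) {P : Finset ℕ} (hP : ∀ p ∈ P, p.Prime) :
    ∏ p ∈ P, (((p : ℝ) / (p - 1)) ^ 2 ^ k * (1 - dvdDensity k p)) ≤
      Real.exp (∑' n : ℕ, 2 ^ 2 ^ k * (2 ^ k) ^ 2 / (n : ℝ) ^ 2) := by
  have hsummable : Summable fun n : ℕ => 2 ^ 2 ^ k * (2 ^ k) ^ 2 / (n : ℝ) ^ 2 := by
    simpa only [mul_one_div] using
      (Real.summable_one_div_nat_pow.mpr one_lt_two).mul_left (2 ^ 2 ^ k * (2 ^ k) ^ 2 : ℝ)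
  calc ∏ p ∈ P, (((p : ℝ) / (p - 1)) ^ 2 ^ k * (1 - dvdDensity k p))
      ≤ ∏ p ∈ P, Real.exp (2 ^ 2 ^ k * (2 ^ k) ^ 2 / (p : ℝ) ^ 2) := by
        refine Finset.prod_le_prod (fun p _ => ?_) fun p hp => ?_
        · exact mul_nonneg (pow_nonneg (div_sub_one_nonneg p) _)
            (sub_nonneg.mpr (dvdDensity_mem_Icc k p).2)
        · refine (pow_mul_one_sub_dvdDensity_le (hP p hp)).trans ?_
          rw [add_comm]
          exact Real.add_one_le_exp _
    _ = Real.exp (∑ p ∈ P, 2 ^ 2 ^ k * (2 ^ k) ^ 2 / (p : ℝ) ^ 2) := (Real.exp_sum _ _).symm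
    _ ≤ _ := Real.exp_le_exp.mpr (hsummable.sum_le_tsum P fun _ _ => by positivity)

lemma prod_div_sub_one_pow_le (hq : q ≠ 0) {P : Finset ℕ} (hP : ∀ p ∈ P, p.Prime ∧ p ∣ q) (n : ℕ) :
    ∏ p ∈ P, ((p : ℝ) / (p - 1)) ^ n ≤ (2 ^ n) ^ q.primeFactors.card := by
  calc ∏ p ∈ P, ((p : ℝ) / (p - 1)) ^ n ≤ ∏ _ ∈ P, (2 : ℝ) ^ n :=
        Finset.prod_le_prod (fun p _ => pow_nonneg (div_sub_one_nonneg p) n) fun p hp =>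
          pow_le_pow_left₀ (div_sub_one_nonneg p) (div_sub_one_le_two (hP p hp).1) n
    _ = (2 ^ n) ^ P.card := Finset.prod_const _
    _ ≤ (2 ^ n) ^ q.primeFactors.card :=
        pow_le_pow_right₀ (one_le_pow₀ one_le_two) (Finset.card_le_card fun p hp =>
          Nat.mem_primeFactors.mpr ⟨(hP p hp).1, (hP p hp).2, hq⟩)

theorem exists_cramerFactor_pow_mul_periodMean_le (k : ℕ) :
    ∃ C : ℝ, 0 < C ∧ ∀ (w : ℝ) (q : ℕ), q ≠ 0 → ∀ χ : DirichletCharacter ℝ q, χ.IsPrimitive →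
      cramerFactor w ^ 2 ^ k * (|periodMean q (vertexProd (k := k) fun x => χ x)| *
        ∏ p ∈ cramerPrimes w with ¬ p ∣ q, (1 - dvdDensity k p)) ≤
          C * (q : ℝ) ^ (-(1 / 4) : ℝ) := by
  obtain ⟨C, hC, hcharacter⟩ := exists_abs_periodMean_character_le k
  set B := Real.exp (∑' n : ℕ, 2 ^ 2 ^ k * (2 ^ k) ^ 2 / (n : ℝ) ^ 2)
  refine ⟨C * B, by positivity, fun w q hq χ hχ => ?_⟩
  set μ := |periodMean q (vertexProd (k := k) fun x => χ x)|
  have hq_pos : (0 : ℝ) < q := by exact_mod_cast hq.bot_lt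
  have hμ : μ * (2 ^ 2 ^ k) ^ q.primeFactors.card ≤ C * (q : ℝ) ^ (-(1 / 4) : ℝ) := by
    rw [Real.rpow_neg hq_pos.le, ← div_eq_mul_inv, le_div_iff₀ (Real.rpow_pos_of_pos hq_pos _)]
    exact hcharacter q hq χ hχ
  have hdvd := prod_div_sub_one_pow_le (P := (cramerPrimes w).filter (· ∣ q)) hq (fun p hp =>
    ⟨prime_of_mem_cramerPrimes (Finset.mem_filter.mp hp).1, (Finset.mem_filter.mp hp).2⟩) (2 ^ k)
  have hnot_dvd := prod_pow_mul_one_sub_dvdDensity_le k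
    (P := (cramerPrimes w).filter fun p => ¬ p ∣ q)
    fun p hp => prime_of_mem_cramerPrimes (Finset.mem_filter.mp hp).1
  calc _ = μ * (∏ p ∈ cramerPrimes w with p ∣ q, ((p : ℝ) / (p - 1)) ^ 2 ^ k) *
        ∏ p ∈ cramerPrimes w with ¬ p ∣ q,
          (((p : ℝ) / (p - 1)) ^ 2 ^ k * (1 - dvdDensity k p)) := by
        rw [cramerFactor, ← Finset.prod_pow,
          ← Finset.prod_filter_mul_prod_filter_not (cramerPrimes w) (· ∣ q),
          Finset.prod_mul_distrib]
        ring
    _ ≤ μ * (2 ^ 2 ^ k) ^ q.primeFactors.card * B := by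
        gcongr
        exact Finset.prod_nonneg fun p _ => mul_nonneg (pow_nonneg (div_sub_one_nonneg p) _)
          (sub_nonneg.mpr (dvdDensity_mem_Icc k p).2)
    _ ≤ C * (q : ℝ) ^ (-(1 / 4) : ℝ) * B := by gcongr
    _ = C * B * (q : ℝ) ^ (-(1 / 4) : ℝ) := by ring

end Cube

/-! ### Gowers norms of real functions -/

section GowersNorm

open Cube

variable {k M : ℕ} {F : ℤ → ℝ}

lemma isDecreasingWeight_indicator {f : ℤ → ℝ} (hnonneg : ∀ x, 0 ≤ f x)
    (hle_one : ∀ x, 1 ≤ x → f x ≤ 1) (hf : AntitoneOn f (Set.Ici 1)) :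
    IsDecreasingWeight M ((Set.Icc (1 : ℤ) M).indicator f) where
  nonneg x := Set.indicator_nonneg (fun x _ => hnonneg x) x
  le_one x := Set.indicator_le' (fun x hx => hle_one x hx.1) (fun _ _ => zero_le_one) x
  mem_Icc hx := Finset.mem_Icc.mpr (Set.mem_Icc.mp (Set.mem_of_indicator_ne_zero hx))
  antitoneOn x hx y hy hxy := by
    simp only [Set.indicator_apply, Set.mem_Icc]
    split_ifs with hyM hxM
    · exact hf hx hy hxy
    · exact absurd ⟨hx, hxy.trans hyM.2⟩ hxM
    · exact hnonneg x
    · exact le_rfl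

lemma isDecreasingWeight_indicator_one :
    IsDecreasingWeight M ((Set.Icc (1 : ℤ) M).indicator 1) :=
  isDecreasingWeight_indicator (fun _ => zero_le_one) (fun _ _ => le_rfl) antitoneOn_const

lemma isDecreasingWeight_indicator_rpow {β : ℝ} (hβ : β ≤ 1) :
    IsDecreasingWeight M ((Set.Icc (1 : ℤ) M).indicator fun x => (x.toNat : ℝ) ^ (β - 1)) := by
  have hβ_sub : β - 1 ≤ 0 := sub_nonpos.mpr hβ
  have hone_le {x : ℤ} (hx : 1 ≤ x) : (1 : ℝ) ≤ x.toNat := by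
    exact_mod_cast (show 1 ≤ x.toNat by lia)
  refine isDecreasingWeight_indicator (fun x => by positivity)
    (fun x hx => Real.rpow_le_one_of_one_le_of_nonpos (hone_le hx) hβ_sub) fun x hx y _ hxy => ?_
  exact Real.rpow_le_rpow_of_nonpos (one_pos.trans_le (hone_le hx))
    (by exact_mod_cast Int.toNat_le_toNat hxy) hβ_sub

lemma weightedSum_one_le (hF : IsDecreasingWeight M F) (hM : 1 ≤ M) :
    weightedSum F (1 : Cube k ℤ → ℝ) ≤ (3 * M) ^ (k + 1) := by
  have hsupp (v : Cube k ℤ) (hv : v ∉ symmBox k M) : vertexProd F v * (1 : Cube k ℤ → ℝ) v = 0 := by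
    rw [Pi.one_apply, mul_one]
    exact by_contra fun hne => hv (mem_symmBox_of_vertexProd_ne_zero hF hne)
  have hcard : (symmBox k M).card = (2 * M + 1) ^ (k + 1) := by
    rw [symmBox_eq_product, Finset.card_product, card_pi_Icc_neg, Int.card_Icc, pow_succ']
    congr 1
    lia
  rw [weightedSum, tsum_eq_sum (L := .unconditional _) hsupp]
  calc _ ≤ ∑ _ ∈ symmBox k M, (1 : ℝ) := Finset.sum_le_sum fun v _ => by
        rw [Pi.one_apply, mul_one]
        exact (le_abs_self _).trans (abs_vertexProd_le_one hF.abs_le_one v)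
    _ = (2 * M + 1) ^ (k + 1) := by
        rw [Finset.sum_const, hcard, nsmul_one]
        push_cast
        rfl
    _ ≤ (3 * M) ^ (k + 1) := by
        have : (1 : ℝ) ≤ M := by exact_mod_cast hM
        gcongr
        linarith

lemma vertexProd_indicator_one_of_mem_Icc {t : ℕ} (ht : (k + 1) * t ≤ M) {v : Cube k ℤ}
    (hv : v ∈ Finset.Icc (1 : Cube k ℤ) t) :
    vertexProd ((Set.Icc (1 : ℤ) M).indicator (1 : ℤ → ℝ)) v = 1 := by
  simp only [Finset.mem_Icc, Prod.le_def, Pi.le_def, Prod.fst_one, Prod.snd_one, Pi.one_apply,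
    Prod.fst_natCast, Prod.snd_natCast, Pi.natCast_apply] at hv
  refine Finset.prod_eq_one fun ω _ => Set.indicator_of_mem (Set.mem_Icc.mpr ?_) _
  have hterm (i : Fin k) : 0 ≤ (if ω i then v.2 i else 0) ∧ (if ω i then v.2 i else 0) ≤ t := by
    have := hv.1.2 i
    have := hv.2.2 i
    split_ifs <;> lia
  have hnonneg := Finset.sum_nonneg fun i (_ : i ∈ Finset.univ) => (hterm i).1
  have hle := Finset.sum_le_sum fun i (_ : i ∈ Finset.univ) => (hterm i).2
  rw [Finset.sum_const, Finset.card_univ, Fintype.card_fin, nsmul_eq_mul] at hle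
  zify at ht
  rw [vertex_apply]
  constructor <;> linarith

lemma le_weightedSum_indicator_one (hM : 2 * (k + 1) ≤ M) :
    ((M : ℝ) / (2 * (k + 1))) ^ (k + 1) ≤
      weightedSum ((Set.Icc (1 : ℤ) M).indicator 1) (1 : Cube k ℤ → ℝ) := by
  set t := M / (k + 1)
  have ht : (M : ℝ) / (2 * (k + 1)) ≤ t := by
    have hlt : (M : ℝ) < (k + 1) * (t + 1) := by
      exact_mod_cast Nat.lt_mul_div_succ M (Nat.succ_pos k)
    have hM_real : (2 : ℝ) * (k + 1) ≤ M := by exact_mod_cast hM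
    rw [div_le_iff₀ (by positivity)]
    linarith
  have hcard : (Finset.Icc (1 : Cube k ℤ) t).card = t ^ (k + 1) := by
    have hproduct : Finset.Icc (1 : Cube k ℤ) t =
        Finset.Icc (1 : ℤ) t ×ˢ Finset.Icc (1 : Fin k → ℤ) t :=
      (Finset.Icc_product_Icc _ _ _ _).symm
    simp [hproduct, Pi.card_Icc, pow_succ']
  calc ((M : ℝ) / (2 * (k + 1))) ^ (k + 1) ≤ (t : ℝ) ^ (k + 1) := by gcongr
    _ = ∑ v ∈ Finset.Icc (1 : Cube k ℤ) t,
        vertexProd ((Set.Icc (1 : ℤ) M).indicator (1 : ℤ → ℝ)) v := by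
        rw [Finset.sum_congr rfl fun v hv =>
            vertexProd_indicator_one_of_mem_Icc (Nat.mul_div_le M (k + 1)) hv,
          Finset.sum_const, hcard, nsmul_one, Nat.cast_pow]
    _ ≤ _ := by
        have hsummable := summable_vertexProd_mul (k := k)
          (isDecreasingWeight_indicator_one (M := M)) 1
        simp only [Pi.one_apply, mul_one] at hsummable
        simp only [weightedSum, Pi.one_apply, mul_one]
        exact hsummable.sum_le_tsum _ fun v _ => Finset.prod_nonneg fun _ _ =>
          isDecreasingWeight_indicator_one.nonneg _

lemma weightedSum_mul_one (F g : ℤ → ℝ) :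
    weightedSum (fun x => F x * g x) (1 : Cube k ℤ → ℝ) =
      weightedSum F (vertexProd (k := k) g) := by
  simp only [weightedSum, vertexProd_mul, Pi.mul_apply, Pi.one_apply, mul_one]

lemma gowersProd_ofReal (φ : ℤ → ℝ) (v : Cube k ℤ) :
    gowersProd k (fun n => (φ n : ℂ)) v.1 v.2 = (vertexProd φ v : ℝ) := by
  rw [gowersProd, vertexProd, Complex.ofReal_prod]
  exact Finset.prod_congr rfl fun ω _ => Function.iterate_fixed (Complex.conj_ofReal _) _

lemma gowersTildeU_ofReal (k : ℕ) (φ : ℤ → ℝ) :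
    gowersTildeU k (fun n => (φ n : ℂ)) =
      weightedSum φ (1 : Cube k ℤ → ℝ) ^ ((1 : ℝ) / 2 ^ k) := by
  rw [gowersTildeU, tsum_congr (gowersProd_ofReal φ), ← Complex.ofReal_tsum, Complex.ofReal_re]
  simp only [weightedSum, Pi.one_apply, mul_one]

lemma truncN_ofReal {N : ℝ} (hN : 0 ≤ N) (φ : ℤ → ℝ) :
    truncN N (fun n => (φ n : ℂ)) = fun n => (((Set.Icc (1 : ℤ) ⌊N⌋₊).indicator φ n : ℝ) : ℂ) := by
  funext n
  simp only [truncN, Set.indicator_apply, Set.mem_Icc, Int.natCast_floor_eq_floor hN, Int.le_floor]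
  split_ifs <;> simp

lemma gowersUN_ofReal_le {N : ℝ} (hN : 0 ≤ N) (φ : ℤ → ℝ) :
    gowersUN k N (fun n => (φ n : ℂ)) ≤
      (|weightedSum ((Set.Icc (1 : ℤ) ⌊N⌋₊).indicator φ) (1 : Cube k ℤ → ℝ)| /
        weightedSum ((Set.Icc (1 : ℤ) ⌊N⌋₊).indicator 1) (1 : Cube k ℤ → ℝ)) ^
          ((1 : ℝ) / 2 ^ k) := by
  have hone : truncN N (fun _ => 1) =
      fun n => (((Set.Icc (1 : ℤ) ⌊N⌋₊).indicator 1 n : ℝ) : ℂ) := by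
    simpa using truncN_ofReal hN 1
  have hden : 0 ≤ weightedSum ((Set.Icc (1 : ℤ) ⌊N⌋₊).indicator 1) (1 : Cube k ℤ → ℝ) :=
    weightedSum_one_nonneg isDecreasingWeight_indicator_one
  rw [gowersUN, truncN_ofReal hN, hone, gowersTildeU_ofReal, gowersTildeU_ofReal,
    Real.div_rpow (abs_nonneg _) hden]
  exact div_le_div_of_nonneg_right ((le_abs_self _).trans (Real.abs_rpow_le_abs_rpow _ _))
    (Real.rpow_nonneg hden _)

end GowersNorm

/-! ### Choice of parameters -/

section Parameters

variable {l : ℝ} {n : ℕ}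

lemma log_ceil_exp_le (hl : 0 ≤ l) : Real.log ⌈Real.exp l⌉₊ ≤ l + 1 := by
  have hceil : (0 : ℝ) < ⌈Real.exp l⌉₊ := (Real.exp_pos l).trans_le (Nat.le_ceil _)
  rw [Real.log_le_iff_le_exp hceil]
  calc (⌈Real.exp l⌉₊ : ℝ) ≤ Real.exp l + 1 := (Nat.ceil_lt_add_one (Real.exp_nonneg l)).le
    _ ≤ Real.exp l * 2 := by linarith [Real.one_le_exp hl]
    _ ≤ Real.exp (l + 1) := by
        rw [Real.exp_add]
        gcongr
        linarith [Real.add_one_le_exp 1]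

lemma exp_sub_one_le_floor_exp (hl : 1 ≤ l) : Real.exp (l - 1) ≤ ⌊Real.exp l⌋₊ := by
  have hexp : Real.exp (l - 1) * 2 ≤ Real.exp l := by
    rw [← sub_add_cancel l 1, Real.exp_add, add_sub_cancel_right]
    gcongr
    linarith [Real.add_one_le_exp 1]
  linarith [Nat.lt_floor_add_one (Real.exp l), Real.one_le_exp (sub_nonneg.mpr hl)]

lemma ceil_exp_pow_le (hl : 0 ≤ l) (m : ℕ) :
    (⌈Real.exp l⌉₊ : ℝ) ^ m ≤ Real.exp (m * (l + 1)) := by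
  have hceil : (0 : ℝ) < ⌈Real.exp l⌉₊ := (Real.exp_pos l).trans_le (Nat.le_ceil _)
  rw [Real.exp_nat_mul]
  gcongr
  exact (Real.log_le_iff_le_exp hceil).mp (log_ceil_exp_le hl)

lemma ceil_sq_le (l : ℝ) : (⌈l ^ 2⌉₊ : ℝ) ≤ l ^ 2 + 1 := (Nat.ceil_lt_add_one (sq_nonneg l)).le

lemma le_pow_ten_sub_one (hl : 16 ≤ l) : l ≤ l ^ 10 - 1 := by
  have : l ^ 2 ≤ l ^ 10 := pow_le_pow_right₀ (by linarith) (by norm_num)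
  nlinarith

lemma ceil_exp_pow_le_floor_exp (hl : 16 ≤ l) :
    ⌈Real.exp l⌉₊ ^ (⌈l ^ 2⌉₊ + 1) ≤ ⌊Real.exp (l ^ 10)⌋₊ := by
  have hpoly : (l ^ 2 + 2) * (l + 1) ≤ l ^ 10 - 1 := by
    have : l ^ 4 ≤ l ^ 10 := pow_le_pow_right₀ (by linarith) (by norm_num)
    nlinarith [pow_le_pow_left₀ (by norm_num) hl 2, pow_le_pow_left₀ (by norm_num) hl 3]
  have hlog : ((⌈l ^ 2⌉₊ + 1 : ℕ) : ℝ) * (l + 1) ≤ l ^ 10 - 1 := by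
    push_cast
    exact (mul_le_mul_of_nonneg_right (by linarith [ceil_sq_le l]) (by linarith)).trans hpoly
  exact_mod_cast (ceil_exp_pow_le (by linarith) _).trans ((Real.exp_le_exp.mpr hlog).trans
    (exp_sub_one_le_floor_exp (by linarith [le_pow_ten_sub_one hl])))

lemma two_mul_add_one_le_floor_exp (k : ℕ) (hl : 15 * 2 ^ k + 16 ≤ l) :
    2 * (k + 1) ≤ ⌊Real.exp (l ^ 10)⌋₊ := by
  have hk : ((k + 1 : ℕ) : ℝ) ≤ 2 ^ k := by exact_mod_cast (Nat.lt_two_pow_self : k < 2 ^ k)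
  have hl_ten := le_pow_ten_sub_one (l := l) (by linarith [pow_pos (two_pos (α := ℝ)) k])
  have hexp := exp_sub_one_le_floor_exp (l := l ^ 10) (by linarith)
  have : ((2 * (k + 1) : ℕ) : ℝ) ≤ ⌊Real.exp (l ^ 10)⌋₊ := by
    push_cast at hk ⊢
    linarith [Real.add_one_le_exp (l ^ 10 - 1)]
  exact_mod_cast this

lemma cramerFactor_exp_pow_le (hl : 0 ≤ l) (n : ℕ) :
    cramerFactor (Real.exp l) ^ n ≤ Real.exp (2 * n * (l + 2)) := by
  calc cramerFactor (Real.exp l) ^ n ≤ Real.exp (2 * (l + 2)) ^ n := by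
        refine pow_le_pow_left₀ (cramerFactor_nonneg _) ((cramerFactor_le_exp _).trans ?_) n
        exact Real.exp_le_exp.mpr (by linarith [log_ceil_exp_le hl])
    _ = Real.exp (2 * n * (l + 2)) := by
        rw [← Real.exp_nat_mul]
        ring_nf

lemma cramerFactor_pow_mul_exp_le (hn : 1 ≤ n) (hl : 15 * n + 16 ≤ l) :
    cramerFactor (Real.exp l) ^ n *
      Real.exp (-⌈l ^ 2⌉₊ + 3 * n * (1 + Real.log ⌈Real.exp l⌉₊)) ≤ Real.exp (-l) := by
  have hn_real : (1 : ℝ) ≤ n := by exact_mod_cast hn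
  have hpoly : 5 * n * (l + 2) + l ≤ l ^ 2 := by nlinarith
  have hlog : 3 * n * (1 + Real.log ⌈Real.exp l⌉₊) ≤ 3 * n * (l + 2) :=
    mul_le_mul_of_nonneg_left (by linarith [log_ceil_exp_le (l := l) (by linarith)])
      (by positivity)
  calc _ ≤ Real.exp (2 * n * (l + 2)) *
        Real.exp (-⌈l ^ 2⌉₊ + 3 * n * (1 + Real.log ⌈Real.exp l⌉₊)) := by
        gcongr
        exact cramerFactor_exp_pow_le (by linarith) n
    _ ≤ Real.exp (-l) := by
        rw [← Real.exp_add]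
        gcongr
        linarith [Nat.le_ceil (l ^ 2)]

lemma cramerFactor_pow_mul_ceil_exp_pow_le (hn : 1 ≤ n) (hl : 15 * n + 16 ≤ l) :
    cramerFactor (Real.exp l) ^ n * ((⌈l ^ 2⌉₊ + 1) *
      (⌈Real.exp l⌉₊ ^ ⌈l ^ 2⌉₊ * ⌈Real.exp l⌉₊ ^ (⌈l ^ 2⌉₊ + 1))) ≤
        ⌊Real.exp (l ^ 10)⌋₊ * Real.exp (-l) := by
  set r := ⌈l ^ 2⌉₊
  have hn_real : (1 : ℝ) ≤ n := by exact_mod_cast hn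
  have hl_sixteen : 16 ≤ l := by linarith
  have hexponent : 2 * n * (l + 2) + (r + (2 * r + 1) * (l + 1)) ≤ (l ^ 10 - 1) + -l := by
    have hfactor : 2 * n * (l + 2) ≤ l ^ 2 := by nlinarith
    have hsieve : (2 * r + 1) * (l + 1) ≤ (2 * l ^ 2 + 3) * (l + 1) :=
      mul_le_mul_of_nonneg_right (by linarith [ceil_sq_le l]) (by linarith)
    have hpow : l ^ 4 ≤ l ^ 10 := pow_le_pow_right₀ (by linarith) (by norm_num)
    have hpoly : l ^ 2 + (l ^ 2 + 1 + (2 * l ^ 2 + 3) * (l + 1)) ≤ l ^ 4 - 1 - l := by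
      nlinarith [pow_pos (show 0 < l by linarith) 3]
    linarith [ceil_sq_le l]
  calc _ ≤ Real.exp (2 * n * (l + 2)) * (Real.exp r * Real.exp ((r + (r + 1) : ℕ) * (l + 1))) := by
        rw [← pow_add]
        gcongr
        · exact cramerFactor_exp_pow_le (by linarith) n
        · exact Real.add_one_le_exp _
        · exact ceil_exp_pow_le (by linarith) _
    _ = Real.exp (2 * n * (l + 2) + (r + (2 * r + 1) * (l + 1))) := by
        rw [← Real.exp_add, ← Real.exp_add]
        push_cast
        ring_nf
    _ ≤ Real.exp (l ^ 10 - 1) * Real.exp (-l) := by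
        rw [← Real.exp_add]
        exact Real.exp_le_exp.mpr hexponent
    _ ≤ _ := by
        gcongr
        exact exp_sub_one_le_floor_exp (by linarith [le_pow_ten_sub_one hl_sixteen])

lemma exp_neg_le_rpow (hl : 0 ≤ l) {q : ℕ} (hq : q ≠ 0) (hql : (q : ℝ) ≤ Real.exp l) :
    Real.exp (-l) ≤ (q : ℝ) ^ (-(1 / 4) : ℝ) := by
  calc Real.exp (-l) ≤ Real.exp l ^ (-(1 / 4) : ℝ) := by
        rw [← Real.exp_mul]
        gcongr
        linarith
    _ ≤ (q : ℝ) ^ (-(1 / 4) : ℝ) :=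
        Real.rpow_le_rpow_of_nonpos (by exact_mod_cast hq.bot_lt) hql (by norm_num)

end Parameters

/-! ### The main estimate -/

namespace Cube

variable {k q M : ℕ} {F : ℤ → ℝ}

lemma abs_weightedSum_cramer_mul_character (w : ℝ) (χ : DirichletCharacter ℝ q) (F : ℤ → ℝ) :
    |weightedSum F (vertexProd (k := k) (cramer w) * vertexProd fun x => χ x)| =
      cramerFactor w ^ 2 ^ k * |weightedSum F ((vertexProd (k := k) fun x => χ x) *
        ∏ p ∈ cramerPrimes w with ¬ p ∣ q, (1 - dvdIndicator p))| := by
  rw [funext (vertexProd_cramer_mul_character w χ), weightedSum_const_mul, abs_mul,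
    abs_of_nonneg (pow_nonneg (cramerFactor_nonneg w) _)]

lemma abs_weightedSum_cramer_mul_character_le (hF : IsDecreasingWeight M F) (hq : q ≠ 0) {w : ℝ}
    (hqw : q ≤ ⌈w⌉₊) {r : ℕ} (hM : ⌈w⌉₊ ^ (r + 1) ≤ M) (χ : DirichletCharacter ℝ q) :
    |weightedSum F (vertexProd (k := k) (cramer w) * vertexProd fun x => χ x)| ≤
      weightedSum F (1 : Cube k ℤ → ℝ) * (cramerFactor w ^ 2 ^ k *
          (|periodMean q (vertexProd (k := k) fun x => χ x)| *
            ∏ p ∈ cramerPrimes w with ¬ p ∣ q, (1 - dvdDensity k p)) +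
        2 * (cramerFactor w ^ 2 ^ k * Real.exp (-r + 3 * 2 ^ k * (1 + Real.log ⌈w⌉₊)))) +
      cramerFactor w ^ 2 ^ k * ((r + 1) * (⌈w⌉₊ ^ r * ⌈w⌉₊ ^ (r + 1))) *
        (2 ^ k * (4 * M + 1) ^ k * (2 * (k + 1))) := by
  have hsieve := abs_weightedSum_mul_prod_one_sub_dvdIndicator_le (k := k) hF hq hqw
    (P := (cramerPrimes w).filter fun p => ¬ p ∣ q)
    (fun p hp => ⟨prime_of_mem_cramerPrimes (Finset.mem_filter.mp hp).1,
      le_ceil_of_mem_cramerPrimes (Finset.mem_filter.mp hp).1, (Finset.mem_filter.mp hp).2⟩)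
    hM (factorsThrough_vertexProd fun x => χ x)
    (abs_vertexProd_le_one fun x => abs_real_dirichletCharacter_le_one χ x)
  rw [abs_weightedSum_cramer_mul_character]
  refine (mul_le_mul_of_nonneg_left hsieve
    (pow_nonneg (cramerFactor_nonneg w) (2 ^ k))).trans_eq ?_
  rw [equidistributionError]
  push_cast
  ring

theorem exists_abs_weightedSum_cramer_mul_character_le (k : ℕ) :
    ∃ C : ℝ, 0 < C ∧ ∀ l : ℝ, 15 * 2 ^ k + 16 ≤ l → ∀ q : ℕ, q ≠ 0 → (q : ℝ) ≤ Real.exp l →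
      ∀ χ : DirichletCharacter ℝ q, χ.IsPrimitive →
        ∀ F, IsDecreasingWeight ⌊Real.exp (l ^ 10)⌋₊ F →
          |weightedSum F (vertexProd (k := k) (cramer (Real.exp l)) * vertexProd fun x => χ x)| ≤
            C * (q : ℝ) ^ (-(1 / 4) : ℝ) * (⌊Real.exp (l ^ 10)⌋₊ : ℝ) ^ (k + 1) := by
  obtain ⟨C, hC, hmain⟩ := exists_cramerFactor_pow_mul_periodMean_le k
  refine ⟨3 ^ (k + 1) * (C + 2) + 2 ^ k * 5 ^ k * (2 * (k + 1)), by positivity,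
    fun l hl q hq hql χ hχ F hF => ?_⟩
  have hl_cast : 15 * ((2 ^ k : ℕ) : ℝ) + 16 ≤ l := by exact_mod_cast hl
  have hl_sixteen : 16 ≤ l := by linarith [pow_pos (two_pos (α := ℝ)) k]
  have hM : 1 ≤ ⌊Real.exp (l ^ 10)⌋₊ := by have := two_mul_add_one_le_floor_exp k hl; lia
  have hsieve := abs_weightedSum_cramer_mul_character_le (k := k) hF hq
    (by exact_mod_cast hql.trans (Nat.le_ceil _)) (ceil_exp_pow_le_floor_exp hl_sixteen) χ
  have hdecay := exp_neg_le_rpow (by linarith) hq hql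
  have hsmall := (cramerFactor_pow_mul_exp_le Nat.one_le_two_pow hl_cast).trans hdecay
  have herror := (cramerFactor_pow_mul_ceil_exp_pow_le Nat.one_le_two_pow hl_cast).trans
    (mul_le_mul_of_nonneg_left hdecay (Nat.cast_nonneg _))
  rw [Nat.cast_pow, Nat.cast_two] at hsmall
  set M := ⌊Real.exp (l ^ 10)⌋₊
  set δ := (q : ℝ) ^ (-(1 / 4) : ℝ)
  calc _ ≤ _ := hsieve
    _ ≤ weightedSum F (1 : Cube k ℤ → ℝ) * (C * δ + 2 * δ) +
        M * δ * (2 ^ k * (4 * M + 1) ^ k * (2 * (k + 1))) := by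
        have hS : 0 ≤ weightedSum F (1 : Cube k ℤ → ℝ) := weightedSum_one_nonneg hF
        gcongr weightedSum F 1 * (?_ + 2 * ?_) + ?_ * _
        exact hmain _ q hq χ hχ
    _ ≤ (3 * M) ^ (k + 1) * (C * δ + 2 * δ) + M * δ * (2 ^ k * (5 * M) ^ k * (2 * (k + 1))) := by
        have hM_real : (1 : ℝ) ≤ M := by exact_mod_cast hM
        gcongr
        · exact weightedSum_one_le hF hM
        · linarith
    _ = _ := by ring

end Cube

open Cube in
theorem exists_gowersUN_cramer_mul_character_le (k : ℕ) :
    ∃ C : ℝ, 0 < C ∧ ∀ l : ℝ, 15 * 2 ^ k + 16 ≤ l → ∀ q : ℕ, q ≠ 0 → (q : ℝ) ≤ Real.exp l →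
      ∀ χ : DirichletCharacter ℝ q, χ.IsPrimitive → ∀ f : ℤ → ℝ,
        IsDecreasingWeight ⌊Real.exp (l ^ 10)⌋₊
            ((Set.Icc (1 : ℤ) ⌊Real.exp (l ^ 10)⌋₊).indicator f) →
          gowersUN k (Real.exp (l ^ 10))
              (fun n => ((cramer (Real.exp l) n * f n * χ (n.toNat : ZMod q) : ℝ) : ℂ)) ≤
            C * (q : ℝ) ^ (-(1 / 4 * (1 / 2 ^ k)) : ℝ) := by
  obtain ⟨C, hC, hmain⟩ := exists_abs_weightedSum_cramer_mul_character_le k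
  refine ⟨(C * (2 * (k + 1)) ^ (k + 1)) ^ ((1 : ℝ) / 2 ^ k), by positivity,
    fun l hl q hq hql χ hχ f hf => ?_⟩
  have hM := two_mul_add_one_le_floor_exp k hl
  have hindicator : (Set.Icc (1 : ℤ) ⌊Real.exp (l ^ 10)⌋₊).indicator
      (fun n => cramer (Real.exp l) n * f n * χ (n.toNat : ZMod q)) =
        fun n => (Set.Icc (1 : ℤ) ⌊Real.exp (l ^ 10)⌋₊).indicator f n *
          (cramer (Real.exp l) n * χ n) := by
    funext n
    simp only [Set.indicator_apply]
    split_ifs with hn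
    · rw [← Int.cast_natCast, Int.toNat_of_nonneg (zero_le_one.trans hn.1)]
      ring
    · exact (zero_mul _).symm
  have hnum := hmain l hl q hq hql χ hχ _ hf
  have hden := le_weightedSum_indicator_one hM
  have hden_nonneg := weightedSum_one_nonneg (k := k)
    (isDecreasingWeight_indicator_one (M := ⌊Real.exp (l ^ 10)⌋₊))
  refine (gowersUN_ofReal_le (Real.exp_nonneg _) _).trans ?_
  rw [hindicator, weightedSum_mul_one, vertexProd_mul]
  have hM_pos : (0 : ℝ) < ⌊Real.exp (l ^ 10)⌋₊ := by exact_mod_cast (by lia)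
  set M := ⌊Real.exp (l ^ 10)⌋₊
  set δ := (q : ℝ) ^ (-(1 / 4) : ℝ) with hδ
  calc _ ≤ (C * δ * (M : ℝ) ^ (k + 1) / ((M : ℝ) / (2 * (k + 1))) ^ (k + 1)) ^
        ((1 : ℝ) / 2 ^ k) := by gcongr
    _ = (C * (2 * (k + 1)) ^ (k + 1) * δ) ^ ((1 : ℝ) / 2 ^ k) := by
        rw [div_pow]
        field_simp
    _ = _ := by
        rw [Real.mul_rpow (by positivity) (by positivity), hδ, ← Real.rpow_mul q.cast_nonneg,
          neg_mul]

theorem siegel_correction_vonMangoldt_gowers_uniform_general (k : ℕ) :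
    ∃ c C : ℝ, 0 < c ∧ 0 < C ∧ ∃ N₀ : ℝ, ∀ N : ℝ, N₀ ≤ N →
      ∀ (q : ℕ) [NeZero q] (χ : DirichletCharacter ℂ q), (q : ℝ) < Qparam N →
        χ.IsPrimitive → (∀ n : ZMod q, (starRingEnd ℂ) (χ n) = χ n) →
        ∀ β : ℝ, β ≤ 1 →
          gowersUN k N
              (fun n : ℤ => ((cramer (Qparam N) n : ℝ) : ℂ) *
                (((n.toNat : ℝ) ^ (β - 1) : ℝ) : ℂ) * χ ((n.toNat : ℕ) : ZMod q))
            ≤ C * (q : ℝ) ^ (-c) := by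
  obtain ⟨C, hC, hmain⟩ := exists_gowersUN_cramer_mul_character_le k
  refine ⟨1 / 4 * (1 / 2 ^ k), C, by positivity, hC, Real.exp ((15 * 2 ^ k + 16) ^ 10),
    fun N hN q _ χ hqN hχ hreal β hβ => ?_⟩
  obtain ⟨ψ, hψ, hψχ⟩ := exists_real_dirichletCharacter hχ hreal
  have hN_pos : 0 < N := (Real.exp_pos _).trans_le hN
  have hlog : (15 * 2 ^ k + 16 : ℝ) ^ 10 ≤ Real.log N := (Real.le_log_iff_exp_le hN_pos).mpr hN
  set l := Real.log N ^ ((1 : ℝ) / 10) with hl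
  have hQ : Qparam N = Real.exp l := rfl
  have hl_pow : l ^ 10 = Real.log N := by
    rw [hl, ← Real.rpow_natCast, ← Real.rpow_mul (le_trans (by positivity) hlog)]
    norm_num
  have hl_le : 15 * 2 ^ k + 16 ≤ l := by
    refine le_of_pow_le_pow_left₀ (n := 10) (by norm_num) ?_ (hl_pow.symm ▸ hlog)
    exact Real.rpow_nonneg (le_trans (by positivity) hlog) _
  have hbound := hmain l hl_le q (NeZero.ne q) hqN.le ψ hψ _
    (isDecreasingWeight_indicator_rpow hβ)
  rw [hl_pow, Real.exp_log hN_pos] at hbound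
  simpa only [hQ, hψχ, Complex.ofReal_mul] using hbound

theorem siegel_correction_vonMangoldt_gowers_uniform (k : ℕ) (hk : 2 ≤ k) :
    ∃ c₀ c C : ℝ, 0 < c₀ ∧ 0 < c ∧ 0 < C ∧ ∃ N₀ : ℝ, ∀ N : ℝ, N₀ ≤ N →
      ∀ (q : ℕ) [NeZero q] (χ : DirichletCharacter ℂ q), (q : ℝ) < Qparam N →
        χ.IsPrimitive → (∀ n : ZMod q, (starRingEnd ℂ) (χ n) = χ n) →
        ∀ β : ℝ, 1 - c₀ / Real.log (Qparam N) < β → β < 1 →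
          DirichletCharacter.LFunction χ (β : ℂ) = 0 →
          gowersUN k N
              (fun n : ℤ => ((cramer (Qparam N) n : ℝ) : ℂ) *
                (((n.toNat : ℝ) ^ (β - 1) : ℝ) : ℂ) * χ ((n.toNat : ℕ) : ZMod q))
            ≤ C * (q : ℝ) ^ (-c) := by
  obtain ⟨c, C, hc, hC, N₀, hbound⟩ := siegel_correction_vonMangoldt_gowers_uniform_general k
  exact ⟨1, c, C, one_pos, hc, hC, N₀, fun N hN q _ χ hq hχ hreal β _ hβ _ =>
    hbound N hN q χ hq hχ hreal β hβ.le⟩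
end

section
/- Let k ≥ 1 be an integer, let G be an additive abelian group, let H be a subgroup of G, and let f: G → ℂ be finitely supported. For each coset a + H ∈ G/H define F(a + H) := ‖f(a + ·)‖_{Ũ^k(H)}, the unnormalized Gowers norm over H of the function h ↦ f(a + h) (this value does not depend on the choice of coset representative a, and F: G/H → ℝ is finitely supported). Then ‖f‖_{Ũ^k(G)} ≤ ‖F‖_{Ũ^k(G/H)}. -/
open scoped Classical

/-!
The Gowers inner product `⟨u⟩` of a family `u` indexed by the cube `{0,1}^k` is, for each direction
`i`, of the form `∑ A(h) * conj B(h)`, where `A` and `B` only involve the faces `ω i = 0` and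
`ω i = 1`. The Cauchy-Schwarz inequality in every direction gives the Gowers-Cauchy-Schwarz
inequality `|⟨u⟩| ≤ ∏ ω, ‖u ω‖`. To compare `G` with `G ⧸ H`, sort the parallelepipeds of `G` by
their image in `G ⧸ H`: those over a fixed one are parametrized by the parallelepipeds of `H`, so
their total contribution to `‖f‖ ^ 2 ^ k` is a Gowers inner product over `H` of translates of `f`,
bounded by the product of the coset norms `F` over the vertices of the image parallelepiped. Summing
over the images gives `‖F‖ ^ 2 ^ k`.
-/

open Function ENNReal

lemma piecewise_update_of_notMem {ι : Type*} [DecidableEq ι] {π : ι → Type*} (S : Finset ι) {i : ι}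
    (hi : i ∉ S) (σ ω : ∀ j, π j) (b : π i) :
    S.piecewise σ (update ω i b) = (insert i S).piecewise (update σ i b) ω := by
  rw [Finset.piecewise_insert, update_self, S.update_piecewise_of_notMem _ _ hi]
  exact S.piecewise_congr (fun j hj ↦ (update_of_ne (ne_of_mem_of_not_mem hj hi) ..).symm)
    fun _ _ ↦ rfl

section MultipleCauchySchwarz

variable {ι : Type*} [Fintype ι] [DecidableEq ι]

lemma prod_update_false_mul_update_true {M : Type*} [CommMonoid M] (g : (ι → Bool) → M) (i : ι) :
    ∏ σ : ι → Bool, g (update σ i false) * g (update σ i true) = (∏ σ, g σ) ^ 2 := by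
  have flip_involutive : Involutive fun σ : ι → Bool ↦ update σ i (!σ i) := fun σ ↦ by simp
  calc
    _ = ∏ σ : ι → Bool, g σ * g (update σ i (!σ i)) :=
      Finset.prod_congr rfl fun σ _ ↦ by
        cases hσ : σ i
        · rw [← hσ, update_eq_self, hσ, Bool.not_false]
        · rw [← hσ, update_eq_self, hσ, Bool.not_true, mul_comm]
    _ = (∏ σ, g σ) ^ 2 := by
      rw [Finset.prod_mul_distrib, sq]
      exact congrArg _ (Equiv.prod_comp flip_involutive.toPerm g)

/-- The maps `φ` record which members of a family indexed by the cube have been identified so far: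
from `id`, all distinct, to constant maps, all equal. -/
lemma pow_two_pow_card_le_prod_const {R : Type*} [CommSemiring R] [LinearOrder R]
    [IsStrictOrderedRing R] (N : ((ι → Bool) → (ι → Bool)) → R) (hN : ∀ φ, 0 ≤ N φ)
    (hcs : ∀ i φ, N φ ^ 2 ≤ N (fun ω ↦ φ (update ω i false)) * N (fun ω ↦ φ (update ω i true))) :
    N id ^ 2 ^ Fintype.card ι ≤ ∏ σ, N (fun _ ↦ σ) := by
  suffices h : ∀ S : Finset ι, N id ^ 2 ^ Fintype.card ι ≤ ∏ σ, N (fun ω ↦ S.piecewise σ ω) by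
    simpa using h Finset.univ
  intro S
  induction S using Finset.induction_on with
  | empty => simp [Function.id_def]
  | insert i S hi ih =>
    refine ih.trans ?_
    rw [← pow_le_pow_iff_left₀ (Finset.prod_nonneg fun _ _ ↦ hN _)
      (Finset.prod_nonneg fun _ _ ↦ hN _) two_ne_zero]
    calc
      (∏ σ, N (fun ω ↦ S.piecewise σ ω)) ^ 2 = ∏ σ, N (fun ω ↦ S.piecewise σ ω) ^ 2 :=
        (Finset.prod_pow ..).symm
      _ ≤ ∏ σ, N (fun ω ↦ (insert i S).piecewise (update σ i false) ω) *
            N (fun ω ↦ (insert i S).piecewise (update σ i true) ω) := by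
        refine Finset.prod_le_prod (fun _ _ ↦ pow_nonneg (hN _) 2) fun σ _ ↦ ?_
        simpa only [piecewise_update_of_notMem S hi] using hcs i fun ω ↦ S.piecewise σ ω
      _ = (∏ σ, N (fun ω ↦ (insert i S).piecewise σ ω)) ^ 2 :=
        prod_update_false_mul_update_true (fun σ ↦ N (fun ω ↦ (insert i S).piecewise σ ω)) i

end MultipleCauchySchwarz

lemma hasFiniteSupport_comp_add_coe {G M : Type*} [AddGroup G] [Zero M] {H : AddSubgroup G}
    {f : G → M} (hf : HasFiniteSupport f) (a : G) :
    HasFiniteSupport fun h : H ↦ f (a + h) :=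
  hf.preimage ((add_right_injective a).comp Subtype.val_injective).injOn

lemma norm_tsum_mul_conj_sq_le {𝕜 α : Type*} [RCLike 𝕜] {a b : α → 𝕜} (ha : Memℓp a 2)
    (hb : Memℓp b 2) :
    ‖∑' x, a x * starRingEnd 𝕜 (b x)‖ ^ 2 ≤
      ‖∑' x, a x * starRingEnd 𝕜 (a x)‖ * ‖∑' x, b x * starRingEnd 𝕜 (b x)‖ := by
  let u : lp (fun _ : α ↦ 𝕜) 2 := ⟨a, ha⟩
  let v : lp (fun _ : α ↦ 𝕜) 2 := ⟨b, hb⟩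
  change ‖inner 𝕜 v u‖ ^ 2 ≤ ‖inner 𝕜 u u‖ * ‖inner 𝕜 v v‖
  rw [inner_self_eq_norm_sq_to_K, inner_self_eq_norm_sq_to_K]
  simpa [mul_pow, mul_comm] using
    pow_le_pow_left₀ (norm_nonneg _) (norm_inner_le_norm (𝕜 := 𝕜) v u) 2

lemma iterate_conj_eq_zero_iff {R : Type*} [CommSemiring R] [StarRing R] (n : ℕ) {z : R} :
    (starRingEnd R)^[n] z = 0 ↔ z = 0 :=
  ((Involutive.injective starRingEnd_self_apply).iterate n).eq_iff' (iterate_map_zero _ n)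

section Cube

variable {G : Type*} [AddCommMonoid G] {k m : ℕ}

/-- The vertex `n + ω · h` of the parallelepiped with base point `n` and edges `h`. -/
def cubeVertex (n : G) (h : Fin k → G) (ω : Fin k → Bool) : G :=
  n + ∑ i, if ω i then h i else 0

lemma cubeVertex_add_add (n n' : G) (h h' : Fin k → G) (ω : Fin k → Bool) :
    cubeVertex (n + n') (h + h') ω = cubeVertex n h ω + cubeVertex n' h' ω := by
  simp only [cubeVertex, Pi.add_apply, ite_add_ite, add_zero, add_add_add_comm,
    ← Finset.sum_add_distrib]

lemma map_cubeVertex {G' : Type*} [AddCommMonoid G'] (φ : G →+ G') (n : G) (h : Fin k → G)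
    (ω : Fin k → Bool) : φ (cubeVertex n h ω) = cubeVertex (φ n) (φ ∘ h) ω := by
  simp [cubeVertex, apply_ite φ]

lemma cubeVertex_insertNth_false (i : Fin (m + 1)) (n : G) (h : Fin (m + 1) → G)
    (ω : Fin m → Bool) :
    cubeVertex n h (i.insertNth false ω) = cubeVertex n (i.removeNth h) ω := by
  simp [cubeVertex, Fin.sum_univ_succAbove _ i, Fin.removeNth_apply]

lemma cubeVertex_insertNth_true (i : Fin (m + 1)) (n : G) (h : Fin (m + 1) → G)
    (ω : Fin m → Bool) :
    cubeVertex n h (i.insertNth true ω) = cubeVertex (n + h i) (i.removeNth h) ω := by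
  simp [cubeVertex, Fin.sum_univ_succAbove _ i, Fin.removeNth_apply, add_assoc]

lemma cubeVertex_injective [IsLeftCancelAdd G] :
    Injective fun p : G × (Fin k → G) ↦ cubeVertex p.1 p.2 := by
  rintro ⟨n, h⟩ ⟨n', h'⟩ heq
  obtain rfl : n = n' := by simpa [cubeVertex] using congrFun heq fun _ ↦ false
  have hh (i : Fin k) : h i = h' i := by
    simpa [cubeVertex] using congrFun heq fun j ↦ decide (j = i)
  rw [funext hh]

lemma finite_setOf_forall_cubeVertex_mem [IsLeftCancelAdd G] {s : (Fin k → Bool) → Set G}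
    (hs : ∀ ω, (s ω).Finite) :
    {p : G × (Fin k → G) | ∀ ω, cubeVertex p.1 p.2 ω ∈ s ω}.Finite :=
  (Set.Finite.pi' hs).preimage cubeVertex_injective.injOn

lemma summable_prod_cubeVertex [IsLeftCancelAdd G] {R : Type*} [CommSemiring R]
    [TopologicalSpace R] {F : (Fin k → Bool) → G → R} (hF : ∀ ω, HasFiniteSupport (F ω)) :
    Summable fun p : G × (Fin k → G) ↦ ∏ ω, F ω (cubeVertex p.1 p.2 ω) :=
  summable_of_hasFiniteSupport <| (finite_setOf_forall_cubeVertex_mem hF).subset fun _ hp ω hω ↦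
    hp (Finset.prod_eq_zero (Finset.mem_univ ω) hω)

end Cube

section GowersInner

variable {G : Type*} [AddCommGroup G] {k m : ℕ}

/-- The summand of the Gowers inner product: the analogue of `gowersProd` in which each vertex `ω`
of the cube carries its own function `F ω`. -/
noncomputable def gowersInnerTerm (F : (Fin k → Bool) → G → ℂ) (n : G) (h : Fin k → G) : ℂ :=
  ∏ ω, (starRingEnd ℂ)^[(Finset.univ.filter fun i ↦ ω i = true).card] (F ω (cubeVertex n h ω))

/-- The unnormalized Gowers inner product of a family of functions indexed by the cube. -/
noncomputable def gowersInner (F : (Fin k → Bool) → G → ℂ) : ℂ :=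
  ∑' p : G × (Fin k → G), gowersInnerTerm F p.1 p.2

/-- The sum over the base point in the Gowers inner product, the edges being fixed. -/
noncomputable def gowersShiftSum (F : (Fin k → Bool) → G → ℂ) (h : Fin k → G) : ℂ :=
  ∑' n, gowersInnerTerm F n h

lemma support_gowersInnerTerm (F : (Fin k → Bool) → G → ℂ) :
    support (fun p : G × (Fin k → G) ↦ gowersInnerTerm F p.1 p.2) =
      {p | ∀ ω, cubeVertex p.1 p.2 ω ∈ support (F ω)} := by
  ext p
  simp [gowersInnerTerm, Finset.prod_ne_zero_iff, iterate_conj_eq_zero_iff]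

lemma hasFiniteSupport_gowersInnerTerm {F : (Fin k → Bool) → G → ℂ}
    (hF : ∀ ω, HasFiniteSupport (F ω)) :
    HasFiniteSupport fun p : G × (Fin k → G) ↦ gowersInnerTerm F p.1 p.2 := by
  rw [HasFiniteSupport, support_gowersInnerTerm]
  exact finite_setOf_forall_cubeVertex_mem hF

lemma summable_gowersInnerTerm {F : (Fin k → Bool) → G → ℂ} (hF : ∀ ω, HasFiniteSupport (F ω)) :
    Summable fun p : G × (Fin k → G) ↦ gowersInnerTerm F p.1 p.2 :=
  summable_of_hasFiniteSupport (hasFiniteSupport_gowersInnerTerm hF)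

lemma summable_norm_gowersInnerTerm_left {F : (Fin k → Bool) → G → ℂ}
    (hF : ∀ ω, HasFiniteSupport (F ω)) (h : Fin k → G) :
    Summable fun n ↦ ‖gowersInnerTerm F n h‖ :=
  ((summable_gowersInnerTerm hF).comp_injective (Prod.mk_left_injective h)).norm

lemma hasFiniteSupport_gowersShiftSum {F : (Fin k → Bool) → G → ℂ}
    (hF : ∀ ω, HasFiniteSupport (F ω)) : HasFiniteSupport (gowersShiftSum F) := by
  refine ((hasFiniteSupport_gowersInnerTerm hF).image Prod.snd).subset fun h hh ↦ ?_
  obtain ⟨n, hn⟩ : ∃ n, gowersInnerTerm F n h ≠ 0 := by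
    by_contra! hzero
    exact hh (by simp [gowersShiftSum, hzero])
  exact ⟨(n, h), hn, rfl⟩

lemma memℓp_gowersShiftSum {F : (Fin k → Bool) → G → ℂ} (hF : ∀ ω, HasFiniteSupport (F ω))
    (p : ℝ≥0∞) : Memℓp (gowersShiftSum F) p :=
  (memℓp_zero (hasFiniteSupport_gowersShiftSum hF)).of_exponent_ge zero_le

/-- The restriction of a family indexed by the cube to the face `ω i = b`. -/
def cubeFace {X : Type*} (i : Fin (m + 1)) (b : Bool) (F : (Fin (m + 1) → Bool) → X) :
    (Fin m → Bool) → X :=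
  fun ω ↦ F (i.insertNth b ω)

lemma cubeFace_const {X : Type*} (i : Fin (m + 1)) (b : Bool) (x : X) :
    cubeFace i b (fun _ ↦ x) = fun _ ↦ x :=
  rfl

lemma cubeFace_update {X : Type*} (i : Fin (m + 1)) (b c : Bool) (F : (Fin (m + 1) → Bool) → X) :
    cubeFace i b (fun ω ↦ F (update ω i c)) = cubeFace i c F := by
  funext ω
  simp [cubeFace]

lemma gowersInnerTerm_eq_mul_conj (i : Fin (m + 1)) (F : (Fin (m + 1) → Bool) → G → ℂ) (n : G)
    (h : Fin (m + 1) → G) :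
    gowersInnerTerm F n h = gowersInnerTerm (cubeFace i false F) n (i.removeNth h) *
      starRingEnd ℂ (gowersInnerTerm (cubeFace i true F) (n + h i) (i.removeNth h)) := by
  have card_insertNth (b : Bool) (ω : Fin m → Bool) :
      (Finset.univ.filter fun j ↦ i.insertNth (α := fun _ ↦ Bool) b ω j = true).card =
        (Finset.univ.filter fun j ↦ ω j = true).card + b.toNat := by
    simp only [Finset.card_filter, Fin.sum_univ_succAbove _ i, Fin.insertNth_apply_same,
      Fin.insertNth_apply_succAbove]
    cases b <;> simp [add_comm]
  have insertNthEquiv_apply (b : Bool) (ω : Fin m → Bool) :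
      Fin.insertNthEquiv (fun _ ↦ Bool) i (b, ω) = i.insertNth b ω := rfl
  simp only [gowersInnerTerm, cubeFace, map_prod]
  rw [← (Fin.insertNthEquiv (fun _ ↦ Bool) i).prod_comp, Fintype.prod_prod_type, Fintype.prod_bool,
    mul_comm]
  simp [insertNthEquiv_apply, card_insertNth, cubeVertex_insertNth_false, cubeVertex_insertNth_true,
    iterate_succ_apply']

/-- A parallelepiped as a pair of opposite faces in direction `i`: the common edges of the two
faces, and their respective base points. -/
def cubeFacesEquiv (G : Type*) [AddCommGroup G] (i : Fin (m + 1)) :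
    G × (Fin (m + 1) → G) ≃ (Fin m → G) × (G × G) where
  toFun p := (i.removeNth p.2, (p.1, p.1 + p.2 i))
  invFun q := (q.2.1, i.insertNth (q.2.2 - q.2.1) q.1)
  left_inv p := by simp
  right_inv q := by simp

lemma gowersInner_eq_tsum_mul_conj (i : Fin (m + 1)) {F : (Fin (m + 1) → Bool) → G → ℂ}
    (hF : ∀ ω, HasFiniteSupport (F ω)) :
    gowersInner F = ∑' h, gowersShiftSum (cubeFace i false F) h *
      starRingEnd ℂ (gowersShiftSum (cubeFace i true F) h) := by
  let A := gowersInnerTerm (cubeFace i false F)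
  let B := gowersInnerTerm (cubeFace i true F)
  let T (q : (Fin m → G) × (G × G)) : ℂ := A q.2.1 q.1 * starRingEnd ℂ (B q.2.2 q.1)
  have term_eq (p : G × (Fin (m + 1) → G)) :
      gowersInnerTerm F p.1 p.2 = T (cubeFacesEquiv G i p) :=
    gowersInnerTerm_eq_mul_conj i F p.1 p.2
  have summable_T : Summable T := by
    rw [← (cubeFacesEquiv G i).summable_iff]
    exact (summable_gowersInnerTerm hF).congr term_eq
  have summable_A (h) : Summable fun n ↦ ‖A n h‖ :=
    summable_norm_gowersInnerTerm_left (fun _ ↦ hF _) h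
  have summable_B (h) : Summable fun n ↦ ‖starRingEnd ℂ (B n h)‖ :=
    (summable_norm_gowersInnerTerm_left (fun _ ↦ hF _) h).congr fun n ↦ (Complex.norm_conj _).symm
  calc
    gowersInner F = ∑' p, T (cubeFacesEquiv G i p) := tsum_congr term_eq
    _ = ∑' h, ∑' q : G × G, A q.1 h * starRingEnd ℂ (B q.2 h) := by
      rw [(cubeFacesEquiv G i).tsum_eq T, summable_T.tsum_prod]
    _ = ∑' h, (∑' n, A n h) * starRingEnd ℂ (∑' n, B n h) :=
      tsum_congr fun h ↦ by
        rw [Complex.conj_tsum, tsum_mul_tsum_of_summable_norm (summable_A h) (summable_B h)]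

lemma norm_gowersInner_sq_le (i : Fin k) {F : (Fin k → Bool) → G → ℂ}
    (hF : ∀ ω, HasFiniteSupport (F ω)) :
    ‖gowersInner F‖ ^ 2 ≤ ‖gowersInner fun ω ↦ F (update ω i false)‖ *
      ‖gowersInner fun ω ↦ F (update ω i true)‖ := by
  obtain _ | m := k
  · exact i.elim0
  simp only [gowersInner_eq_tsum_mul_conj i, hF, implies_true, cubeFace_update]
  exact norm_tsum_mul_conj_sq_le (memℓp_gowersShiftSum (fun _ ↦ hF _) 2)
    (memℓp_gowersShiftSum (fun _ ↦ hF _) 2)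

lemma norm_gowersInner_pow_le {F : (Fin k → Bool) → G → ℂ} (hF : ∀ ω, HasFiniteSupport (F ω)) :
    ‖gowersInner F‖ ^ 2 ^ k ≤ ∏ σ, ‖gowersInner (k := k) fun _ ↦ F σ‖ := by
  simpa using pow_two_pow_card_le_prod_const (fun φ ↦ ‖gowersInner fun ω ↦ F (φ ω)‖)
    (fun _ ↦ norm_nonneg _) fun i φ ↦ norm_gowersInner_sq_le i fun ω ↦ hF (φ ω)

lemma gowersInner_ofReal (F : (Fin k → Bool) → G → ℝ) :
    gowersInner (fun ω x ↦ (F ω x : ℂ)) =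
      ((∑' p : G × (Fin k → G), ∏ ω, F ω (cubeVertex p.1 p.2 ω) : ℝ) : ℂ) := by
  simp [gowersInner, gowersInnerTerm, iterate_fixed (Complex.conj_ofReal _), Complex.ofReal_tsum]

end GowersInner

section GowersNorm

variable {G : Type*} [AddCommGroup G] {k : ℕ}

lemma gowersTildeU_eq_re_gowersInner_rpow (k : ℕ) (f : G → ℂ) :
    gowersTildeU k f = (gowersInner fun _ : Fin k → Bool ↦ f).re ^ ((1 : ℝ) / 2 ^ k) :=
  rfl

lemma gowersTildeU_ofReal_s13 (k : ℕ) (f : G → ℝ) :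
    gowersTildeU k (fun x ↦ (f x : ℂ)) =
      (∑' p : G × (Fin k → G), ∏ ω, f (cubeVertex p.1 p.2 ω)) ^ ((1 : ℝ) / 2 ^ k) := by
  rw [gowersTildeU_eq_re_gowersInner_rpow, gowersInner_ofReal, Complex.ofReal_re]

lemma gowersTildeU_zero (k : ℕ) : gowersTildeU k (fun _ : G ↦ (0 : ℂ)) = 0 := by
  simpa using gowersTildeU_ofReal_s13 (G := G) k fun _ ↦ 0

lemma gowersInner_const_eq_norm (hk : 1 ≤ k) {f : G → ℂ} (hf : HasFiniteSupport f) :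
    gowersInner (fun _ : Fin k → Bool ↦ f) = ‖gowersInner fun _ : Fin k → Bool ↦ f‖ := by
  obtain _ | m := k
  · omega
  rw [gowersInner_eq_tsum_mul_conj 0 fun _ ↦ hf]
  simp only [cubeFace_const, Complex.mul_conj, ← Complex.ofReal_tsum, Complex.norm_real]
  rw [Real.norm_of_nonneg (tsum_nonneg fun _ ↦ Complex.normSq_nonneg _)]

lemma gowersTildeU_eq_norm_gowersInner_rpow (hk : 1 ≤ k) {f : G → ℂ} (hf : HasFiniteSupport f) :
    gowersTildeU k f = ‖gowersInner fun _ : Fin k → Bool ↦ f‖ ^ ((1 : ℝ) / 2 ^ k) := by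
  rw [gowersTildeU_eq_re_gowersInner_rpow, gowersInner_const_eq_norm hk hf, Complex.ofReal_re,
    Complex.norm_real, norm_norm]

lemma gowersTildeU_nonneg (hk : 1 ≤ k) {f : G → ℂ} (hf : HasFiniteSupport f) :
    0 ≤ gowersTildeU k f := by
  rw [gowersTildeU_eq_norm_gowersInner_rpow hk hf]
  positivity

lemma gowersTildeU_pow (hk : 1 ≤ k) {f : G → ℂ} (hf : HasFiniteSupport f) :
    gowersTildeU k f ^ 2 ^ k = ‖gowersInner fun _ : Fin k → Bool ↦ f‖ := by
  rw [gowersTildeU_eq_norm_gowersInner_rpow hk hf, one_div]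
  exact_mod_cast Real.rpow_inv_natCast_pow (norm_nonneg _) (by positivity)

theorem norm_gowersInner_le_prod_gowersTildeU (hk : 1 ≤ k) {F : (Fin k → Bool) → G → ℂ}
    (hF : ∀ ω, HasFiniteSupport (F ω)) :
    ‖gowersInner F‖ ≤ ∏ ω, gowersTildeU k (F ω) := by
  have prod_nonneg : 0 ≤ ∏ ω, gowersTildeU k (F ω) :=
    Finset.prod_nonneg fun ω _ ↦ gowersTildeU_nonneg hk (hF ω)
  refine le_of_pow_le_pow_left₀ (pow_ne_zero k two_ne_zero) prod_nonneg ?_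
  simpa only [← Finset.prod_pow, gowersTildeU_pow hk (hF _)] using norm_gowersInner_pow_le hF

end GowersNorm

section Cosets

/-- The bijection `(x, h) ↦ x.out + h`. The definition of
`AddSubgroup.addGroupEquivQuotientProdAddSubgroup` gives no access to this formula. -/
noncomputable def quotientProdEquiv {G : Type*} [AddGroup G] (H : AddSubgroup G) :
    (G ⧸ H) × H ≃ G where
  toFun p := p.1.out + p.2
  invFun g := (g, ⟨-(g : G ⧸ H).out + g, QuotientAddGroup.eq.1 (QuotientAddGroup.out_eq' _)⟩)
  left_inv := by
    rintro ⟨x, h⟩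
    simp
  right_inv g := add_neg_cancel_left _ _

variable {G : Type*} [AddCommGroup G] (H : AddSubgroup G) {k : ℕ}

/-- A parallelepiped in `G` as a parallelepiped in `G ⧸ H`, lifted by `Quotient.out`, plus a
parallelepiped in `H`. -/
noncomputable def cubeQuotientProdEquiv (k : ℕ) :
    ((G ⧸ H) × (Fin k → G ⧸ H)) × (H × (Fin k → H)) ≃ G × (Fin k → G) :=
  (Equiv.prodProdProdComm ..).trans <| (quotientProdEquiv H).prodCongr <|
    (Equiv.arrowProdEquivProdArrow ..).symm.trans <| (Equiv.refl _).arrowCongr (quotientProdEquiv H)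

/-- The vertices of the lift to `G` of a parallelepiped in `G ⧸ H`. -/
noncomputable def cubeLift (q : (G ⧸ H) × (Fin k → G ⧸ H)) : (Fin k → Bool) → G :=
  cubeVertex q.1.out fun i ↦ (q.2 i).out

lemma mk_cubeLift (q : (G ⧸ H) × (Fin k → G ⧸ H)) (ω : Fin k → Bool) :
    ((cubeLift H q ω : G) : G ⧸ H) = cubeVertex q.1 q.2 ω :=
  (map_cubeVertex (QuotientAddGroup.mk' H) _ _ ω).trans <| by simp [comp_def]

lemma cubeVertex_cubeQuotientProdEquiv (q : (G ⧸ H) × (Fin k → G ⧸ H)) (r : H × (Fin k → H))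
    (ω : Fin k → Bool) :
    cubeVertex (cubeQuotientProdEquiv H k (q, r)).1 (cubeQuotientProdEquiv H k (q, r)).2 ω =
      cubeLift H q ω + cubeVertex r.1 r.2 ω :=
  (cubeVertex_add_add _ _ _ _ ω).trans <|
    congrArg _ (map_cubeVertex H.subtype r.1 r.2 ω).symm

variable {H}

lemma hasFiniteSupport_of_apply_mk_eq_gowersTildeU {f : G → ℂ} (hf : HasFiniteSupport f)
    {F : G ⧸ H → ℝ}
    (hF : ∀ a : G, F (QuotientAddGroup.mk a) = gowersTildeU k fun h : H ↦ f (a + h)) :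
    HasFiniteSupport F := by
  refine (hf.image (QuotientAddGroup.mk : G → G ⧸ H)).subset fun x hx ↦ ?_
  obtain ⟨a, rfl⟩ := QuotientAddGroup.mk_surjective x
  obtain ⟨h, hh⟩ : ∃ h : H, f (a + h) ≠ 0 := by
    by_contra! hzero
    exact hx ((hF a).trans ((congrArg _ (funext hzero)).trans (gowersTildeU_zero k)))
  exact ⟨a + h, hh, QuotientAddGroup.mk_add_of_mem a h.2⟩

lemma gowersInner_eq_tsum_gowersInner_cosets (H : AddSubgroup G) {F : (Fin k → Bool) → G → ℂ}
    (hF : ∀ ω, HasFiniteSupport (F ω)) :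
    gowersInner F = ∑' q : (G ⧸ H) × (Fin k → G ⧸ H),
      gowersInner fun ω (h : H) ↦ F ω (cubeLift H q ω + h) := by
  have summable_term := (cubeQuotientProdEquiv H k).summable_iff.2 (summable_gowersInnerTerm hF)
  rw [gowersInner, ← (cubeQuotientProdEquiv H k).tsum_eq]
  refine summable_term.tsum_prod.trans (tsum_congr fun q ↦ tsum_congr fun r ↦ ?_)
  simp only [comp_apply, gowersInnerTerm, cubeVertex_cubeQuotientProdEquiv]

end Cosets

theorem gowers_fubini {G : Type*} [AddCommGroup G] (k : ℕ) (hk : 1 ≤ k)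
    (H : AddSubgroup G) (f : G → ℂ) (hf : (Function.support f).Finite)
    (F : G ⧸ H → ℝ)
    (hF : ∀ a : G, F (QuotientAddGroup.mk a) = gowersTildeU k fun h : H => f (a + h)) :
    gowersTildeU k f ≤ gowersTildeU k fun x : G ⧸ H => ((F x : ℝ) : ℂ) := by
  have coset_inner_le (q : (G ⧸ H) × (Fin k → G ⧸ H)) :
      ‖gowersInner fun ω (h : H) ↦ f (cubeLift H q ω + h)‖ ≤ ∏ ω, F (cubeVertex q.1 q.2 ω) := by
    simp_rw [← mk_cubeLift, hF]
    exact norm_gowersInner_le_prod_gowersTildeU hk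
      fun ω ↦ hasFiniteSupport_comp_add_coe hf (cubeLift H q ω)
  have summable_prod : Summable fun q : (G ⧸ H) × (Fin k → G ⧸ H) ↦
      ∏ ω, F (cubeVertex q.1 q.2 ω) :=
    summable_prod_cubeVertex fun _ ↦ hasFiniteSupport_of_apply_mk_eq_gowersTildeU hf hF
  rw [gowersTildeU_eq_norm_gowersInner_rpow hk hf, gowersTildeU_ofReal_s13,
    gowersInner_eq_tsum_gowersInner_cosets H fun _ ↦ hf]
  gcongr
  exact tsum_of_norm_bounded summable_prod.hasSum coset_inner_le
end
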